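/- Let q = 2^m for a positive integer m and let d = 3q - 2. Let τ_m be the rational sequence defined by τ_1 = 1/2, τ_2 = -7/4, and τ_m = (1/2)τ_{m-1} - τ_{m-2} for m ≥ 3. Let n_4 denote the number of quadruples (x_1, x_2, x_3, x_4) ∈ (F_{q^2}^*)^4 satisfying x_1 + x_2 + x_3 + x_4 = 0 and x_1^d + x_2^d + x_3^d + x_4^d = 0. Then n_4 = (5q^2 - (τ_m + 6)q + 4)(q^2 - 1) if m is even, and n_4 = (5q^2 - (τ_m + 6)q)(q^2 - 1) if m is odd. -/

import Mathlib

/-!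
Write `ψ` for the additive character `(-1) ^ Tr`, `σ x = x ^ q` for the conjugation of `K` over its
subfield `F` with `q` elements, and `K(a) = ∑_{x ≠ 0} ψ(x + a / x)` for the Kloosterman sums
of `F`. On nonzero elements `x ^ (3 q - 2) = σ(x) ^ 3 / x ^ 2`, so a quadruple is a scalar multiple
of a solution of `x + y + z = 1`, `σ(x) ^ 3 / x ^ 2 + σ(y) ^ 3 / y ^ 2 + σ(z) ^ 3 / z ^ 2 = 1`; this
gives the factor `q ^ 2 - 1` (`ncard_quadruples`).

Put `u = σ(x) / x` and similarly `v, w`: these lie on the unit circle `N = 1`. The system says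
`x u ^ i + y v ^ i + z w ^ i = 1` for `i = 0, 1, 3` (the case `i = 1` is the conjugate of `i = 0`),
a linear system for `x, y, z`. When `1, u, v, w` are distinct it has a solution with the
right ratios exactly when `1 + u + v + w` lies on the circle and no three of `1, u, v, w` sum to
zero (`IsGood.isSol`, `IsSol.good`); solutions with coinciding ratios are listed explicitly. Hence
the count is an elementary expression plus the number of `(u, v, w)` on the circle with
`1 + u + v + w` on the circle (`CircleData.cnt_sol`, `CircleData.sum_eq_cnt_good`).

A nonzero `s` is a sum of two elements of the circle in `1 - ψ(1 / N(s))` ways, so the last number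
is governed by the correlation `∑_s ψ(1 / N(s) + 1 / N(s + 1))`, a sum over norms and traces.
It reduces to sums of Kloosterman sums, and these, by the invariance
`K(δ ^ 3 (1 + δ)) = K(δ (1 + δ) ^ 3)` under 3-isogenies (`kl_isogeny`), to the single twisted moment
`A = ∑_{v ≠ 0} ψ(v + 1 / v) K(v)` (`sum_norm_trace`, `IsConj.sum_circ_quad`).

Finally `ψ(1) A` is a sum attached to the form `a ^ 2 + a b + b ^ 2` (`sum_quadratic_form`). For odd
`m` the form is the norm from the quadratic extension, and the sum is a Kloosterman sum over the
field with `4 ^ m` elements at a primitive cube root of unity `ω`; for even `m` it splits, and the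
sum is the product of two such Kloosterman sums over `F`. As `ω` lies in the field with
four elements, `K(ω)` over an extension of degree `n` is read off from the quadratic L-polynomial
`1 + K(ω) T + 4 T ^ 2` with `K(ω) = -1` over that field (`newton_identity`, `kl_cube_root`): it is
`-tseq n`, where `tseq n = 2 ^ n τ_n`. This gives `A` (`moment_odd`, `moment_even`) and the theorem.
-/

set_option linter.unusedSectionVars false

namespace NihoCount

open Finset

/-! ### The additive character in characteristic two -/

section Character

variable {F : Type*} [Field F]

open Classical in
/-- The nontrivial additive character `x ↦ (-1) ^ Tr x` of a finite field of characteristic two,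
encoded through Artin–Schreier theory: it is `1` exactly on the elements `y ^ 2 + y`. -/
noncomputable def psi (x : F) : ℤ := if ∃ y : F, y ^ 2 + y = x then 1 else -1

lemma psi_eq_one_iff (x : F) : psi x = 1 ↔ ∃ y : F, y ^ 2 + y = x := by
  unfold psi; split_ifs with h <;> simp [h]

lemma psi_artinSchreier (y : F) : psi (y ^ 2 + y) = 1 := (psi_eq_one_iff _).2 ⟨y, rfl⟩

lemma psi_cases (x : F) : psi x = 1 ∨ psi x = -1 := by
  unfold psi; split_ifs <;> simp

lemma psi_mul_self (x : F) : psi x * psi x = 1 := by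
  rcases psi_cases x with h | h <;> simp [h]

@[simp] lemma psi_zero : psi (0 : F) = 1 := (psi_eq_one_iff _).2 ⟨0, by simp⟩

variable [Fintype F] [CharP F 2]

/-- The Artin–Schreier map `y ↦ y ^ 2 + y` as an additive homomorphism. -/
def artinSchreier (F : Type*) [Field F] [CharP F 2] : F →+ F where
  toFun y := y ^ 2 + y
  map_zero' := by simp
  map_add' a b := by grind

lemma artinSchreier_range_index : (artinSchreier F).range.index = 2 := by
  have h1 := AddSubgroup.card_mul_index (artinSchreier F).range
  have h2 := AddSubgroup.card_mul_index (artinSchreier F).ker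
  rw [AddSubgroup.index_ker] at h2
  have h3 : Nat.card (artinSchreier F).ker = 2 := by
    have : ((artinSchreier F).ker : Set F) = {0, 1} := by
      ext y
      simp only [SetLike.mem_coe, AddMonoidHom.mem_ker, Set.mem_insert_iff, Set.mem_singleton_iff]
      change y ^ 2 + y = 0 ↔ _
      grind
    calc Nat.card (artinSchreier F).ker = Set.ncard ((artinSchreier F).ker : Set F) := rfl
      _ = 2 := by rw [this, Set.ncard_pair zero_ne_one]
  have h4 : 0 < Nat.card (artinSchreier F).range := Nat.card_pos
  rw [h3] at h2
  have : Nat.card (artinSchreier F).range * (artinSchreier F).range.index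
      = Nat.card (artinSchreier F).range * 2 := by rw [h1, ← h2, mul_comm]
  exact Nat.eq_of_mul_eq_mul_left h4 this

lemma psi_add (x y : F) : psi (x + y) = psi x * psi y := by
  have key := AddSubgroup.add_mem_iff_of_index_two (artinSchreier_range_index (F := F))
    (a := x) (b := y)
  have h : ∀ z : F, z ∈ (artinSchreier F).range ↔ psi z = 1 := fun z => by
    rw [psi_eq_one_iff]; rfl
  rw [h, h, h] at key
  rcases psi_cases x with hx | hx <;> rcases psi_cases y with hy | hy <;>
    rcases psi_cases (x + y) with hxy | hxy <;> rw [hx, hy, hxy] at key <;>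
    rw [hx, hy, hxy] <;> simp at key ⊢

lemma psi_sq (x : F) : psi (x ^ 2) = psi x := by
  have h := psi_add (x ^ 2) x
  rw [psi_artinSchreier] at h
  rcases psi_cases x with hx | hx <;> rw [hx] at h ⊢ <;> omega

/-- Two elements that differ by an Artin–Schreier element have the same character value. -/
lemma psi_congr {x y : F} (w : F) (h : x + y = w ^ 2 + w) : psi x = psi y := by
  have h1 : psi (x + y) = 1 := h ▸ psi_artinSchreier w
  rw [psi_add] at h1
  rcases psi_cases x with hx | hx <;> rcases psi_cases y with hy | hy <;>
    rw [hx, hy] at h1 ⊢ <;> omega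

lemma exists_psi_neg : ∃ c : F, psi c = -1 := by
  by_contra! h
  have h2 : (artinSchreier F).range = ⊤ := by
    rw [eq_top_iff]
    intro z _
    have := (psi_cases z).resolve_right (h z)
    rw [psi_eq_one_iff] at this
    exact this
  have := artinSchreier_range_index (F := F)
  rw [h2] at this
  simp at this

lemma sum_psi : ∑ x : F, psi x = 0 := by
  obtain ⟨c, hc⟩ := exists_psi_neg (F := F)
  have h : ∑ x : F, psi x = ∑ x : F, psi (x + c) := (Equiv.sum_comp (Equiv.addRight c) psi).symm
  simp only [psi_add, hc] at h
  rw [← Finset.sum_mul] at h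
  omega

lemma sum_psi_inv : ∑ x : F, psi x⁻¹ = 0 := by
  rw [← sum_psi (F := F)]
  exact Equiv.sum_comp (Equiv.inv F) psi

lemma sum_psi_mul {c : F} (hc : c ≠ 0) : ∑ x : F, psi (c * x) = 0 := by
  rw [← sum_psi (F := F)]
  exact Equiv.sum_comp (Equiv.mulLeft₀ c hc) psi

lemma sum_sq_comp {M : Type*} [AddCommMonoid M] (f : F → M) : ∑ x : F, f (x ^ 2) = ∑ x : F, f x := by
  have hb : Function.Bijective (fun x : F => x ^ 2) := by
    apply Function.Injective.bijective_of_finite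
    intro x y h
    simp only at h
    have h0 : (x + y) ^ 2 = 0 := by grind
    have h1 : x + y = 0 := by simpa using h0
    grind
  exact hb.sum_comp f

open Classical in
lemma card_artinSchreier (c : F) :
    ((#{y : F | y ^ 2 + y = c} : ℕ) : ℤ) = 1 + psi c := by
  rcases psi_cases c with h | h
  · obtain ⟨y, rfl⟩ := (psi_eq_one_iff c).1 h
    have : ({z : F | z ^ 2 + z = y ^ 2 + y} : Finset F) = {y, y + 1} := by
      ext z
      simp only [mem_filter, mem_univ, true_and, mem_insert, mem_singleton]
      constructor
      · intro hz
        have : (z + y) * (z + y + 1) = 0 := by grind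
        rcases mul_eq_zero.1 this with h | h <;> grind
      · rintro (rfl | rfl) <;> grind
    rw [this, card_pair (by simp), h]; rfl
  · have : ({z : F | z ^ 2 + z = c} : Finset F) = ∅ := by
      ext z
      simp only [mem_filter, mem_univ, true_and, notMem_empty, iff_false]
      intro hz
      have := (psi_eq_one_iff c).2 ⟨z, hz⟩
      omega
    rw [this, h]; rfl

/-- Pushing a sum forward along `y ↦ y ^ 2 + y`. -/
lemma sum_artinSchreier_comp (g : F → ℤ) :
    ∑ y : F, g (y ^ 2 + y) = ∑ e : F, (1 + psi e) * g e := by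
  classical
  rw [← Finset.sum_fiberwise (s := (univ : Finset F)) (g := fun y : F => y ^ 2 + y)]
  refine Finset.sum_congr rfl fun e _ => ?_
  rw [← card_artinSchreier e, Finset.sum_congr rfl (g := fun _ => g e)]
  · simp
  · intro y hy
    rw [(mem_filter.1 hy).2]

end Character

/-! ### Sums over nonzero elements -/

section NonzeroSums

variable {F : Type*} [Field F] [Fintype F]

open Classical in
/-- The nonzero elements of a finite field. -/
noncomputable def nz (F : Type*) [Field F] [Fintype F] : Finset F := {x : F | x ≠ 0}

open Classical in
/-- The elements of a finite field other than `0` and `1`. -/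
noncomputable def nz1 (F : Type*) [Field F] [Fintype F] : Finset F := {x : F | x ≠ 0 ∧ x ≠ 1}

@[simp] lemma mem_nz {x : F} : x ∈ nz F ↔ x ≠ 0 := by simp [nz]

@[simp] lemma mem_nz1 {x : F} : x ∈ nz1 F ↔ x ≠ 0 ∧ x ≠ 1 := by simp [nz1]

lemma sum_eq_nz {M : Type*} [AddCommMonoid M] (f : F → M) :
    ∑ x : F, f x = f 0 + ∑ x ∈ nz F, f x := by
  classical
  rw [← Finset.add_sum_erase _ f (mem_univ (0 : F))]
  congr 1
  refine Finset.sum_congr ?_ fun _ _ => rfl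
  ext; simp

lemma sum_nz_eq_nz1 {M : Type*} [AddCommMonoid M] (f : F → M) :
    ∑ x ∈ nz F, f x = f 1 + ∑ x ∈ nz1 F, f x := by
  classical
  rw [← Finset.add_sum_erase (nz F) f (a := 1) (by simp)]
  congr 1
  refine Finset.sum_congr ?_ fun _ _ => rfl
  ext; simp [and_comm]

lemma sum_nz_mul {M : Type*} [AddCommMonoid M] {c : F} (hc : c ≠ 0) (f : F → M) :
    ∑ x ∈ nz F, f (c * x) = ∑ x ∈ nz F, f x :=
  Finset.sum_nbij' (fun x => c * x) (fun x => c⁻¹ * x) (by simp [hc]) (by simp [hc])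
    (by simp [hc]) (by simp [hc]) (by simp)

lemma sum_nz_inv {M : Type*} [AddCommMonoid M] (f : F → M) :
    ∑ x ∈ nz F, f x⁻¹ = ∑ x ∈ nz F, f x :=
  Finset.sum_nbij' (fun x => x⁻¹) (fun x => x⁻¹) (by simp) (by simp)
    (by simp) (by simp) (by simp)

lemma sum_nz1_inv {M : Type*} [AddCommMonoid M] (f : F → M) :
    ∑ x ∈ nz1 F, f x⁻¹ = ∑ x ∈ nz1 F, f x :=
  Finset.sum_nbij' (fun x => x⁻¹) (fun x => x⁻¹) (by simp) (by simp)
    (by simp) (by simp) (by simp)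

lemma card_nz : ((#(nz F) : ℕ) : ℤ) = Fintype.card F - 1 := by
  have := sum_eq_nz (F := F) (fun _ => (1 : ℤ))
  simp at this
  omega

lemma card_nz1 : ((#(nz1 F) : ℕ) : ℤ) = Fintype.card F - 2 := by
  have := sum_nz_eq_nz1 (F := F) (fun _ => (1 : ℤ))
  simp [card_nz] at this
  omega

variable [CharP F 2]

lemma sum_nz_sq {M : Type*} [AddCommMonoid M] (f : F → M) :
    ∑ x ∈ nz F, f (x ^ 2) = ∑ x ∈ nz F, f x := by
  classical
  have h := sum_sq_comp (F := F) (fun x => if x = 0 then 0 else f x)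
  rw [sum_eq_nz, sum_eq_nz] at h
  simp only [ne_eq, OfNat.ofNat_ne_zero, not_false_eq_true, zero_pow, if_true, zero_add] at h
  convert h using 1 <;> refine Finset.sum_congr rfl fun x hx => ?_
  · have := mem_nz.1 hx; simp [this]
  · have := mem_nz.1 hx; simp [this]

lemma sum_nz1_sq {M : Type*} [AddCommMonoid M] (f : F → M) :
    ∑ x ∈ nz1 F, f (x ^ 2) = ∑ x ∈ nz1 F, f x := by
  classical
  have h := sum_nz_sq (F := F) (fun x => if x = 1 then 0 else f x)
  rw [sum_nz_eq_nz1, sum_nz_eq_nz1] at h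
  simp only [one_pow, if_true, zero_add] at h
  convert h using 1 <;> refine Finset.sum_congr rfl fun x hx => ?_
  · have h1 := mem_nz1.1 hx
    have : x ^ 2 ≠ 1 := fun hh => h1.2 (by
      have : (x + 1) ^ 2 = 0 := by grind
      have : x + 1 = 0 := by simpa using this
      grind)
    simp [this]
  · have := mem_nz1.1 hx; simp [this]

lemma sum_nz1_add_one {M : Type*} [AddCommMonoid M] (f : F → M) :
    ∑ x ∈ nz1 F, f (1 + x) = ∑ x ∈ nz1 F, f x := by
  refine Finset.sum_nbij' (fun x => 1 + x) (fun x => 1 + x) ?_ ?_ ?_ ?_ (by simp) <;>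
  · intro x hx
    simp only [mem_nz1] at hx ⊢
    grind

lemma sum_nz_psi : ∑ x ∈ nz F, psi x = -1 := by
  have := sum_psi (F := F)
  rw [sum_eq_nz, psi_zero] at this
  omega

lemma sum_nz_psi_inv : ∑ x ∈ nz F, psi x⁻¹ = -1 := by
  rw [sum_nz_inv (fun x => psi x), sum_nz_psi]

lemma sum_nz_psi_mul {c : F} (hc : c ≠ 0) : ∑ x ∈ nz F, psi (c * x) = -1 := by
  rw [sum_nz_mul hc (fun x => psi x), sum_nz_psi]

/-- Pushing a sum forward along `y ↦ y + y⁻¹`, whose fibre over `v ≠ 0` has `1 + ψ(1 / v)`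
elements. -/
lemma sum_nz_add_inv_comp (g : F → ℤ) :
    ∑ y ∈ nz F, g (y + y⁻¹) = g 0 + ∑ v ∈ nz F, (1 + psi v⁻¹) * g v := by
  have h1 : ∑ y ∈ nz1 F, g (y + y⁻¹) = ∑ z ∈ nz1 F, g ((z ^ 2 + z)⁻¹) := by
    -- substitute `z = 1 / (1 + y)`, so that `y + 1 / y = 1 / (z ^ 2 + z)`
    refine Finset.sum_nbij' (fun y => (1 + y)⁻¹) (fun z => 1 + z⁻¹) ?_ ?_ ?_ ?_ ?_
    · intro y hy
      have h := mem_nz1.1 hy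
      have h2 : 1 + y ≠ 0 := by grind
      simp [h2, h.1]
    · intro y hy
      have h := mem_nz1.1 hy
      have h2 : 1 + y ≠ 0 := by grind
      have h3 : y⁻¹ ≠ 1 := by simpa using h.2
      have h4 : y⁻¹ ≠ 0 := by simpa using h.1
      rw [mem_nz1]; constructor
      · grind
      · grind
    · intro y hy; have h0 := (mem_nz1.1 hy).1; grind
    · intro y hy; have h0 := (mem_nz1.1 hy).1; grind
    · intro y hy
      have h := mem_nz1.1 hy
      have h2 : 1 + y ≠ 0 := by grind
      congr 1
      have h0 := h.1
      have h3 : ((1 + y)⁻¹ ^ 2 + (1 + y)⁻¹) = y / (1 + y) ^ 2 := by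
        field_simp; grind
      rw [h3]
      field_simp
      grind
  have h2 : ∑ z ∈ nz1 F, g ((z ^ 2 + z)⁻¹) = ∑ e ∈ nz F, (1 + psi e) * g (e⁻¹) := by
    have h3 := sum_artinSchreier_comp (F := F) (fun e => g e⁻¹)
    have h4 : (1 : F) + 1 = 0 := CharTwo.add_self_eq_zero 1
    rw [sum_eq_nz, sum_nz_eq_nz1, sum_eq_nz] at h3
    simp only [one_pow, h4, psi_zero] at h3
    simp only [ne_eq, OfNat.ofNat_ne_zero, not_false_eq_true, zero_pow, add_zero] at h3
    linarith
  rw [sum_nz_eq_nz1, h1, h2, ← sum_nz_inv (fun v => (1 + psi v⁻¹) * g v)]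
  simp [CharTwo.add_self_eq_zero]

end NonzeroSums

/-! ### Kloosterman sums -/

section Kloosterman

variable {F : Type*} [Field F] [Fintype F]

/-- The Kloosterman sum `∑_{x ≠ 0} ψ(x + a / x)`; at `a = 0` it equals `-1`. -/
noncomputable def kl (a : F) : ℤ := ∑ x ∈ nz F, psi (x + a * x⁻¹)

variable [CharP F 2]

lemma kl_zero : kl (0 : F) = -1 := by simp [kl, sum_nz_psi]

lemma sum_nz_psi_mul_add_inv {A : F} (hA : A ≠ 0) (B : F) :
    ∑ x ∈ nz F, psi (A * x + B * x⁻¹) = kl (A * B) := by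
  rw [kl, ← sum_nz_mul hA (fun x => psi (x + A * B * x⁻¹))]
  refine Finset.sum_congr rfl fun x hx => ?_
  have := mem_nz.1 hx
  congr 1
  field_simp

lemma sum_nz_psi_mul_add_inv' (A : F) {B : F} (hB : B ≠ 0) :
    ∑ x ∈ nz F, psi (A * x + B * x⁻¹) = kl (A * B) := by
  rw [mul_comm A, ← sum_nz_psi_mul_add_inv hB, ← sum_nz_inv]
  refine Finset.sum_congr rfl fun x _ => ?_
  rw [inv_inv, add_comm]

lemma sum_kl : ∑ b ∈ nz F, kl b = 1 := by
  simp only [kl]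
  rw [Finset.sum_comm]
  have : ∀ x ∈ nz F, ∑ b ∈ nz F, psi (x + b * x⁻¹) = - psi x := by
    intro x hx
    have hx := mem_nz.1 hx
    simp only [psi_add, ← Finset.mul_sum]
    rw [Finset.sum_congr rfl (g := fun b => psi (x⁻¹ * b)) (fun b _ => by rw [mul_comm]),
      sum_nz_psi_mul (inv_ne_zero hx)]
    ring
  rw [Finset.sum_congr rfl this, Finset.sum_neg_distrib, sum_nz_psi]; rfl

/-- A complete linear sum over the nonzero elements. -/
lemma sum_nz_psi_linear (c : F) [Decidable (c = 0)] :
    ∑ x ∈ nz F, psi (c * x) = (if c = 0 then (Fintype.card F : ℤ) else 0) - 1 := by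
  split_ifs with h
  · simp [h, card_nz]
  · rw [sum_nz_psi_mul h]; ring

lemma sum_psi_kl :
    ∑ w ∈ nz F, psi w * kl w = Fintype.card F * psi (1 : F) + 1 := by
  classical
  have h1 : ∑ w ∈ nz F, psi w * kl w
      = ∑ x ∈ nz F, psi x * ∑ w ∈ nz F, psi ((1 + x⁻¹) * w) := by
    simp only [kl, Finset.mul_sum]
    rw [Finset.sum_comm]
    refine Finset.sum_congr rfl fun x _ => Finset.sum_congr rfl fun w _ => ?_
    rw [← psi_add, ← psi_add]; congr 1; ring
  rw [h1]
  simp only [sum_nz_psi_linear]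
  have h2 : ∀ x ∈ nz F, psi x * ((if 1 + x⁻¹ = 0 then (Fintype.card F : ℤ) else 0) - 1)
      = (if x = 1 then Fintype.card F * psi (1 : F) else 0) - psi x := by
    intro x hx
    have hx := mem_nz.1 hx
    have : 1 + x⁻¹ = 0 ↔ x = 1 := by
      constructor
      · intro h; field_simp at h; grind
      · rintro rfl; simp [CharTwo.add_self_eq_zero]
    simp only [this]
    split_ifs with h
    · subst h; ring
    · ring
  rw [Finset.sum_congr rfl h2, Finset.sum_sub_distrib, sum_nz_psi, Finset.sum_ite_eq']
  simp

end Kloosterman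

/-! ### Invariance of Kloosterman sums under 3-isogenies -/

section Isogeny

variable {F : Type*} [Field F] [Fintype F] [CharP F 2]

open Classical in
/-- A Kloosterman sum, multiplied by a sign, in terms of the number of `x` with the
opposite sign. -/
lemma sign_mul_kl (a c : F) :
    psi c * kl a = Fintype.card F - 1 - 2 * #{x ∈ nz F | psi (x + a * x⁻¹) = - psi c} := by
  have h : ∀ x ∈ nz F, psi c * psi (x + a * x⁻¹)
      = 1 - 2 * (if psi (x + a * x⁻¹) = - psi c then 1 else 0) := by
    intro x _
    rcases psi_cases c with h | h <;> rcases psi_cases (x + a * x⁻¹) with h' | h' <;>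
      rw [h, h'] <;> simp
  rw [kl, Finset.mul_sum, Finset.sum_congr rfl h, Finset.sum_sub_distrib, ← Finset.mul_sum,
    Finset.sum_boole, Finset.sum_const, nsmul_eq_mul, card_nz]
  simp


lemma isogeny_fibre {x y δ : F} (hs : x + y ≠ 0)
    (h : x * (x + δ ^ 2 + δ) ^ 2 * (y + δ ^ 2) ^ 2 = y * (y + δ ^ 2 + δ) ^ 2 * (x + δ ^ 2) ^ 2) :
    x ^ 2 * y ^ 2 + δ ^ 4 * (x ^ 2 + x * y + y ^ 2) + (δ ^ 2 + δ) ^ 2 * x * y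
        + (δ ^ 2 + δ) ^ 2 * δ ^ 4 = 0 := by
  refine (mul_eq_zero.1 (?_ : (x + y) * _ = 0)).resolve_left hs
  grind


lemma isogeny_fibre_solve {x y δ : F} (hx : x ≠ 0) (hδ : δ ≠ 0)
    (h : x ^ 2 * y ^ 2 + δ ^ 4 * (x ^ 2 + x * y + y ^ 2) + (δ ^ 2 + δ) ^ 2 * x * y
        + (δ ^ 2 + δ) ^ 2 * δ ^ 4 = 0) :
    ((x ^ 2 + δ ^ 4) * y / (x * δ ^ 2)) ^ 2 + (x ^ 2 + δ ^ 4) * y / (x * δ ^ 2)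
      = (x + δ + δ ^ 3 * (1 + δ) * x⁻¹) ^ 2 := by
  field_simp
  grind

/-- One direction of the invariance of Kloosterman sums under 3-isogenies. The degree-three map
`x ↦ x (x + δ² + δ)² / (x + δ²)²` carries `x + δ³(1+δ)/x` to `X + δ(1+δ)³/X` up to Artin–Schreier
elements, and two distinct points of a fibre force `ψ(x + δ³(1+δ)/x) = ψ(δ)`; so it is injective
on the points with the other sign. -/
lemma kl_isogeny_le {δ : F} (h0 : δ ≠ 0) (h1 : δ ≠ 1) :
    psi δ * kl (δ * (1 + δ) ^ 3) ≤ psi δ * kl (δ ^ 3 * (1 + δ)) := by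
  classical
  have h1' : 1 + δ ≠ 0 := by grind
  rw [sign_mul_kl, sign_mul_kl]
  suffices hcard : #{x ∈ nz F | psi (x + δ ^ 3 * (1 + δ) * x⁻¹) = - psi δ}
      ≤ #{x ∈ nz F | psi (x + δ * (1 + δ) ^ 3 * x⁻¹) = - psi δ} by
    have : ((#{x ∈ nz F | psi (x + δ ^ 3 * (1 + δ) * x⁻¹) = - psi δ} : ℕ) : ℤ)
      ≤ #{x ∈ nz F | psi (x + δ * (1 + δ) ^ 3 * x⁻¹) = - psi δ} := by exact_mod_cast hcard
    linarith
  have hne : psi δ ≠ - psi δ := by rcases psi_cases δ with h | h <;> rw [h] <;> decide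
  have hgood : ∀ x ∈ ({x ∈ nz F | psi (x + δ ^ 3 * (1 + δ) * x⁻¹) = - psi δ} : Finset F),
      x ≠ 0 ∧ x + δ ^ 2 ≠ 0 ∧ x + δ ^ 2 + δ ≠ 0 ∧
        psi (x + δ ^ 3 * (1 + δ) * x⁻¹) = - psi δ := by
    intro x hx
    obtain ⟨hx, hp⟩ := mem_filter.1 hx
    have hx := mem_nz.1 hx
    refine ⟨hx, ?_, ?_, hp⟩
    · intro h
      have hxe : x = δ ^ 2 := by grind
      apply hne
      rw [← hp, hxe]
      congr 1
      field_simp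
      grind
    · intro h
      have hxe : x = δ * (1 + δ) := by grind
      apply hne
      rw [← hp, hxe]
      congr 1
      field_simp
      grind
  refine Finset.card_le_card_of_injOn
    (fun x => x * (x + δ ^ 2 + δ) ^ 2 / (x + δ ^ 2) ^ 2) ?_ ?_
  · intro x hx
    obtain ⟨hx, ha, hb, hp⟩ := hgood x hx
    rw [mem_coe, mem_filter, mem_nz]
    refine ⟨by simp [hx, ha, hb], ?_⟩
    rw [← hp]
    refine psi_congr (δ ^ 2 / (x + δ ^ 2) + (δ ^ 2 + δ) / (x + δ ^ 2 + δ)) ?_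
    field_simp
    grind
  · intro x hx y hy hxy
    obtain ⟨hx, ha, hb, hp⟩ := hgood x hx
    obtain ⟨hy, hc, hd, -⟩ := hgood y hy
    by_contra hne'
    simp only at hxy
    have hs : x + y ≠ 0 := by grind
    -- the remaining two points of the fibre through `x` are the roots of this quadratic in `y`
    have hquad : x ^ 2 * y ^ 2 + δ ^ 4 * (x ^ 2 + x * y + y ^ 2) + (δ ^ 2 + δ) ^ 2 * x * y
        + (δ ^ 2 + δ) ^ 2 * δ ^ 4 = 0 := by
      rw [div_eq_div_iff (pow_ne_zero 2 ha) (pow_ne_zero 2 hc)] at hxy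
      exact isogeny_fibre hs hxy
    have hg : psi (x + δ + δ ^ 3 * (1 + δ) * x⁻¹) = 1 := by
      rw [← psi_sq, psi_eq_one_iff]
      exact ⟨_, isogeny_fibre_solve hx h0 hquad⟩
    apply hne
    rw [← hp]
    have h3 : psi (x + δ + δ ^ 3 * (1 + δ) * x⁻¹)
        = psi δ * psi (x + δ ^ 3 * (1 + δ) * x⁻¹) := by
      rw [← psi_add]; congr 1; ring
    rw [h3] at hg
    have h4 := psi_mul_self δ
    rcases psi_cases δ with h | h <;> rw [h] at hg ⊢ <;> omega

lemma psi_mul_kl_cubic {δ : F} (hδ : δ ≠ 0) : psi δ * kl (δ ^ 3 * (1 + δ))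
    = ∑ s ∈ nz F, psi (((1 + s) ^ 3 / s ^ 2) * δ) := by
  rw [kl, ← sum_nz_mul (pow_ne_zero 2 hδ), ← sum_nz_sq, Finset.mul_sum]
  refine Finset.sum_congr rfl fun s hs => ?_
  have hs := mem_nz.1 hs
  rw [← psi_add]
  refine psi_congr (δ * s + δ / s) ?_
  field_simp
  grind

lemma sum_psi_kl_cubic : ∑ δ ∈ nz F, psi δ * kl (δ ^ 3 * (1 + δ)) = 1 := by
  classical
  have h1 : ∀ δ ∈ nz F, psi δ * kl (δ ^ 3 * (1 + δ))
      = ∑ s ∈ nz F, psi (((1 + s) ^ 3 / s ^ 2) * δ) :=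
    fun δ hδ => psi_mul_kl_cubic (mem_nz.1 hδ)
  rw [Finset.sum_congr rfl h1, Finset.sum_comm]
  simp only [sum_nz_psi_linear]
  have h2 : ∀ s ∈ nz F, (if (1 + s) ^ 3 / s ^ 2 = 0 then (Fintype.card F : ℤ) else 0) - 1
      = (if s = 1 then (Fintype.card F : ℤ) else 0) - 1 := by
    intro s hs
    have hs := mem_nz.1 hs
    have : (1 + s) ^ 3 / s ^ 2 = 0 ↔ s = 1 := by
      simp [hs]; grind
    simp only [this]
  rw [Finset.sum_congr rfl h2, Finset.sum_sub_distrib, Finset.sum_ite_eq', Finset.sum_const,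
    nsmul_eq_mul, card_nz]
  simp

/-- Kloosterman sums are invariant under 3-isogeny: the differences in `kl_isogeny_le` are
nonnegative, and they add up to zero. -/
lemma kl_isogeny (δ : F) (h0 : δ ≠ 0) :
    kl (δ ^ 3 * (1 + δ)) = kl (δ * (1 + δ) ^ 3) := by
  by_cases h1 : δ = 1
  · subst h1; simp [CharTwo.add_self_eq_zero]
  have hA : ∑ δ ∈ nz1 F, psi δ * kl (δ ^ 3 * (1 + δ)) = 1 + psi (1 : F) := by
    have := sum_psi_kl_cubic (F := F)
    rw [sum_nz_eq_nz1] at this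
    simp only [CharTwo.add_self_eq_zero, mul_zero, kl_zero] at this
    linarith
  have hB : ∑ δ ∈ nz1 F, psi δ * kl (δ * (1 + δ) ^ 3) = 1 + psi (1 : F) := by
    have h2 : ∀ x ∈ nz1 F, psi (1 + x) * kl ((1 + x) * (1 + (1 + x)) ^ 3)
        = psi (1 : F) * (psi x * kl (x ^ 3 * (1 + x))) := by
      intro x _
      rw [psi_add, mul_assoc]
      congr 3
      grind
    rw [← sum_nz1_add_one, Finset.sum_congr rfl h2, ← Finset.mul_sum, hA, mul_add, psi_mul_self]
    ring
  have hz : ∑ δ ∈ nz1 F, (psi δ * kl (δ ^ 3 * (1 + δ)) - psi δ * kl (δ * (1 + δ) ^ 3)) = 0 := by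
    rw [Finset.sum_sub_distrib, hA, hB, sub_self]
  rw [Finset.sum_eq_zero_iff_of_nonneg] at hz
  · have := hz δ (mem_nz1.2 ⟨h0, h1⟩)
    rcases psi_cases δ with h | h <;> rw [h] at this <;> omega
  · intro x hx
    obtain ⟨hx0, hx1⟩ := mem_nz1.1 hx
    have := kl_isogeny_le hx0 hx1
    omega

end Isogeny

/-! ### Reduction to the twisted moment -/

section Chain

variable {F : Type*} [Field F] [Fintype F] [CharP F 2]

/-- The twisted Kloosterman moment `∑_{v ≠ 0} ψ(v + 1 / v) K(v)` to which all the character sums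
of the problem reduce. -/
noncomputable def moment (F : Type*) [Field F] [Fintype F] : ℤ :=
  ∑ v ∈ nz F, psi (v + v⁻¹) * kl v

lemma sum_kl_cube_div_sq :
    ∑ s ∈ nz F, kl ((1 + s) ^ 3 / s ^ 2)
      = ∑ δ ∈ nz F, psi (δ + δ⁻¹) * kl (δ ^ 3 * (1 + δ)) := by
  have h1 : ∀ s : F, kl ((1 + s) ^ 3 / s ^ 2)
      = ∑ δ ∈ nz F, psi (δ⁻¹) * psi ((1 + s) ^ 3 / s ^ 2 * δ) := by
    intro s
    rw [kl, ← sum_nz_inv]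
    refine Finset.sum_congr rfl fun δ _ => ?_
    rw [← psi_add, inv_inv]
  rw [Finset.sum_congr rfl fun s _ => h1 s, Finset.sum_comm]
  refine Finset.sum_congr rfl fun δ hδ => ?_
  rw [← Finset.mul_sum, ← psi_mul_kl_cubic (mem_nz.1 hδ), ← mul_assoc, ← psi_add, add_comm]

lemma sum_psi_kl_isogenous :
    ∑ δ ∈ nz F, psi (δ + δ⁻¹) * kl (δ * (1 + δ) ^ 3)
      = - Fintype.card F
        + ∑ δ ∈ nz F, ∑ s ∈ nz F, psi (δ⁻¹ + s⁻¹ + δ * (1 + s) ^ 3 * s⁻¹) := by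
  rw [sum_nz_eq_nz1, sum_nz_eq_nz1 (F := F)
    (fun δ => ∑ s ∈ nz F, psi (δ⁻¹ + s⁻¹ + δ * (1 + s) ^ 3 * s⁻¹))]
  have h1 : ∀ s ∈ nz F, psi ((1 : F)⁻¹ + s⁻¹ + 1 * (1 + s) ^ 3 * s⁻¹) = 1 := by
    intro s hs
    have hs := mem_nz.1 hs
    rw [← psi_zero (F := F)]
    refine psi_congr s ?_
    field_simp
    grind
  have h2 : ∀ δ ∈ nz1 F, psi (δ + δ⁻¹) * kl (δ * (1 + δ) ^ 3)
      = ∑ s ∈ nz F, psi (δ⁻¹ + s⁻¹ + δ * (1 + s) ^ 3 * s⁻¹) := by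
    intro δ hδ
    obtain ⟨h0, h1⟩ := mem_nz1.1 hδ
    have h1' : 1 + δ ≠ 0 := by grind
    have hk : kl (δ * (1 + δ) ^ 3) = kl ((δ * (1 + δ)) * (1 + δ) ^ 2) := by congr 1; ring
    rw [hk, ← sum_nz_psi_mul_add_inv (mul_ne_zero h0 h1'), ← sum_nz_sq, Finset.mul_sum]
    refine Finset.sum_congr rfl fun s hs => ?_
    have hs := mem_nz.1 hs
    rw [← psi_add]
    refine psi_congr (δ * s + s⁻¹ + δ / s) ?_
    clear hk
    field_simp
    grind
  rw [Finset.sum_congr rfl h1, Finset.sum_congr rfl h2]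
  simp only [inv_one, CharTwo.add_self_eq_zero, psi_zero, sum_const, nsmul_eq_mul, card_nz]
  simp [kl_zero]
  ring

lemma sum_psi_double :
    ∑ δ ∈ nz F, ∑ s ∈ nz F, psi (δ⁻¹ + s⁻¹ + δ * (1 + s) ^ 3 * s⁻¹)
      = - (psi (1 : F) * Fintype.card F) + ∑ y ∈ nz F, psi (y + y⁻¹) * kl (y + y⁻¹) := by
  rw [Finset.sum_comm, sum_nz_eq_nz1]
  have hl : ∑ δ ∈ nz F, psi (δ⁻¹ + (1 : F)⁻¹ + δ * (1 + 1) ^ 3 * (1 : F)⁻¹) = - psi (1 : F) := by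
    simp only [CharTwo.add_self_eq_zero, inv_one]
    simp only [ne_eq, OfNat.ofNat_ne_zero, not_false_eq_true, zero_pow, mul_zero, mul_one,
      add_zero, psi_add, ← Finset.sum_mul, sum_nz_psi_inv]
    ring
  have h1 : ∀ s ∈ nz1 F, ∑ δ ∈ nz F, psi (δ⁻¹ + s⁻¹ + δ * (1 + s) ^ 3 * s⁻¹)
      = ∑ y ∈ nz F, psi (y + y⁻¹) * psi (y * s + (1 + (y ^ 2)⁻¹) * s⁻¹) := by
    intro s hs
    obtain ⟨h0, h1⟩ := mem_nz1.1 hs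
    have h1' : 1 + s ≠ 0 := by grind
    rw [← sum_nz_mul (inv_ne_zero (pow_ne_zero 2 h1')), ← sum_nz_inv, ← sum_nz_sq]
    refine Finset.sum_congr rfl fun y hy => ?_
    have hy := mem_nz.1 hy
    rw [← psi_add]
    refine psi_congr (s * y + y + y⁻¹) ?_
    field_simp
    grind
  have h2 : ∀ y ∈ nz F, psi (y + y⁻¹) * kl (y + y⁻¹)
      = ∑ s ∈ nz F, psi (y + y⁻¹) * psi (y * s + (1 + (y ^ 2)⁻¹) * s⁻¹) := by
    intro y hy
    have hy := mem_nz.1 hy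
    rw [← Finset.mul_sum, sum_nz_psi_mul_add_inv hy]
    congr 2
    field_simp
  have h3 : ∀ y ∈ nz F, psi (y + y⁻¹) * psi (y * 1 + (1 + (y ^ 2)⁻¹) * 1⁻¹) = psi (1 : F) := by
    intro y hy
    have hy := mem_nz.1 hy
    rw [← psi_add]
    refine psi_congr (y⁻¹) ?_
    field_simp
    grind
  rw [hl, Finset.sum_congr rfl h1, Finset.sum_congr rfl h2, Finset.sum_comm (s := nz F),
    sum_nz_eq_nz1 (F := F) (fun s => ∑ y ∈ nz F, _), Finset.sum_congr rfl h3]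
  rw [sum_const, nsmul_eq_mul, card_nz]
  ring

lemma sum_psi_kl_add_inv :
    ∑ y ∈ nz F, psi (y + y⁻¹) * kl (y + y⁻¹) = psi (1 : F) * Fintype.card F + moment F := by
  rw [sum_nz_add_inv_comp (fun v => psi v * kl v)]
  have h : ∀ v ∈ nz F, (1 + psi v⁻¹) * (psi v * kl v)
      = psi v * kl v + psi (v + v⁻¹) * kl v := by
    intro v _
    rw [psi_add]; ring
  rw [Finset.sum_congr rfl h, Finset.sum_add_distrib, sum_psi_kl, moment, kl_zero, psi_zero]
  ring

lemma sum_kl_cube_div_sq_eq :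
    ∑ s ∈ nz F, kl ((1 + s) ^ 3 / s ^ 2) = moment F - Fintype.card F := by
  rw [sum_kl_cube_div_sq, Finset.sum_congr rfl
    (fun δ hδ => by rw [kl_isogeny δ (mem_nz.1 hδ)]), sum_psi_kl_isogenous, sum_psi_double,
    sum_psi_kl_add_inv]
  ring

lemma sum_kl_first :
    ∑ ρ ∈ nz1 F, kl ((ρ * (1 + ρ) ^ 2)⁻¹) = 1 - Fintype.card F + moment F := by
  have h := sum_kl_cube_div_sq_eq (F := F)
  rw [sum_nz_eq_nz1, ← sum_nz1_add_one, ← sum_nz1_inv] at h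
  simp only [CharTwo.add_self_eq_zero] at h
  simp only [ne_eq, OfNat.ofNat_ne_zero, not_false_eq_true, zero_pow, zero_div, kl_zero] at h
  rw [Finset.sum_congr rfl (g := fun ρ : F => kl ((ρ * (1 + ρ) ^ 2)⁻¹))] at h
  · linarith
  · intro ρ hρ
    obtain ⟨h0, h1⟩ := mem_nz1.1 hρ
    have h1' : 1 + ρ ≠ 0 := by grind
    have h2 : 1 + ρ⁻¹ = (1 + ρ) / ρ := by field_simp; ring
    congr 1
    rw [h2]
    field_simp
    grind

lemma sum_kl_second :
    ∑ ρ ∈ nz1 F, kl (ρ / (1 + ρ) ^ 2) = 2 + Fintype.card F * psi (1 : F) := by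
  have h := sum_nz_add_inv_comp (F := F) (fun v => kl v⁻¹)
  rw [sum_nz_eq_nz1, sum_nz_inv (fun v => (1 + psi v) * kl v)] at h
  simp only [add_mul, one_mul, Finset.sum_add_distrib, sum_kl, sum_psi_kl, inv_zero, inv_one,
    CharTwo.add_self_eq_zero, kl_zero] at h
  rw [Finset.sum_congr rfl (g := fun ρ : F => kl (ρ / (1 + ρ) ^ 2))] at h
  · linarith
  · intro ρ hρ
    obtain ⟨h0, h1⟩ := mem_nz1.1 hρ
    have h1' : 1 + ρ ≠ 0 := by grind
    have h2 : ρ + ρ⁻¹ = (1 + ρ) ^ 2 / ρ := by field_simp; grind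
    rw [h2, inv_div]

lemma sum_nz1_artinSchreier (G : F → ℤ) :
    ∑ η ∈ nz1 F, G (η ^ 2 + η) = ∑ e ∈ nz F, (1 + psi e) * G e := by
  have h3 := sum_artinSchreier_comp (F := F) G
  rw [sum_eq_nz, sum_nz_eq_nz1, sum_eq_nz] at h3
  simp only [one_pow, CharTwo.add_self_eq_zero, psi_zero] at h3
  simp only [ne_eq, OfNat.ofNat_ne_zero, not_false_eq_true, zero_pow, add_zero] at h3
  linarith

lemma sum_psi_two_poles {ρ : F} (h0 : ρ ≠ 0) (h1 : ρ ≠ 1) :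
    ∑ n : F, psi (n / (1 + ρ ^ 2) ^ 2 + n⁻¹ + (ρ ^ 2 + n)⁻¹)
      = 2 * psi ρ⁻¹ + kl ((ρ * (1 + ρ) ^ 2)⁻¹) + kl (ρ / (1 + ρ) ^ 2) := by
  have h1' : 1 + ρ ≠ 0 := by grind
  have hsq : ∑ n : F, psi (n / (1 + ρ ^ 2) ^ 2 + n⁻¹ + (ρ ^ 2 + n)⁻¹)
      = ∑ η : F, psi (ρ * η / (1 + ρ) ^ 2 + (ρ * η)⁻¹ + (ρ * (1 + η))⁻¹) := by
    rw [← sum_sq_comp, ← Equiv.sum_comp (Equiv.mulLeft₀ ρ h0)]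
    refine Finset.sum_congr rfl fun η _ => ?_
    rw [← psi_sq (ρ * η / (1 + ρ) ^ 2 + (ρ * η)⁻¹ + (ρ * (1 + η))⁻¹)]
    congr 1
    have e1 : (1 + ρ ^ 2 : F) = (1 + ρ) ^ 2 := by grind
    have e2 : ρ ^ 2 + (ρ * η) ^ 2 = (ρ * (1 + η)) ^ 2 := by grind
    simp only [Equiv.mulLeft₀_apply, CharTwo.add_sq, e1, e2, div_pow, inv_pow]
  have hmid : ∀ η ∈ nz1 F, psi (ρ * η / (1 + ρ) ^ 2 + (ρ * η)⁻¹ + (ρ * (1 + η))⁻¹)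
      = psi (((1 + ρ) ^ 2)⁻¹ * (η ^ 2 + η) + ρ⁻¹ * (η ^ 2 + η)⁻¹) := by
    intro η hη
    obtain ⟨hη0, hη1⟩ := mem_nz1.1 hη
    have hη1' : 1 + η ≠ 0 := by grind
    have e : η ^ 2 + η = η * (1 + η) := by ring
    refine psi_congr (η / (1 + ρ)) ?_
    rw [e]
    field_simp
    grind
  have hone : psi (ρ * 1 / (1 + ρ) ^ 2 + (ρ * 1)⁻¹ + (ρ * (1 + 1))⁻¹) = psi ρ⁻¹ := by
    rw [CharTwo.add_self_eq_zero]
    refine psi_congr ((1 + ρ)⁻¹) ?_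
    simp only [mul_zero, inv_zero, add_zero, mul_one]
    field_simp
    grind
  have hG : ∀ e ∈ nz F, (1 + psi e) * psi (((1 + ρ) ^ 2)⁻¹ * e + ρ⁻¹ * e⁻¹)
      = psi (((1 + ρ) ^ 2)⁻¹ * e + ρ⁻¹ * e⁻¹) + psi ((ρ ^ 2 / (1 + ρ) ^ 2) * e + ρ⁻¹ * e⁻¹) := by
    intro e _
    rw [add_mul, one_mul, ← psi_add]
    congr 2
    have : ρ ^ 2 / (1 + ρ) ^ 2 = 1 + ((1 + ρ) ^ 2)⁻¹ := by field_simp; grind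
    rw [this]; ring
  rw [hsq, sum_eq_nz, sum_nz_eq_nz1, hone, Finset.sum_congr rfl hmid,
    sum_nz1_artinSchreier (fun e => psi (((1 + ρ) ^ 2)⁻¹ * e + ρ⁻¹ * e⁻¹)),
    Finset.sum_congr rfl hG, Finset.sum_add_distrib,
    sum_nz_psi_mul_add_inv (inv_ne_zero (pow_ne_zero 2 h1')),
    sum_nz_psi_mul_add_inv (div_ne_zero (pow_ne_zero 2 h0) (pow_ne_zero 2 h1'))]
  have e3 : ((1 + ρ) ^ 2)⁻¹ * ρ⁻¹ = (ρ * (1 + ρ) ^ 2)⁻¹ := by field_simp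
  have e4 : ρ ^ 2 / (1 + ρ) ^ 2 * ρ⁻¹ = ρ / (1 + ρ) ^ 2 := by field_simp
  rw [e3, e4]
  simp
  ring

/-- The character sum over norm/trace pairs; inverses of zero are zero. -/
lemma sum_norm_trace :
    ∑ t ∈ nz F, ∑ n : F, psi (n / t ^ 2 + n⁻¹ + (1 + n + t)⁻¹)
      = 1 - Fintype.card F - 2 * psi (1 : F) + Fintype.card F * psi (1 : F) + moment F := by
  have hone : ∑ n : F, psi (n / 1 ^ 2 + n⁻¹ + (1 + n + 1)⁻¹) = 0 := by
    rw [← sum_psi (F := F)]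
    refine Finset.sum_congr rfl fun n _ => ?_
    have : 1 + n + 1 = n := by grind
    rw [this]
    congr 1
    rw [add_assoc, CharTwo.add_self_eq_zero]; simp
  have h1 : ∀ ρ ∈ nz1 F, ∑ n : F, psi (n / (1 + ρ ^ 2) ^ 2 + n⁻¹ + (1 + n + (1 + ρ ^ 2))⁻¹)
      = 2 * psi ρ⁻¹ + kl ((ρ * (1 + ρ) ^ 2)⁻¹) + kl (ρ / (1 + ρ) ^ 2) := by
    intro ρ hρ
    obtain ⟨h0, h1⟩ := mem_nz1.1 hρ
    rw [← sum_psi_two_poles h0 h1]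
    refine Finset.sum_congr rfl fun n _ => ?_
    congr 3
    grind
  have h2 : ∑ ρ ∈ nz1 F, psi ρ⁻¹ = -1 - psi (1 : F) := by
    have := sum_nz_psi_inv (F := F)
    rw [sum_nz_eq_nz1, inv_one] at this
    linarith
  rw [sum_nz_eq_nz1, hone, ← sum_nz1_add_one, ← sum_nz1_sq, Finset.sum_congr rfl h1,
    Finset.sum_add_distrib, Finset.sum_add_distrib, sum_kl_first, sum_kl_second,
    ← Finset.mul_sum, h2]
  ring

end Chain

/-! ### The twisted moment as a quadratic form sum -/

section QuadraticForm

variable {F : Type*} [Field F] [Fintype F] [CharP F 2]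

lemma sum_psi_kl_moebius :
    ∑ b ∈ nz1 F, psi (b / (1 + b)) * kl b = psi (1 : F) * moment F + 1 := by
  have h1 : ∀ x ∈ nz F, ∑ y ∈ nz F, psi ((1 + y) / y) * psi (x + (1 + y) * x⁻¹)
      = psi (1 : F) * (psi (x⁻¹ + (x⁻¹)⁻¹) * kl x⁻¹) := by
    intro x hx
    have hx := mem_nz.1 hx
    have hk : kl x⁻¹ = ∑ y ∈ nz F, psi (x⁻¹ * y + 1 * y⁻¹) := by
      rw [sum_nz_psi_mul_add_inv' x⁻¹ one_ne_zero, mul_one]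
    rw [hk, Finset.mul_sum, Finset.mul_sum]
    refine Finset.sum_congr rfl fun y hy => ?_
    have hy := mem_nz.1 hy
    rw [← psi_add, ← psi_add, ← psi_add]
    congr 1
    field_simp
    grind
  have h2 : ∑ y ∈ nz F, psi ((1 + y) / y) * kl (1 + y) = psi (1 : F) * moment F := by
    simp only [kl, Finset.mul_sum]
    rw [Finset.sum_comm, Finset.sum_congr rfl h1,
      sum_nz_inv (fun x => psi (1 : F) * (psi (x + x⁻¹) * kl x)), moment, ← Finset.mul_sum]
  rw [sum_nz_eq_nz1, CharTwo.add_self_eq_zero, zero_div, psi_zero, kl_zero,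
    ← sum_nz1_add_one] at h2
  rw [← sub_eq_iff_eq_add, ← h2, sub_eq_neg_add, mul_neg, mul_one]
  congr 1
  refine Finset.sum_congr rfl fun b _ => ?_
  have e : 1 + (1 + b) = b := by grind
  rw [e]

open Classical in
/-- The sum attached to the quadratic form `a² + ab + b²`, in terms of the twisted moment. -/
lemma sum_quadratic_form :
    ∑ a : F, ∑ b : F, (if a ^ 2 + a * b + b ^ 2 = 0 then 0
        else psi (b + a * (a ^ 2 + a * b + b ^ 2)⁻¹)) = psi (1 : F) * moment F := by
  have h0 : ∑ b : F, (if (0 : F) ^ 2 + 0 * b + b ^ 2 = 0 then 0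
      else psi (b + 0 * ((0 : F) ^ 2 + 0 * b + b ^ 2)⁻¹)) = -1 := by
    rw [sum_eq_nz, ← sum_nz_psi (F := F)]
    simp only [zero_mul, add_zero]
    rw [if_pos (by simp), zero_add]
    refine Finset.sum_congr rfl fun b hb => ?_
    have hb := mem_nz.1 hb
    rw [if_neg (by simpa using hb)]
  have h1 : ∀ a ∈ nz F, ∑ b : F, (if a ^ 2 + a * b + b ^ 2 = 0 then 0
      else psi (b + a * (a ^ 2 + a * b + b ^ 2)⁻¹))
      = ∑ c : F, (if 1 + c + c ^ 2 = 0 then 0 else psi (c * a + (1 + c + c ^ 2)⁻¹ * a⁻¹)) := by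
    intro a ha
    have ha := mem_nz.1 ha
    rw [← Equiv.sum_comp (Equiv.mulLeft₀ a ha)]
    refine Finset.sum_congr rfl fun c _ => ?_
    have e : a ^ 2 + a * (a * c) + (a * c) ^ 2 = a ^ 2 * (1 + c + c ^ 2) := by ring
    rw [Equiv.mulLeft₀_apply, e]
    by_cases hc : 1 + c + c ^ 2 = 0
    · simp [hc]
    · rw [if_neg (mul_ne_zero (pow_ne_zero 2 ha) hc), if_neg hc]
      congr 1
      field_simp
  have h2 : ∀ c : F, ∑ a ∈ nz F,
      (if 1 + c + c ^ 2 = 0 then 0 else psi (c * a + (1 + c + c ^ 2)⁻¹ * a⁻¹))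
      = if 1 + c + c ^ 2 = 0 then 0 else kl (c * (1 + c + c ^ 2)⁻¹) := by
    intro c
    split_ifs with hc
    · simp
    · exact sum_nz_psi_mul_add_inv' c (inv_ne_zero hc)
  have h3 : ∀ c ∈ nz F, (if 1 + c + c ^ 2 = 0 then 0 else kl (c * (1 + c + c ^ 2)⁻¹))
      = (fun v : F => if 1 + v = 0 then 0 else kl (1 + v)⁻¹) (c + c⁻¹) := by
    intro c hc
    have hc := mem_nz.1 hc
    have e : 1 + c + c ^ 2 = c * (1 + (c + c⁻¹)) := by field_simp; ring
    simp only [e, mul_eq_zero, hc, false_or]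
    split_ifs with h
    · rfl
    · congr 1; field_simp
  have h4 : ∀ v ∈ nz1 F, (1 + psi v⁻¹) * (if 1 + v = 0 then 0 else kl (1 + v)⁻¹)
      = kl (1 + v)⁻¹ + psi v⁻¹ * kl (1 + v)⁻¹ := by
    intro v hv
    have hv := (mem_nz1.1 hv).2
    rw [if_neg (by grind)]; ring
  have h5 : ∑ v ∈ nz1 F, kl (1 + v)⁻¹ = 1 - kl (1 : F) := by
    have := sum_kl (F := F)
    rw [sum_nz_eq_nz1, ← sum_nz1_inv, ← sum_nz1_add_one] at this
    linarith
  have h6 : ∑ v ∈ nz1 F, psi v⁻¹ * kl (1 + v)⁻¹ = psi (1 : F) * moment F + 1 := by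
    rw [← sum_psi_kl_moebius, ← sum_nz1_inv (fun b : F => psi (b / (1 + b)) * kl b),
      ← sum_nz1_add_one (fun b : F => psi (b⁻¹ / (1 + b⁻¹)) * kl b⁻¹)]
    refine Finset.sum_congr rfl fun v hv => ?_
    obtain ⟨hv0, hv1⟩ := mem_nz1.1 hv
    have hv1' : 1 + v ≠ 0 := by grind
    have e : 1 + (1 + v)⁻¹ = v / (1 + v) := by field_simp; grind
    rw [e]
    congr 2
    field_simp
  rw [sum_eq_nz, h0, Finset.sum_congr rfl h1, Finset.sum_comm, Finset.sum_congr rfl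
    (fun c _ => h2 c), sum_eq_nz, Finset.sum_congr rfl h3,
    sum_nz_add_inv_comp (fun v : F => if 1 + v = 0 then 0 else kl (1 + v)⁻¹), sum_nz_eq_nz1,
    Finset.sum_congr rfl h4, Finset.sum_add_distrib, h5, h6]
  simp [CharTwo.add_self_eq_zero, kl_zero]
  ring

end QuadraticForm

/-! ### The character as a trace -/

section Trace

variable {F : Type*} [Field F] [Fintype F] [CharP F 2]

lemma trace_artinSchreier [Algebra (ZMod 2) F] (y : F) :
    Algebra.trace (ZMod 2) F (y ^ 2 + y) = 0 := by
  have : Fact (Nat.Prime 2) := ⟨Nat.prime_two⟩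
  have h := Algebra.trace_eq_of_algEquiv (FiniteField.frobeniusAlgEquiv (ZMod 2) F 2) y
  have h2 : FiniteField.frobeniusAlgEquiv (ZMod 2) F 2 y = y ^ 2 := by
    simp [FiniteField.frobeniusAlgEquiv_apply]
  rw [h2] at h
  rw [map_add, h, CharTwo.add_self_eq_zero]

lemma psi_eq_one_iff_trace [Algebra (ZMod 2) F] (x : F) :
    psi x = 1 ↔ Algebra.trace (ZMod 2) F x = 0 := by
  have : Fact (Nat.Prime 2) := ⟨Nat.prime_two⟩
  have hforward : ∀ y : F, psi y = 1 → Algebra.trace (ZMod 2) F y = 0 := by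
    intro y h
    obtain ⟨y, rfl⟩ := (psi_eq_one_iff y).1 h
    exact trace_artinSchreier y
  refine ⟨hforward x, fun h => ?_⟩
  by_contra hx
  have hx := (psi_cases x).resolve_left hx
  apply Algebra.trace_ne_zero (ZMod 2) F
  ext y
  rw [LinearMap.zero_apply]
  rcases psi_cases y with hy | hy
  · exact hforward y hy
  · have := hforward (x + y) (by rw [psi_add, hx, hy]; rfl)
    rwa [map_add, h, zero_add] at this

lemma psi_eq_psi_of_trace {E : Type*} [Field E] [Fintype E] [CharP E 2] {x : F} {y : E}
    [Algebra (ZMod 2) F] [Algebra (ZMod 2) E]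
    (h : Algebra.trace (ZMod 2) F x = Algebra.trace (ZMod 2) E y) : psi x = psi y := by
  have h1 := psi_eq_one_iff_trace x
  have h2 := psi_eq_one_iff_trace y
  rw [h, ← h2] at h1
  rcases psi_cases x with hx | hx <;> rcases psi_cases y with hy | hy <;>
    rw [hx, hy] at h1 ⊢ <;> simp at h1

/-- The character of an extension is the character of the base composed with the trace. -/
lemma psi_eq_psi_trace {E : Type*} [Field E] [Fintype E] [CharP E 2] [Algebra F E] (y : E) :
    psi y = psi (Algebra.trace F E y) := by
  let _ : Algebra (ZMod 2) F := ZMod.algebra F 2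
  let _ : Algebra (ZMod 2) E := ZMod.algebra E 2
  have : IsScalarTower (ZMod 2) F E := IsScalarTower.of_algebraMap_eq' (Subsingleton.elim _ _)
  exact psi_eq_psi_of_trace (Algebra.trace_trace y).symm

lemma psi_one_eq {m : ℕ} (hF : Fintype.card F = 2 ^ m) : psi (1 : F) = (-1) ^ m := by
  let _ : Algebra (ZMod 2) F := ZMod.algebra F 2
  have : Fact (Nat.Prime 2) := ⟨Nat.prime_two⟩
  have hfin : Module.finrank (ZMod 2) F = m := by
    have h := Module.card_eq_pow_finrank (K := ZMod 2) (V := F)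
    rw [hF, ZMod.card] at h
    exact (Nat.pow_right_injective le_rfl h).symm
  have h1 := psi_eq_one_iff_trace (1 : F)
  have h2 : Algebra.trace (ZMod 2) F 1 = m := by
    have := Algebra.trace_algebraMap (S := F) (1 : ZMod 2)
    rw [map_one, hfin] at this
    simpa using this
  rw [h2, ZMod.natCast_eq_zero_iff, ← even_iff_two_dvd] at h1
  rcases Nat.even_or_odd m with h | h
  · rw [h.neg_one_pow, h1.2 h]
  · rw [h.neg_one_pow]
    refine (psi_cases _).resolve_left fun hh => ?_
    exact Nat.not_even_iff_odd.2 h (h1.1 hh)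

end Trace

/-! ### Minimal polynomials of inverses -/

section MinpolyInv

open Polynomial

/-- The next-to-leading coefficient of the minimal polynomial of `x⁻¹`, read off from the
reversed minimal polynomial of `x`. -/
lemma minpoly_inv_nextCoeff {k L : Type*} [Field k] [Field L] [Algebra k L] [FiniteDimensional k L]
    {x : L} (hx : x ≠ 0) :
    (minpoly k x⁻¹).nextCoeff = (minpoly k x).coeff 1 / (minpoly k x).coeff 0 := by
  set p := minpoly k x with hp
  have hint : IsIntegral k x := .of_finite k x
  have hint' : IsIntegral k x⁻¹ := .of_finite k x⁻¹
  have hp0 : p.coeff 0 ≠ 0 := minpoly.coeff_zero_ne_zero hint hx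
  have hpz : p ≠ 0 := minpoly.ne_zero hint
  have hpos : 0 < p.natDegree := minpoly.natDegree_pos hint
  have htr : p.natTrailingDegree = 0 := by
    rw [natTrailingDegree_eq_zero]; exact Or.inr hp0
  have hdeg : p.reverse.natDegree = p.natDegree := by rw [reverse_natDegree, htr, Nat.sub_zero]
  have hroot : aeval x⁻¹ p.reverse = 0 := by
    let _ : Invertible x := invertibleOfNonzero hx
    have := (eval₂_reverse_eq_zero_iff (algebraMap k L) x p).2 (minpoly.aeval k x)
    rwa [invOf_eq_inv] at this
  have hdeg' : (minpoly k x⁻¹).natDegree = p.natDegree := by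
    rw [hp, ← IntermediateField.adjoin.finrank hint, ← IntermediateField.adjoin.finrank hint']
    have : IntermediateField.adjoin k {x⁻¹} = IntermediateField.adjoin k {x} := by
      apply le_antisymm
      · rw [IntermediateField.adjoin_simple_le_iff]
        exact inv_mem (IntermediateField.mem_adjoin_simple_self k x)
      · rw [IntermediateField.adjoin_simple_le_iff]
        have := inv_mem (IntermediateField.mem_adjoin_simple_self k x⁻¹)
        rwa [inv_inv] at this
    rw [this]
  have hlead : p.reverse.leadingCoeff = p.coeff 0 := by
    rw [reverse_leadingCoeff, trailingCoeff, htr]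
  have hmonic : (C (p.coeff 0)⁻¹ * p.reverse).Monic := by
    rw [Monic, leadingCoeff_mul, leadingCoeff_C, hlead, inv_mul_cancel₀ hp0]
  have hmin : C (p.coeff 0)⁻¹ * p.reverse = minpoly k x⁻¹ := by
    apply minpoly.unique_of_degree_le_degree_minpoly k x⁻¹ hmonic
    · rw [map_mul, hroot, mul_zero]
    · rw [degree_C_mul (inv_ne_zero hp0)]
      rw [degree_eq_natDegree (minpoly.ne_zero hint'), hdeg', ← hdeg]
      exact degree_le_natDegree
  rw [nextCoeff_of_natDegree_pos (by rw [hdeg']; exact hpos), hdeg', ← hmin, coeff_C_mul,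
    coeff_reverse, revAt_le (Nat.sub_le _ _), Nat.sub_sub_self hpos, div_eq_inv_mul]

end MinpolyInv

/-! ### The L-function of a Kloosterman sum -/

section LFunction

open Polynomial

variable {k : Type*} [Field k] [Fintype k]

lemma finite_monics (n : ℕ) : {f : k[X] | f.Monic ∧ f.natDegree = n}.Finite := by
  have : Finite {f : k[X] // f.Monic ∧ f.natDegree = n} :=
    Finite.of_equiv (Fin n → k)
      ((monicEquivDegreeLT n).trans (degreeLTEquiv k n).toEquiv).symm
  exact Set.finite_coe_iff.1 this

variable (k) in
/-- The monic polynomials of degree `n` over a finite field. -/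
noncomputable def monics (n : ℕ) : Finset k[X] := (finite_monics (k := k) n).toFinset

@[simp] lemma mem_monics {n : ℕ} {f : k[X]} : f ∈ monics k n ↔ f.Monic ∧ f.natDegree = n := by
  simp [monics]

open Classical in
variable (k) in
/-- The monic irreducible polynomials of degree `n` over a finite field. -/
noncomputable def irreds (n : ℕ) : Finset k[X] := {P ∈ monics k n | Irreducible P}

@[simp] lemma mem_irreds {n : ℕ} {P : k[X]} :
    P ∈ irreds k n ↔ (P.Monic ∧ P.natDegree = n) ∧ Irreducible P := by
  simp [irreds]

open Classical in
/-- The multiplicative function on monic polynomials attached to the Kloosterman sum: its value at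
`f` is `ψ` of the sum of `x + w / x` over the roots `x` of `f`, and `0` when `0` is a root. -/
noncomputable def chi (w : k) (f : k[X]) : ℤ :=
  if f.coeff 0 = 0 then 0 else psi (f.nextCoeff + w * (f.coeff 1 / f.coeff 0))

/-- The coefficients of the L-function of `chi`. -/
noncomputable def lcoeff (w : k) (n : ℕ) : ℤ := ∑ f ∈ monics k n, chi w f

/-- The power sums of `chi` over prime polynomials, graded by degree. -/
noncomputable def primeSum (w : k) (j : ℕ) : ℤ :=
  ∑ p ∈ j.divisorsAntidiagonal, p.1 * ∑ P ∈ irreds k p.1, chi w P ^ p.2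

open Classical in
/-- The degree of a monic polynomial is the sum of the degrees of the primes `P`, each counted once
for every `e ≥ 1` with `P ^ e ∣ f`. -/
lemma degree_eq_sum_prime_powers {n : ℕ} {f : k[X]} (hf : f ∈ monics k n) :
    (n : ℤ) = ∑ j ∈ Icc 1 n, ∑ p ∈ j.divisorsAntidiagonal,
      ∑ P ∈ irreds k p.1, if P ^ p.2 ∣ f then (p.1 : ℤ) else 0 := by
  obtain ⟨hm, hd⟩ := mem_monics.1 hf
  set N := UniqueFactorizationMonoid.normalizedFactors f with hN
  have hf0 : f ≠ 0 := hm.ne_zero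
  have hprod : N.prod = f := by
    rw [hN, UniqueFactorizationMonoid.prod_normalizedFactors_eq hf0, hm.normalize_eq_self]
  have hmemN : ∀ P, P ∈ N ↔ Irreducible P ∧ P.Monic ∧ P ∣ f := fun P => by
    rw [hN, Polynomial.mem_normalizedFactors_iff hf0]
  have hcount : ∀ P : k[X], Irreducible P → P.Monic → ∀ e : ℕ, P ^ e ∣ f ↔ e ≤ N.count P := by
    intro P hP hPm e
    rw [pow_dvd_iff_le_emultiplicity,
      UniqueFactorizationMonoid.emultiplicity_eq_count_normalizedFactors hP hf0,
      hPm.normalize_eq_self]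
    simp [hN]
  have hdeg : (n : ℤ) = ∑ P ∈ N.toFinset, ∑ e ∈ Icc 1 (N.count P), (P.natDegree : ℤ) := by
    have h1 : n = (N.map natDegree).sum := by
      rw [← hd, ← hprod, natDegree_multiset_prod]
      exact fun h => ((hmemN 0).1 h).1.ne_zero rfl
    rw [h1, Finset.sum_multiset_map_count]
    push_cast
    refine Finset.sum_congr rfl fun P _ => ?_
    simp
  rw [hdeg]
  simp only [← Finset.sum_filter]
  rw [Finset.sum_sigma', Finset.sum_sigma', Finset.sum_sigma']
  refine Finset.sum_bij'
    (fun x _ => ⟨⟨x.2 * x.1.natDegree, (x.1.natDegree, x.2)⟩, x.1⟩)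
    (fun y _ => ⟨y.2, y.1.2.2⟩) ?_ ?_ ?_ ?_ ?_
  · rintro ⟨P, e⟩ hx
    simp only [mem_sigma, Multiset.mem_toFinset, mem_Icc] at hx
    obtain ⟨hP, he1, he⟩ := hx
    obtain ⟨hirr, hPm, hdvd⟩ := (hmemN P).1 hP
    have hpd := (hcount P hirr hPm e).2 he
    have hle := natDegree_le_of_dvd hpd hf0
    rw [natDegree_pow, hd] at hle
    have hpos := hirr.natDegree_pos
    have : 0 < e * P.natDegree := Nat.mul_pos he1 hpos
    simp only [mem_sigma, mem_Icc, Nat.mem_divisorsAntidiagonal, mem_filter, mem_irreds]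
    refine ⟨⟨⟨this, hle⟩, mul_comm _ _, this.ne'⟩, ⟨⟨hPm, trivial⟩, hirr⟩, hpd⟩
  · rintro ⟨⟨j, d, e⟩, P⟩ hx
    simp only [mem_sigma, mem_Icc, Nat.mem_divisorsAntidiagonal, mem_filter, mem_irreds] at hx
    obtain ⟨⟨⟨hj1, hjn⟩, hde, -⟩, ⟨⟨hPm, hPd⟩, hirr⟩, hpd⟩ := hx
    have he : 1 ≤ e := by
      rcases Nat.eq_zero_or_pos e with h | h
      · subst h; omega
      · exact h
    simp only [mem_sigma, Multiset.mem_toFinset, mem_Icc]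
    exact ⟨(hmemN P).2 ⟨hirr, hPm, (dvd_pow_self P (by omega)).trans hpd⟩, he,
      (hcount P hirr hPm e).1 hpd⟩
  · rintro ⟨P, e⟩ hx; rfl
  · rintro ⟨⟨j, d, e⟩, P⟩ hx
    simp only [mem_sigma, mem_Icc, Nat.mem_divisorsAntidiagonal, mem_filter, mem_irreds] at hx
    obtain ⟨⟨⟨hj1, hjn⟩, hde, -⟩, ⟨⟨hPm, hPd⟩, hirr⟩, hpd⟩ := hx
    subst hPd
    simp [← hde, mul_comm]
  · rintro ⟨P, e⟩ hx; rfl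

variable [CharP k 2]

lemma chi_mul (w : k) {f g : k[X]} (hf : f.Monic) (hg : g.Monic) :
    chi w (f * g) = chi w f * chi w g := by
  unfold chi
  rw [mul_coeff_zero, mul_coeff_one, hf.nextCoeff_mul hg]
  by_cases h1 : f.coeff 0 = 0
  · simp [h1]
  by_cases h2 : g.coeff 0 = 0
  · simp [h2]
  rw [if_neg (mul_ne_zero h1 h2), if_neg h1, if_neg h2, ← psi_add]
  congr 1
  field_simp
  ring

lemma chi_one (w : k) : chi w (1 : k[X]) = 1 := by
  simp [chi, nextCoeff, coeff_one]

lemma chi_pow (w : k) {f : k[X]} (hf : f.Monic) (e : ℕ) : chi w (f ^ e) = chi w f ^ e := by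
  induction e with
  | zero => simp [chi_one]
  | succ e ih => rw [pow_succ, chi_mul w (hf.pow e) hf, ih, pow_succ]

open Classical in
lemma sum_chi_dvd (w : k) {n r : ℕ} {Q : k[X]} (hQ : Q.Monic) (hr : Q.natDegree = r)
    (hrn : r ≤ n) :
    ∑ f ∈ monics k n with Q ∣ f, chi w f = chi w Q * lcoeff w (n - r) := by
  rw [lcoeff, Finset.mul_sum]
  symm
  refine Finset.sum_bij (fun g _ => Q * g) ?_ ?_ ?_ ?_
  · intro g hg
    obtain ⟨hm, hd⟩ := mem_monics.1 hg
    simp only [mem_filter, mem_monics]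
    refine ⟨⟨hQ.mul hm, ?_⟩, dvd_mul_right _ _⟩
    rw [hQ.natDegree_mul hm, hd, hr]; omega
  · intro g _ g' _ h
    exact mul_left_cancel₀ hQ.ne_zero h
  · intro f hf
    simp only [mem_filter, mem_monics] at hf
    obtain ⟨⟨hm, hd⟩, g, rfl⟩ := hf
    have hgm : g.Monic := hQ.of_mul_monic_left hm
    refine ⟨g, mem_monics.2 ⟨hgm, ?_⟩, rfl⟩
    rw [hQ.natDegree_mul hgm, hr] at hd
    omega
  · intro g hg
    exact (chi_mul w hQ (mem_monics.1 hg).1).symm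

/-- The logarithmic derivative of the Euler product, as an identity between coefficients. -/
lemma newton_identity (w : k) (n : ℕ) :
    n * lcoeff w n = ∑ j ∈ Icc 1 n, primeSum w j * lcoeff w (n - j) := by
  classical
  have h1 : (n : ℤ) * lcoeff w n = ∑ f ∈ monics k n, ∑ j ∈ Icc 1 n,
      ∑ p ∈ j.divisorsAntidiagonal, ∑ P ∈ irreds k p.1,
        if P ^ p.2 ∣ f then (p.1 : ℤ) * chi w f else 0 := by
    rw [lcoeff, Finset.mul_sum]
    refine Finset.sum_congr rfl fun f hf => ?_
    conv_lhs => rw [degree_eq_sum_prime_powers hf]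
    simp only [Finset.sum_mul, ite_mul, zero_mul]
  rw [h1, Finset.sum_comm]
  refine Finset.sum_congr rfl fun j hj => ?_
  rw [Finset.sum_comm, primeSum, Finset.sum_mul]
  refine Finset.sum_congr rfl fun p hp => ?_
  rw [Finset.sum_comm, Finset.mul_sum, Finset.sum_mul]
  refine Finset.sum_congr rfl fun P hP => ?_
  obtain ⟨⟨hPm, hPd⟩, hirr⟩ := mem_irreds.1 hP
  rw [← Finset.sum_filter, ← Finset.mul_sum, sum_chi_dvd w (hPm.pow p.2) (r := j),
    chi_pow w hPm, mul_assoc]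
  · rw [natDegree_pow, hPd, mul_comm]
    exact (Nat.mem_divisorsAntidiagonal.1 hp).1
  · exact (mem_Icc.1 hj).2

lemma lcoeff_zero (w : k) : lcoeff w 0 = 1 := by
  have : monics k 0 = {1} := by
    ext f
    simp only [mem_monics, mem_singleton]
    constructor
    · rintro ⟨h, h0⟩; exact h.natDegree_eq_zero.1 h0
    · rintro rfl; simp
  rw [lcoeff, this, Finset.sum_singleton, chi_one]

lemma lcoeff_one (w : k) : lcoeff w 1 = kl w := by
  classical
  have h : lcoeff w 1 = ∑ a : k, chi w (X + C a) := by
    symm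
    refine Finset.sum_bij (fun a _ => X + C a) ?_ ?_ ?_ ?_
    · intro a _; simp [monic_X_add_C]
    · intro a _ b _ h; simpa using h
    · intro f hf
      obtain ⟨hm, hd⟩ := mem_monics.1 hf
      refine ⟨f.coeff 0, mem_univ _, ?_⟩
      exact (hm.eq_X_add_C hd).symm
    · intro a _; rfl
  rw [h, sum_eq_nz, kl]
  have h0 : chi w (X + C (0 : k)) = 0 := by simp [chi]
  rw [h0, zero_add]
  refine Finset.sum_congr rfl fun a ha => ?_
  have ha := mem_nz.1 ha
  simp [chi, ha]

/-- In degree at least three the next-to-leading coefficient varies independently of the two lowest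
coefficients. -/
lemma lcoeff_eq_zero (w : k) {n : ℕ} (hn : 3 ≤ n) : lcoeff w n = 0 := by
  obtain ⟨c, hc⟩ := exists_psi_neg (F := k)
  have hcoeff : ∀ f ∈ monics k n, (f + C c * X ^ (n - 1)) ∈ monics k n := by
    intro f hf
    obtain ⟨hm, hd⟩ := mem_monics.1 hf
    have hlt : (C c * X ^ (n - 1)).degree < f.degree := by
      rw [degree_eq_natDegree hm.ne_zero, hd]
      refine (degree_C_mul_X_pow_le _ _).trans_lt ?_
      exact_mod_cast (by omega : n - 1 < n)
    refine mem_monics.2 ⟨hm.add_of_left hlt, ?_⟩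
    rw [natDegree_add_eq_left_of_degree_lt hlt, hd]
  have hchi : ∀ f ∈ monics k n, chi w (f + C c * X ^ (n - 1)) = - chi w f := by
    intro f hf
    obtain ⟨hm, hd⟩ := mem_monics.1 hf
    obtain ⟨hm', hd'⟩ := mem_monics.1 (hcoeff f hf)
    have e0 : (f + C c * X ^ (n - 1)).coeff 0 = f.coeff 0 := by
      rw [coeff_add, coeff_C_mul_X_pow, if_neg (by omega), add_zero]
    have e1 : (f + C c * X ^ (n - 1)).coeff 1 = f.coeff 1 := by
      rw [coeff_add, coeff_C_mul_X_pow, if_neg (by omega), add_zero]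
    have e2 : (f + C c * X ^ (n - 1)).nextCoeff = c + f.nextCoeff := by
      rw [nextCoeff_of_natDegree_pos (by omega), nextCoeff_of_natDegree_pos (by omega), hd, hd',
        coeff_add, coeff_C_mul_X_pow, if_pos rfl, add_comm]
    unfold chi
    rw [e0, e1, e2]
    split_ifs
    · rfl
    · rw [add_assoc, psi_add, hc]; ring
  have hself : lcoeff w n = - lcoeff w n := by
    rw [lcoeff, ← Finset.sum_neg_distrib]
    refine Finset.sum_bij' (fun f _ => f + C c * X ^ (n - 1)) (fun f _ => f + C c * X ^ (n - 1))
      hcoeff hcoeff ?_ ?_ ?_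
    · intro f _; rw [add_assoc, CharTwo.add_self_eq_zero, add_zero]
    · intro f _; rw [add_assoc, CharTwo.add_self_eq_zero, add_zero]
    · intro f hf; rw [hchi f hf, neg_neg]
  omega

lemma lcoeff_two {w : k} (hw : w ≠ 0) : lcoeff w 2 = Fintype.card k := by
  classical
  have h : lcoeff w 2 = ∑ b : k, ∑ a : k, chi w (X ^ 2 + C a * X + C b) := by
    rw [← Finset.sum_product']
    symm
    have hd : ∀ a b : k, (X ^ 2 + C a * X + C b).natDegree = 2 := fun a b => by compute_degree!
    refine Finset.sum_bij (fun p _ => X ^ 2 + C p.2 * X + C p.1) ?_ ?_ ?_ ?_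
    · intro p _
      exact mem_monics.2 ⟨by monicity!, hd _ _⟩
    · rintro ⟨b, a⟩ _ ⟨b', a'⟩ _ h
      have h0 := congrArg (fun f => coeff f 0) h
      have h1 := congrArg (fun f => coeff f 1) h
      simp [coeff_X, coeff_C] at h0 h1
      rw [h0, h1]
    · intro f hf
      obtain ⟨hm, hd⟩ := mem_monics.1 hf
      refine ⟨(f.coeff 0, f.coeff 1), mem_univ _, ?_⟩
      have := hm.as_sum
      rw [hd] at this
      rw [this]
      simp [Finset.sum_range_succ, coeff_X, coeff_C]
      ring
    · intro p _; rfl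
  have hv : ∀ a b : k, b ≠ 0 → chi w (X ^ 2 + C a * X + C b) = psi ((1 + w / b) * a) := by
    intro a b hb
    have hd : (X ^ 2 + C a * X + C b).natDegree = 2 := by compute_degree!
    have hn : (X ^ 2 + C a * X + C b).nextCoeff = a := by
      rw [nextCoeff_of_natDegree_pos (by omega), hd]
      simp [coeff_C]
    unfold chi
    rw [hn]
    simp [coeff_X, coeff_C, hb]
    congr 1
    field_simp
  have h0 : ∀ a : k, chi w (X ^ 2 + C a * X + C 0) = 0 := by
    intro a; simp [chi]
  have hs : ∀ b ∈ nz k, ∑ a : k, chi w (X ^ 2 + C a * X + C b)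
      = if b = w then (Fintype.card k : ℤ) else 0 := by
    intro b hb
    have hb := mem_nz.1 hb
    rw [Finset.sum_congr rfl fun a _ => hv a b hb]
    split_ifs with h
    · subst h
      simp [div_self hb, CharTwo.add_self_eq_zero]
    · apply sum_psi_mul
      intro h2
      apply h
      field_simp at h2
      grind
  rw [h, sum_eq_nz, Finset.sum_congr rfl fun a _ => h0 a, Finset.sum_congr rfl hs,
    Finset.sum_ite_eq']
  simp [hw]

end LFunction
/-! ### Kloosterman sums in extensions -/

section TowerSum

open Polynomial

variable {k : Type*} [Field k] [Fintype k] [CharP k 2]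
variable {L : Type*} [Field L] [Fintype L] [CharP L 2] [Algebra k L]

lemma psi_natCast_mul (e : ℕ) (s : k) : psi ((e : k) * s) = psi s ^ e := by
  induction e with
  | zero => simp
  | succ e ih => rw [Nat.cast_succ, add_mul, one_mul, psi_add, ih, pow_succ]

lemma psi_eq_chi_minpoly (w : k) {x : L} (hx : x ≠ 0) {e : ℕ}
    (he : (minpoly k x).natDegree * e = Module.finrank k L) :
    psi (x + algebraMap k L w * x⁻¹) = chi w (minpoly k x) ^ e := by
  have hint : IsIntegral k x := .of_finite k x
  have hadj : IntermediateField.adjoin k {x⁻¹} = IntermediateField.adjoin k {x} := by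
    apply le_antisymm
    · rw [IntermediateField.adjoin_simple_le_iff]
      exact inv_mem (IntermediateField.mem_adjoin_simple_self k x)
    · rw [IntermediateField.adjoin_simple_le_iff]
      have := inv_mem (IntermediateField.mem_adjoin_simple_self k x⁻¹)
      rwa [inv_inv] at this
  have hfin : Module.finrank (IntermediateField.adjoin k {x}) L = e := by
    have h := Module.finrank_mul_finrank k (IntermediateField.adjoin k {x}) L
    rw [IntermediateField.adjoin.finrank hint, ← he] at h
    exact Nat.eq_of_mul_eq_mul_left (minpoly.natDegree_pos hint) h
  have h1 : Algebra.trace k L x = e * (minpoly k x).nextCoeff := by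
    rw [trace_eq_finrank_mul_minpoly_nextCoeff, hfin, CharTwo.neg_eq]
  have h2 : Algebra.trace k L x⁻¹ = e * ((minpoly k x).coeff 1 / (minpoly k x).coeff 0) := by
    rw [trace_eq_finrank_mul_minpoly_nextCoeff, hadj, hfin, CharTwo.neg_eq,
      minpoly_inv_nextCoeff hx]
  rw [psi_eq_psi_trace (F := k), map_add, ← Algebra.smul_def, map_smul, h1, h2, chi,
    if_neg (minpoly.coeff_zero_ne_zero hint hx), ← psi_natCast_mul]
  congr 1
  rw [smul_eq_mul]
  ring

open Classical in
lemma card_minpoly_fibre {P : k[X]} (hm : P.Monic) (hirr : Irreducible P)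
    (hd : P.natDegree ∣ Module.finrank k L) :
    #{x : L | minpoly k x = P} = P.natDegree := by
  have hcard : Fintype.card L = Nat.card k ^ Module.finrank k L := by
    rw [Nat.card_eq_fintype_card]; exact Module.card_eq_pow_finrank
  have hdvd := hirr.natDegree_dvd_iff_dvd_X_pow_card_pow_sub_X.1 hd
  have hsplit : (P.map (algebraMap k L)).Splits := by
    have h2 := (FiniteField.isSplittingField_sub L k).splits
    refine h2.of_dvd ?_ (map_dvd (algebraMap k L) (hcard ▸ hdvd))
    exact map_ne_zero (FiniteField.X_pow_card_sub_X_ne_zero _ Fintype.one_lt_card)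
  have hsep : P.Separable := PerfectField.separable_of_irreducible hirr
  have hroots := card_rootSet_eq_natDegree (K := L) hsep hsplit
  rw [← hroots, ← Set.toFinset_card]
  congr 1
  ext x
  simp only [mem_filter, mem_univ, true_and, Set.mem_toFinset, mem_rootSet]
  constructor
  · rintro rfl
    exact ⟨hm.ne_zero, minpoly.aeval k x⟩
  · rintro ⟨-, hx⟩
    exact (minpoly.eq_of_irreducible_of_monic hirr hx hm).symm

/-- The prime power sum of degree `[L : k]` is a Kloosterman sum over `L`. -/
lemma sum_nz_eq_primeSum (w : k) :
    ∑ x ∈ nz L, psi (x + algebraMap k L w * x⁻¹) = primeSum w (Module.finrank k L) := by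
  classical
  have hpos : 0 < Module.finrank k L := Module.finrank_pos
  set n := Module.finrank k L with hn
  have hdvd : ∀ x : L, (minpoly k x).natDegree ∣ n := fun x => minpoly.degree_dvd (.of_finite k x)
  rw [primeSum, ← Finset.sum_fiberwise_of_maps_to (s := nz L) (t := n.divisorsAntidiagonal)
    (g := fun x => ((minpoly k x).natDegree, n / (minpoly k x).natDegree))
    (fun x _ => Nat.mem_divisorsAntidiagonal.2 ⟨Nat.mul_div_cancel' (hdvd x), hpos.ne'⟩)]
  refine Finset.sum_congr rfl fun p hp => ?_
  obtain ⟨hde, -⟩ := Nat.mem_divisorsAntidiagonal.1 hp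
  have he : p.2 ≠ 0 := by rintro h; rw [h] at hde; omega
  have hd : 0 < p.1 := Nat.pos_of_ne_zero (by rintro h; rw [h] at hde; omega)
  rw [Finset.mul_sum, ← Finset.sum_fiberwise_of_maps_to (t := irreds k p.1)
    (g := fun x : L => minpoly k x)]
  · refine Finset.sum_congr rfl fun P hP => ?_
    obtain ⟨⟨hPm, hPd⟩, hirr⟩ := mem_irreds.1 hP
    have hterm : ∀ x ∈ {x ∈ {x ∈ nz L | ((minpoly k x).natDegree, n / (minpoly k x).natDegree) = p} |
        minpoly k x = P}, psi (x + algebraMap k L w * x⁻¹) = chi w P ^ p.2 := by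
      intro x hx
      simp only [mem_filter, mem_nz] at hx
      obtain ⟨⟨hx0, -⟩, hxP⟩ := hx
      rw [psi_eq_chi_minpoly w hx0 (e := p.2) (by rw [hxP, hPd, hde]), hxP]
    rw [Finset.sum_congr rfl hterm, Finset.sum_const, nsmul_eq_mul]
    by_cases h0 : P.coeff 0 = 0
    · simp [chi, h0, he]
    · congr 2
      rw [← hPd, ← card_minpoly_fibre (L := L) hPm hirr (by rw [hPd, ← hn, ← hde]; exact ⟨_, rfl⟩)]
      congr 1
      ext x
      simp only [mem_filter, mem_nz, mem_univ, true_and]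
      constructor
      · exact fun h => h.2
      · rintro rfl
        refine ⟨⟨?_, ?_⟩, rfl⟩
        · rintro rfl
          exact h0 ((minpoly.coeff_zero_eq_zero (.of_finite k (0 : L))).2 rfl)
        · rw [hPd, ← hde, Nat.mul_div_cancel_left _ hd]
  · intro x hx
    obtain ⟨hx0, hx⟩ := mem_filter.1 hx
    have hint : IsIntegral k x := .of_finite k x
    exact mem_irreds.2 ⟨⟨minpoly.monic hint, congrArg Prod.fst hx⟩, minpoly.irreducible hint⟩

end TowerSum

/-! ### Kloosterman sums at primitive cube roots of unity -/

section Quaternary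

/-- The integer sequence `2 ^ n τ_n`, started at `n = 0`. -/
def tseq : ℕ → ℤ
  | 0 => 2
  | 1 => 1
  | n + 2 => tseq (n + 1) - 4 * tseq n

lemma tseq_double (j : ℕ) : tseq (2 * j) = tseq j ^ 2 - 2 * 4 ^ j ∧
    tseq (2 * j + 1) = tseq j * tseq (j + 1) - 4 ^ j ∧
    tseq (j + 1) ^ 2 - tseq j * tseq (j + 1) + 4 * tseq j ^ 2 = 15 * 4 ^ j := by
  induction j with
  | zero => simp [tseq]
  | succ j ih =>
    obtain ⟨h1, h2, h3⟩ := ih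
    have e1 : tseq (2 * (j + 1)) = tseq (2 * j + 1) - 4 * tseq (2 * j) := rfl
    have e2 : tseq (2 * (j + 1) + 1) = tseq (2 * (j + 1)) - 4 * tseq (2 * j + 1) := rfl
    have e3 : tseq (j + 1 + 1) = tseq (j + 1) - 4 * tseq j := rfl
    rw [e2, e1, h1, h2, e3]
    refine ⟨?_, ?_, ?_⟩
    · linear_combination -h3
    · linear_combination -h3
    · linear_combination 4 * h3

variable {k : Type*} [Field k] [Fintype k] [CharP k 2]

lemma kl_omega (hk : Fintype.card k = 4) {w : k} (hw : w ^ 2 + w + 1 = 0) : kl w = -1 := by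
  classical
  have hw0 : w ≠ 0 := by rintro rfl; simp at hw
  have hw1 : w ≠ 1 := by rintro rfl; grind
  have hp : psi w = -1 := by
    refine (psi_cases w).resolve_left fun h => ?_
    obtain ⟨y, hy⟩ := (psi_eq_one_iff w).1 h
    have h4 := FiniteField.pow_card y
    rw [hk] at h4
    grind
  have hp1 : psi (1 : k) = 1 := by rw [psi_eq_one_iff]; exact ⟨w, by grind⟩
  have hnz : nz1 k = {w, 1 + w} := by
    symm
    apply Finset.eq_of_subset_of_card_le
    · intro x hx
      rw [mem_insert, mem_singleton] at hx
      rw [mem_nz1]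
      rcases hx with rfl | rfl
      · exact ⟨hw0, hw1⟩
      · constructor <;> grind
    · have := card_nz1 (F := k)
      rw [hk] at this
      rw [card_pair (by simp)]
      omega
  rw [kl, sum_nz_eq_nz1, hnz, Finset.sum_pair (by simp)]
  have h1' : 1 + w ≠ 0 := by grind
  have e1 : w + w * w⁻¹ = w + 1 := by rw [mul_inv_cancel₀ hw0]
  have e2 : 1 + w + w * (1 + w)⁻¹ = 0 := by field_simp; grind
  rw [e1, e2, inv_one, mul_one, psi_add, psi_add, hp, hp1, psi_zero]
  norm_num

lemma primeSum_omega (hk : Fintype.card k = 4) {w : k} (hw : w ^ 2 + w + 1 = 0) (n : ℕ) :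
    primeSum w (n + 1) = - tseq (n + 1) ∧ primeSum w (n + 2) = - tseq (n + 2) := by
  have hw0 : w ≠ 0 := by rintro rfl; simp at hw
  have c0 := lcoeff_zero w
  have c1 : lcoeff w 1 = -1 := by rw [lcoeff_one, kl_omega hk hw]
  have c2 : lcoeff w 2 = 4 := by rw [lcoeff_two hw0, hk]; rfl
  induction n with
  | zero =>
    have h1 := newton_identity w 1
    have h2 := newton_identity w 2
    simp [Finset.sum_Icc_succ_top, c0, c1, c2] at h1 h2
    simp only [tseq]
    constructor <;> linarith
  | succ n ih =>
    refine ⟨ih.2, ?_⟩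
    have h := newton_identity w (n + 3)
    rw [Finset.sum_Icc_succ_top (by omega), Finset.sum_Icc_succ_top (by omega),
      Finset.sum_Icc_succ_top (by omega), Finset.sum_eq_zero, lcoeff_eq_zero w (by omega)] at h
    · have e1 : n + 2 + 1 - (n + 1) = 2 := by omega
      have e2 : n + 2 + 1 - (n + 2) = 1 := by omega
      have e3 : n + 2 + 1 - (n + 2 + 1) = 0 := by omega
      have e4 : tseq (n + 1 + 2) = tseq (n + 2) - 4 * tseq (n + 1) := rfl
      rw [e4]
      simp only [show n + 3 = n + 2 + 1 from rfl, show n + 1 + 1 = n + 2 from rfl, e1, e2, e3, c0,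
        c1, c2, ih.1, ih.2] at h
      have e5 : primeSum w (n + 1 + 2) = primeSum w (n + 2 + 1) := rfl
      rw [e5]
      linarith
    · intro j hj
      rw [lcoeff_eq_zero w (by have := mem_Icc.1 hj; omega), mul_zero]

/-- The Kloosterman sum at a primitive cube root of unity over an extension of the field with
four elements. -/
lemma sum_nz_omega {L : Type*} [Field L] [Fintype L] [CharP L 2] [Algebra k L]
    (hk : Fintype.card k = 4) {w : k} (hw : w ^ 2 + w + 1 = 0) :
    kl (algebraMap k L w) = - tseq (Module.finrank k L) := by
  have h := sum_nz_eq_primeSum (L := L) w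
  have hpos : 0 < Module.finrank k L := Module.finrank_pos
  obtain ⟨n, hn⟩ := Nat.exists_eq_succ_of_ne_zero hpos.ne'
  rw [kl, h, hn]
  exact (primeSum_omega hk hw n).1

lemma cube_root_of_eq_one {R : Type*} [Field R] [CharP R 2] {w : R} (h : 1 = w ^ 2 + w) :
    w ^ 2 + w + 1 = 0 := by grind

lemma cube_root_add_one {R : Type*} [Field R] [CharP R 2] {w : R} (h : w ^ 2 + w + 1 = 0) :
    (w + 1) ^ 2 + (w + 1) + 1 = 0 := by grind

/-- If `L` has `4 ^ n` elements, its Kloosterman sum at a primitive cube root of unity is the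
`n`-th term of the recurrence, up to sign. -/
lemma kl_cube_root {L : Type*} [Field L] [Fintype L] [CharP L 2] {n : ℕ}
    (hL : Fintype.card L = 4 ^ n) {ζ : L} (hζ : ζ ^ 2 + ζ + 1 = 0) : kl ζ = - tseq n := by
  have : Fact (Nat.Prime 2) := ⟨Nat.prime_two⟩
  let _ : Algebra (ZMod 2) L := ZMod.algebra L 2
  let k := GaloisField 2 2
  let _ : Fintype k := Fintype.ofFinite k
  have hk : Fintype.card k = 4 := by
    rw [← Nat.card_eq_fintype_card, GaloisField.card 2 2 (by norm_num)]; norm_num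
  have hfin : Module.finrank (ZMod 2) L = 2 * n := by
    have h := Module.card_eq_pow_finrank (K := ZMod 2) (V := L)
    rw [hL, ZMod.card, show (4 : ℕ) = 2 ^ 2 from rfl, ← pow_mul] at h
    exact (Nat.pow_right_injective le_rfl h).symm
  obtain ⟨φ⟩ := FiniteField.nonempty_algHom_of_finrank_dvd (F := ZMod 2) (K := k) (L := L)
    (by rw [GaloisField.finrank 2 (by norm_num), hfin]; exact ⟨n, rfl⟩)
  let _ : Algebra k L := φ.toRingHom.toAlgebra
  have hfin' : Module.finrank k L = n := by
    have h := Module.card_eq_pow_finrank (K := k) (V := L)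
    rw [hL, hk] at h
    exact (Nat.pow_right_injective (by norm_num) h).symm
  have hone : psi (1 : k) = 1 := by rw [psi_one_eq (F := k) (m := 2) (by rw [hk]; norm_num)]; rfl
  obtain ⟨w, hw⟩ := (psi_eq_one_iff _).1 hone
  have hw' : w ^ 2 + w + 1 = 0 := cube_root_of_eq_one (by first | exact hw | exact hw.symm)
  have hwL : (algebraMap k L w) ^ 2 + algebraMap k L w + 1 = 0 := by
    rw [← map_pow, ← map_add, ← map_one (algebraMap k L), ← map_add, hw', map_zero]
  have hor : ζ = algebraMap k L w ∨ ζ = algebraMap k L (w + 1) := by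
    rw [map_add, map_one]
    have : (ζ + algebraMap k L w) * (ζ + algebraMap k L w + 1) = 0 := by grind
    rcases mul_eq_zero.1 this with h | h
    · left; grind
    · right; grind
  rcases hor with h | h
  · rw [h, sum_nz_omega hk hw', hfin']
  · rw [h, sum_nz_omega hk (cube_root_add_one hw'), hfin']

end Quaternary

/-! ### Quadratic extensions and the value of the twisted moment -/

section QuadraticExtension

variable {F : Type*} [Field F] [Fintype F] [CharP F 2]
variable {K : Type*} [Field K] [Fintype K] [CharP K 2] [Algebra F K]

/-- A generator `θ` of a quadratic extension, with `θ ^ 2 + θ = κ` and `ψ(κ) = -1`. -/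
structure IsGen (κ : F) (θ : K) : Prop where
  card : Fintype.card K = Fintype.card F ^ 2
  sq_add : θ ^ 2 + θ = algebraMap F K κ
  psi_neg : psi κ = -1

lemma IsGen.ne {κ : F} {θ : K} (h : IsGen κ θ) (a : F) : θ ≠ algebraMap F K a := by
  rintro rfl
  have h1 := h.sq_add
  rw [← map_pow, ← map_add] at h1
  have h2 := (algebraMap F K).injective h1
  have := h.psi_neg
  rw [← h2, psi_artinSchreier] at this
  omega

lemma IsGen.coord_inj {κ : F} {θ : K} (h : IsGen κ θ) {a b c d : F}
    (he : algebraMap F K a + algebraMap F K b * θ = algebraMap F K c + algebraMap F K d * θ) :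
    a = c ∧ b = d := by
  have hbd : b = d := by
    by_contra hne
    have hne' : algebraMap F K b - algebraMap F K d ≠ 0 := by
      rw [← map_sub]
      exact (map_ne_zero _).2 (sub_ne_zero.2 hne)
    refine h.ne ((c - a) / (b - d)) ?_
    rw [map_div₀, map_sub, map_sub]
    field_simp
    linear_combination he
  subst hbd
  exact ⟨(algebraMap F K).injective (add_right_cancel he), rfl⟩

lemma IsGen.coord_bijective {κ : F} {θ : K} (h : IsGen κ θ) :
    Function.Bijective (fun p : F × F => algebraMap F K p.1 + algebraMap F K p.2 * θ) := by
  rw [Fintype.bijective_iff_injective_and_card]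
  refine ⟨fun p r hpr => ?_, ?_⟩
  · have := h.coord_inj hpr
    exact Prod.ext this.1 this.2
  · rw [Fintype.card_prod, h.card, sq]

lemma IsGen.exists_coord {κ : F} {θ : K} (h : IsGen κ θ) (x : K) :
    ∃ a b : F, x = algebraMap F K a + algebraMap F K b * θ := by
  obtain ⟨p, hp⟩ := h.coord_bijective.2 x
  exact ⟨p.1, p.2, hp.symm⟩

lemma IsGen.sum_coord {κ : F} {θ : K} (h : IsGen κ θ) (f : K → ℤ) :
    ∑ x : K, f x = ∑ a : F, ∑ b : F, f (algebraMap F K a + algebraMap F K b * θ) := by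
  rw [← Fintype.sum_prod_type', ← h.coord_bijective.sum_comp]

/-- `ψ` on the quadratic extension is `ψ` of the trace, in coordinates. -/
lemma IsGen.psi_coord {κ : F} {θ : K} (h : IsGen κ θ) (a b : F) :
    psi (algebraMap F K a + algebraMap F K b * θ) = psi b := by
  have key : psi (algebraMap F K a + algebraMap F K b * θ) = 1 ↔
      psi b = 1 := by
    rw [psi_eq_one_iff, psi_eq_one_iff]
    constructor
    · rintro ⟨y, hy⟩
      obtain ⟨c, d, rfl⟩ := h.exists_coord y
      have h2 : algebraMap F K (c ^ 2 + c + d ^ 2 * κ) + algebraMap F K (d ^ 2 + d) * θ =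
          algebraMap F K a + algebraMap F K b * θ := by
        rw [← hy]
        simp only [map_add, map_mul, map_pow, ← h.sq_add]
        grind
      exact ⟨d, (h.coord_inj h2).2⟩
    · rintro ⟨d, rfl⟩
      -- the two choices of `d` differ by one, which changes `ψ (a + d ^ 2 κ)` by `ψ κ = -1`
      obtain ⟨d', hd', h1⟩ : ∃ d' : F, d' ^ 2 + d' = d ^ 2 + d ∧
          psi (a + d' ^ 2 * κ) = 1 := by
        rcases psi_cases (a + d ^ 2 * κ) with h1 | h1
        · exact ⟨d, rfl, h1⟩
        · refine ⟨d + 1, by grind, ?_⟩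
          rw [show a + (d + 1) ^ 2 * κ = (a + d ^ 2 * κ) + κ by grind, psi_add, h1, h.psi_neg]
          norm_num
      obtain ⟨c, hc⟩ := (psi_eq_one_iff _).1 h1
      refine ⟨algebraMap F K c + algebraMap F K d' * θ, ?_⟩
      have ha : a = c ^ 2 + c + d' ^ 2 * κ := by grind
      rw [ha, ← hd']
      simp only [map_add, map_mul, map_pow, ← h.sq_add]
      grind
  rcases psi_cases (algebraMap F K a + algebraMap F K b * θ) with h1 | h1 <;>
    rcases psi_cases b with h2 | h2 <;> rw [h1, h2] at key ⊢ <;> simp at key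

lemma IsGen.pow_card {κ : F} {θ : K} (h : IsGen κ θ) : θ ^ Fintype.card F = θ + 1 := by
  have hfrob : ∀ x y : K, (x + y) ^ Fintype.card F = x ^ Fintype.card F + y ^ Fintype.card F := by
    obtain ⟨n, hp, hn⟩ := FiniteField.card F 2
    have : Fact (Nat.Prime 2) := ⟨hp⟩
    intro x y
    rw [hn]
    exact add_pow_char_pow x y 2 n
  have hF : ∀ a : F, (algebraMap F K a) ^ Fintype.card F = algebraMap F K a := fun a => by
    rw [← map_pow, FiniteField.pow_card]
  have h1 : (θ ^ Fintype.card F) ^ 2 + θ ^ Fintype.card F = θ ^ 2 + θ := by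
    have h2 := congrArg (· ^ Fintype.card F) h.sq_add
    simp only [hfrob, hF] at h2
    rw [h.sq_add, ← h2, ← pow_mul, ← pow_mul, mul_comm]
  have h3 : (θ ^ Fintype.card F + θ) * (θ ^ Fintype.card F + θ + 1) = 0 := by grind
  rcases mul_eq_zero.1 h3 with h4 | h4
  · exfalso
    have h5 : θ ^ Fintype.card F = θ := by grind
    -- then every element is fixed by the Frobenius, which has too few fixed points
    have hall : ∀ x : K, x ^ Fintype.card F = x := by
      intro x
      obtain ⟨a, b, rfl⟩ := h.exists_coord x
      rw [hfrob, mul_pow, hF, hF, h5]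
    have hq : 1 < Fintype.card F := Fintype.one_lt_card
    have hle : Fintype.card K ≤ Fintype.card F := by
      have := (Polynomial.card_roots' (Polynomial.X ^ Fintype.card F - Polynomial.X : Polynomial K))
      rw [FiniteField.X_pow_card_sub_X_natDegree_eq K hq] at this
      refine le_trans ?_ this
      classical
      rw [← Finset.card_univ]
      refine (Finset.card_le_card ?_).trans (Multiset.toFinset_card_le _)
      intro x _
      rw [Multiset.mem_toFinset, Polynomial.mem_roots (FiniteField.X_pow_card_sub_X_ne_zero K hq)]
      simp [hall x]
    rw [h.card, sq] at hle
    nlinarith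
  · grind

lemma IsGen.norm_ne {κ : F} {θ : K} (h : IsGen κ θ) {a b : F} (hab : (a, b) ≠ 0) :
    a ^ 2 + a * b + κ * b ^ 2 ≠ 0 := by
  intro h0
  rcases eq_or_ne b 0 with rfl | hb
  · have : a = 0 := by simpa using h0
    exact hab (by simp [this])
  · have h1 : κ = (a / b) ^ 2 + a / b := by field_simp; grind
    have := h.psi_neg
    rw [h1, psi_artinSchreier] at this
    omega

/-- The twisted moment over a field with `2 ^ m` elements, `m` odd: the quadratic form is
the norm form of the quadratic extension `K`, and the sum is a Kloosterman sum over `K`. -/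
lemma moment_odd {m : ℕ} (hF : Fintype.card F = 2 ^ m) (hK : Fintype.card K = 4 ^ m)
    (hm : ¬ Even m) : moment F = tseq m := by
  have hp : psi (1 : F) = -1 := by
    rw [psi_one_eq hF, Odd.neg_one_pow (Nat.not_even_iff_odd.1 hm)]
  have hpK : psi (1 : K) = 1 := by
    rw [psi_one_eq (m := 2 * m) (by rw [hK, pow_mul]; norm_num), pow_mul]; simp
  obtain ⟨θ, hθ⟩ := (psi_eq_one_iff _).1 hpK
  have hg : IsGen (1 : F) θ := ⟨by rw [hK, hF, ← pow_mul, mul_comm, pow_mul]; norm_num,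
    by rw [hθ, map_one], hp⟩
  have hz := sum_quadratic_form (F := F)
  have hkl := kl_cube_root hK (cube_root_of_eq_one hθ.symm)
  rw [kl] at hkl
  classical
  have h1 : ∑ x ∈ nz K, psi (x + θ * x⁻¹) = ∑ x : K, if x = 0 then 0 else psi (x + θ * x⁻¹) := by
    rw [sum_eq_nz, if_pos rfl, zero_add]
    exact Finset.sum_congr rfl fun x hx => by rw [if_neg (mem_nz.1 hx)]
  rw [h1, hg.sum_coord] at hkl
  have h2 : ∀ a b : F, (if algebraMap F K a + algebraMap F K b * θ = 0 then 0 else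
      psi (algebraMap F K a + algebraMap F K b * θ +
        θ * (algebraMap F K a + algebraMap F K b * θ)⁻¹)) =
      if a ^ 2 + a * b + b ^ 2 = 0 then 0 else psi (b + a * (a ^ 2 + a * b + b ^ 2)⁻¹) := by
    intro a b
    by_cases h0 : (a, b) = 0
    · simp only [Prod.mk_eq_zero] at h0
      simp [h0.1, h0.2]
    · have hn := hg.norm_ne h0
      rw [one_mul] at hn
      have hx : algebraMap F K a + algebraMap F K b * θ ≠ 0 := by
        intro hx
        have := hg.coord_inj (c := 0) (d := 0) (by rw [hx]; simp)
        exact h0 (by simp [this.1, this.2])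
      rw [if_neg hx, if_neg hn, ← hg.psi_coord (a + b * (a ^ 2 + a * b + b ^ 2)⁻¹)]
      congr 1
      have hnK := (map_ne_zero (algebraMap F K)).2 hn
      simp only [map_add, map_mul, map_pow, map_inv₀] at hnK ⊢
      have hθ' : θ ^ 2 + θ = 1 := hθ
      generalize algebraMap F K a = a' at *
      generalize algebraMap F K b = b' at *
      clear h1 hkl hz hg hp hpK
      field_simp
      grind
  simp only [h2] at hkl
  rw [hz, hp] at hkl
  linarith

/-- The twisted moment over a field with `2 ^ m` elements, `m` even: the quadratic form
splits, and the sum is a product of two Kloosterman sums over `F`. -/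
lemma moment_even {m : ℕ} (hF : Fintype.card F = 2 ^ m) (hm : Even m) :
    moment F = tseq m + 2 * 2 ^ m := by
  obtain ⟨j, rfl⟩ := hm
  rw [← two_mul] at *
  have hF' : Fintype.card F = 4 ^ j := by rw [hF, pow_mul]; norm_num
  have hp : psi (1 : F) = 1 := by rw [psi_one_eq hF, pow_mul]; simp
  obtain ⟨w, hw⟩ := (psi_eq_one_iff _).1 hp
  have hw1 := cube_root_of_eq_one hw.symm
  have hw2 := cube_root_add_one hw1
  have hz := sum_quadratic_form (F := F)
  classical
  have hprod : kl w * kl (w + 1) = ∑ x : F, ∑ y : F, if x = 0 ∨ y = 0 then 0 else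
      psi (x + w * x⁻¹ + (y + (w + 1) * y⁻¹)) := by
    rw [kl, kl, Finset.sum_mul_sum, sum_eq_nz]
    simp only [true_or, if_true, Finset.sum_const_zero, zero_add]
    refine Finset.sum_congr rfl fun x hx => ?_
    rw [sum_eq_nz]
    simp only [or_true, if_true, zero_add]
    refine Finset.sum_congr rfl fun y hy => ?_
    rw [if_neg (by simp [mem_nz.1 hx, mem_nz.1 hy]), ← psi_add]
  have hsum : ∑ x : F, ∑ y : F, (if x = 0 ∨ y = 0 then 0 else
      psi (x + w * x⁻¹ + (y + (w + 1) * y⁻¹))) = ∑ a : F, ∑ b : F,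
      (if a ^ 2 + a * b + b ^ 2 = 0 then 0 else psi (b + a * (a ^ 2 + a * b + b ^ 2)⁻¹)) := by
    rw [← Fintype.sum_prod_type', ← Fintype.sum_prod_type']
    symm
    refine Finset.sum_nbij' (fun p => (p.1 + p.2 * w, p.1 + p.2 * (w + 1)))
      (fun p => (p.1 + (p.1 + p.2) * w, p.1 + p.2)) (by simp) (by simp) ?_ ?_ ?_
    · rintro ⟨a, b⟩ -
      simp only [Prod.mk.injEq]
      constructor <;> grind
    · rintro ⟨a, b⟩ -
      simp only [Prod.mk.injEq]
      constructor <;> grind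
    · rintro ⟨a, b⟩ -
      have hfac : a ^ 2 + a * b + b ^ 2 = (a + b * w) * (a + b * (w + 1)) := by
        clear hz hprod; grind
      simp only [hfac, mul_eq_zero]
      split_ifs with h
      · rfl
      · congr 1
        rw [not_or] at h
        obtain ⟨h1, h2⟩ := h
        clear hz hprod hfac
        field_simp
        grind
  rw [hsum, hz, kl_cube_root hF' hw1, kl_cube_root hF' hw2, hp] at hprod
  rw [(tseq_double j).1, pow_mul]
  norm_num
  linarith

end QuadraticExtension

/-! ### The unit circle of a quadratic extension -/

section UnitCircle

variable {F : Type*} [Field F] [Fintype F] [CharP F 2]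
variable {K : Type*} [Field K] [Fintype K] [CharP K 2]

/-- The unit circle of an involution `σ` of a finite field: the elements of norm one. -/
noncomputable def circ (σ : K →+* K) : Finset K := by
  classical exact {v : K | v * σ v = 1}

@[simp] lemma mem_circ {σ : K →+* K} {v : K} : v ∈ circ σ ↔ v * σ v = 1 := by
  classical simp [circ]

variable [Algebra F K]

/-- Over a nonzero `b`, the norm form `a ^ 2 + a b + κ b ^ 2` takes the value `n` for
`1 - ψ(n / b ^ 2)` values of `a`. -/
lemma sum_norm_form {κ : F} (hκ : psi κ = -1) {b : F} (hb : b ≠ 0) (g : F → ℤ) :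
    ∑ a : F, g (a ^ 2 + a * b + κ * b ^ 2) = ∑ n : F, (1 - psi (n / b ^ 2)) * g n := by
  have h1 : ∑ a : F, g (a ^ 2 + a * b + κ * b ^ 2) =
      ∑ y : F, g (b ^ 2 * ((y ^ 2 + y) + κ)) := by
    rw [← Equiv.sum_comp (Equiv.mulLeft₀ b hb)]
    refine Finset.sum_congr rfl fun y _ => ?_
    rw [Equiv.mulLeft₀_apply]
    congr 1
    ring
  rw [h1, sum_artinSchreier_comp (fun e => g (b ^ 2 * (e + κ))),
    ← Equiv.sum_comp (Equiv.mulLeft₀ (b ^ 2) (pow_ne_zero 2 hb))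
      (fun n => (1 - psi (n / b ^ 2)) * g n),
    ← Equiv.sum_comp (Equiv.addRight κ)
      (fun e => (1 - psi (Equiv.mulLeft₀ (b ^ 2) (pow_ne_zero 2 hb) e / b ^ 2)) * _)]
  refine (Finset.sum_congr rfl fun e _ => ?_)
  simp only [Equiv.mulLeft₀_apply, Equiv.coe_addRight]
  rw [mul_div_cancel_left₀ _ (pow_ne_zero 2 hb), psi_add, hκ]
  ring

lemma sum_norm_form_zero {κ : F} (g : F → ℤ) :
    ∑ a : F, g (a ^ 2 + a * 0 + κ * 0 ^ 2) = ∑ n : F, g n := by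
  rw [← sum_sq_comp g]
  simp

lemma sum_nz_psi_div_sq (n : F) :
    ∑ b ∈ nz F, psi (n / b ^ 2) = ∑ b ∈ nz F, psi (n * b) := by
  rw [← sum_nz_inv (fun b => psi (n * b)), ← sum_nz_sq (fun b => psi (n * b⁻¹))]
  simp only [div_eq_mul_inv]

/-- The sum of `ψ(1 / N(s))` over the quadratic extension. -/
lemma sum_psi_inv_norm {κ : F} (hκ : psi κ = -1) :
    ∑ a : F, ∑ b : F, psi (a ^ 2 + a * b + κ * b ^ 2)⁻¹ = - Fintype.card F := by
  rw [Finset.sum_comm, sum_eq_nz, sum_norm_form_zero (fun n => psi n⁻¹), sum_psi_inv, zero_add]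
  have h1 : ∀ b ∈ nz F, ∑ a : F, psi (a ^ 2 + a * b + κ * b ^ 2)⁻¹ =
      - ∑ n : F, psi (n / b ^ 2) * psi n⁻¹ := by
    intro b hb
    rw [sum_norm_form hκ (mem_nz.1 hb) (fun n => psi n⁻¹)]
    simp only [sub_mul, one_mul, Finset.sum_sub_distrib, sum_psi_inv, zero_sub]
  rw [Finset.sum_congr rfl h1, Finset.sum_neg_distrib, Finset.sum_comm]
  simp only [← Finset.sum_mul, sum_nz_psi_div_sq]
  rw [sum_eq_nz]
  have h2 : ∀ n ∈ nz F, (∑ b ∈ nz F, psi (n * b)) * psi n⁻¹ = - psi n⁻¹ := by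
    intro n hn
    rw [sum_nz_psi_mul (mem_nz.1 hn)]
    ring
  rw [Finset.sum_congr rfl h2, Finset.sum_neg_distrib, sum_nz_psi_inv]
  simp [card_nz]

/-- The correlation of `ψ(1 / N(s))` with its shift by one. -/
lemma sum_psi_inv_norm_shift {κ : F} (hκ : psi κ = -1) :
    ∑ a : F, ∑ b : F, psi (a ^ 2 + a * b + κ * b ^ 2)⁻¹ *
      psi (1 + (a ^ 2 + a * b + κ * b ^ 2) + b)⁻¹ =
    - (1 - Fintype.card F - 2 * psi (1 : F) + Fintype.card F * psi (1 : F) + moment F) := by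
  rw [← sum_norm_trace, Finset.sum_comm, sum_eq_nz,
    sum_norm_form_zero (fun n => psi n⁻¹ * psi (1 + n + 0)⁻¹)]
  have h1 : ∀ b ∈ nz F, ∑ a : F, psi (a ^ 2 + a * b + κ * b ^ 2)⁻¹ *
      psi (1 + (a ^ 2 + a * b + κ * b ^ 2) + b)⁻¹ =
      ∑ n : F, psi n⁻¹ * psi (1 + n + b)⁻¹ -
        ∑ n : F, psi (n / b ^ 2 + n⁻¹ + (1 + n + b)⁻¹) := by
    intro b hb
    rw [sum_norm_form hκ (mem_nz.1 hb) (fun n => psi n⁻¹ * psi (1 + n + b)⁻¹)]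
    simp only [sub_mul, one_mul, Finset.sum_sub_distrib, psi_add, mul_assoc]
  rw [Finset.sum_congr rfl h1, Finset.sum_sub_distrib, ← add_sub_assoc,
    ← sum_eq_nz (fun b => ∑ n : F, psi n⁻¹ * psi (1 + n + b)⁻¹), Finset.sum_comm]
  have h2 : ∀ n : F, ∑ b : F, psi n⁻¹ * psi (1 + n + b)⁻¹ = 0 := by
    intro n
    have h3 := Equiv.sum_comp (Equiv.addLeft (1 + n)) (fun b => psi b⁻¹)
    simp only [Equiv.coe_addLeft, sum_psi_inv] at h3
    rw [← Finset.mul_sum, h3, mul_zero]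
  simp [h2]

/-- A generator and the conjugation of a quadratic extension. -/
structure IsConj (κ : F) (θ : K) (σ : K →+* K) : Prop extends IsGen κ θ where
  map_base : ∀ a : F, σ (algebraMap F K a) = algebraMap F K a
  map_gen : σ θ = θ + 1

variable {κ : F} {θ : K} {σ : K →+* K}

lemma IsConj.map_coord (h : IsConj κ θ σ) (a b : F) :
    σ (algebraMap F K a + algebraMap F K b * θ) =
      algebraMap F K (a + b) + algebraMap F K b * θ := by
  rw [map_add, map_mul, h.map_base, h.map_base, h.map_gen, map_add]
  ring

lemma IsConj.norm_coord (h : IsConj κ θ σ) (a b : F) :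
    (algebraMap F K a + algebraMap F K b * θ) * σ (algebraMap F K a + algebraMap F K b * θ) =
      algebraMap F K (a ^ 2 + a * b + κ * b ^ 2) := by
  rw [h.map_coord]
  simp only [map_add, map_mul, map_pow, ← h.sq_add]
  grind

lemma IsConj.mem_circ_coord (h : IsConj κ θ σ) (a b : F) :
    algebraMap F K a + algebraMap F K b * θ ∈ circ σ ↔ a ^ 2 + a * b + κ * b ^ 2 = 1 := by
  rw [mem_circ, h.norm_coord, ← map_one (algebraMap F K)]
  exact (algebraMap F K).injective.eq_iff

lemma IsConj.card_circ (h : IsConj κ θ σ) : (#(circ σ) : ℤ) = Fintype.card F + 1 := by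
  classical
  have h1 : (#(circ σ) : ℤ) = ∑ x : K, if x ∈ circ σ then 1 else 0 := by simp [circ]
  rw [h1, h.sum_coord]
  simp only [h.mem_circ_coord]
  rw [Finset.sum_comm, sum_eq_nz, sum_norm_form_zero (fun n => if n = 1 then (1 : ℤ) else 0)]
  have h2 : ∀ b ∈ nz F, ∑ a : F, (if a ^ 2 + a * b + κ * b ^ 2 = 1 then (1 : ℤ) else 0) =
      1 - psi (1 / b ^ 2) := by
    intro b hb
    rw [sum_norm_form h.psi_neg (mem_nz.1 hb) (fun n => if n = 1 then (1 : ℤ) else 0)]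
    simp
  rw [Finset.sum_congr rfl h2, Finset.sum_sub_distrib, sum_nz_psi_div_sq]
  simp [card_nz, sum_nz_psi]
  ring

open Classical in
/-- The number of ways to write a nonzero `s` as a sum of two elements of the circle. -/
lemma IsConj.sum_circ_shift (h : IsConj κ θ σ) {a b : F} (hab : (a, b) ≠ 0) :
    ∑ v ∈ circ σ, (if algebraMap F K a + algebraMap F K b * θ + v ∈ circ σ then (1 : ℤ) else 0) =
      1 - psi (a ^ 2 + a * b + κ * b ^ 2)⁻¹ := by
  set s := algebraMap F K a + algebraMap F K b * θ with hs
  set n := a ^ 2 + a * b + κ * b ^ 2 with hn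
  have hn0 : n ≠ 0 := h.norm_ne hab
  have hsn : s * σ s = algebraMap F K n := h.norm_coord a b
  have hn0' : algebraMap F K n ≠ 0 := (map_ne_zero _).2 hn0
  have hs0 : s ≠ 0 := by rintro h0; rw [h0] at hsn; rw [zero_mul] at hsn; exact hn0' hsn.symm
  have hcard := card_artinSchreier (n⁻¹ + κ)
  rw [psi_add, h.psi_neg] at hcard
  rw [Finset.sum_boole, show (1 : ℤ) - psi n⁻¹ = 1 + psi n⁻¹ * -1 by ring, ← hcard]
  norm_cast
  symm
  have hmem : ∀ c d : F, s * (algebraMap F K c + algebraMap F K d * θ) ∈ circ σ ↔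
      n * (c ^ 2 + c * d + κ * d ^ 2) = 1 := by
    intro c d
    rw [mem_circ, map_mul, mul_mul_mul_comm, hsn, h.norm_coord, ← map_mul,
      ← map_one (algebraMap F K)]
    exact (algebraMap F K).injective.eq_iff
  have hshift : ∀ c d : F, s + s * (algebraMap F K c + algebraMap F K d * θ) =
      s * (algebraMap F K (c + 1) + algebraMap F K d * θ) := by
    intro c d
    rw [map_add, map_one]
    ring
  refine Finset.card_bij (fun c _ => s * (algebraMap F K c + algebraMap F K 1 * θ)) ?_ ?_ ?_
  · intro c hc
    have hc' : c ^ 2 + c = n⁻¹ + κ := by simpa using hc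
    rw [Finset.mem_filter, hshift, hmem, hmem]
    constructor
    · have : c ^ 2 + c * 1 + κ * 1 ^ 2 = n⁻¹ := by grind
      rw [this, mul_inv_cancel₀ hn0]
    · have : (c + 1) ^ 2 + (c + 1) * 1 + κ * 1 ^ 2 = n⁻¹ := by grind
      rw [this, mul_inv_cancel₀ hn0]
  · intro c _ d _ hcd
    exact (h.coord_inj (mul_left_cancel₀ hs0 hcd)).1
  · intro v hv
    obtain ⟨c, d, hcd⟩ := h.exists_coord (v / s)
    have hv' : v = s * (algebraMap F K c + algebraMap F K d * θ) := by
      rw [← hcd, mul_div_cancel₀ _ hs0]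
    rw [hv', Finset.mem_filter, hshift, hmem, hmem] at hv
    have hd : d = 1 := by
      have h1 : n * (d + 1) = 0 := by grind
      rcases mul_eq_zero.1 h1 with h2 | h2
      · exact absurd h2 hn0
      · grind
    subst hd
    refine ⟨c, ?_, hv'.symm⟩
    have h2 : c ^ 2 + c * 1 + κ * 1 ^ 2 = n⁻¹ := eq_inv_of_mul_eq_one_right hv.1
    simp only [Finset.mem_filter, Finset.mem_univ, true_and]
    grind

/-- Pairs of elements of the circle, sorted by their sum. -/
lemma sum_circ_pair (g : K → ℤ) :
    ∑ u ∈ circ σ, ∑ v ∈ circ σ, g (u + v) =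
      ∑ s : K, (by classical exact ∑ v ∈ circ σ, if s + v ∈ circ σ then (1 : ℤ) else 0) * g s := by
  classical
  simp only [Finset.sum_mul]
  rw [Finset.sum_comm (s := (univ : Finset K))]
  refine Finset.sum_congr rfl fun u _ => ?_
  have h1 : ∑ v ∈ circ σ, g (u + v) = ∑ v : K, if v ∈ circ σ then g (u + v) else 0 := by
    rw [← Finset.sum_filter, Finset.filter_mem_eq_inter, Finset.univ_inter]
  rw [h1, ← Equiv.sum_comp (Equiv.addRight u)]
  refine Finset.sum_congr rfl fun s _ => ?_
  rw [Equiv.coe_addRight, show u + (s + u) = s by grind]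
  split_ifs <;> simp

open Classical in
/-- The number of solutions of `1 + v₁ + v₂ + v₃ = v₄` on the circle. -/
lemma IsConj.sum_circ_quad (h : IsConj κ θ σ) :
    ∑ u ∈ circ σ, ∑ v ∈ circ σ, ∑ w ∈ circ σ,
      (if 1 + u + v + w ∈ circ σ then (1 : ℤ) else 0) =
    (Fintype.card F : ℤ) ^ 2 + 5 * Fintype.card F + 1
      - 3 * psi (1 : F) * Fintype.card F - moment F := by
  set n : K → ℤ := fun s => ∑ v ∈ circ σ, if s + v ∈ circ σ then (1 : ℤ) else 0 with hn
  have h0 : n 0 = Fintype.card F + 1 := by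
    rw [← h.card_circ, hn]
    simp only [zero_add]
    rw [Finset.sum_congr rfl (g := fun _ => (1 : ℤ)) (fun v hv => if_pos hv)]
    simp
  have hns : ∀ a b : F, (a, b) ≠ 0 → n (algebraMap F K a + algebraMap F K b * θ) =
      1 - psi (a ^ 2 + a * b + κ * b ^ 2)⁻¹ := fun a b hab => h.sum_circ_shift hab
  have h1 : n 1 = 1 - psi (1 : F) := by
    have := hns 1 0 (by simp)
    simpa using this
  have hstep : ∑ u ∈ circ σ, ∑ v ∈ circ σ, ∑ w ∈ circ σ,
      (if 1 + u + v + w ∈ circ σ then (1 : ℤ) else 0) = ∑ s : K, n s * n (1 + s) := by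
    have := sum_circ_pair (σ := σ) (fun s => n (1 + s))
    rw [hn] at this ⊢
    convert this using 2
    simp only [add_assoc]
  -- subtracting the values at `s = 0, 1` makes the product uniform in `s`
  set g : F → F → ℤ := fun a b => (1 - psi (a ^ 2 + a * b + κ * b ^ 2)⁻¹) *
    (1 - psi (1 + (a ^ 2 + a * b + κ * b ^ 2) + b)⁻¹) with hg
  have hpt : ∀ a b : F, n (algebraMap F K a + algebraMap F K b * θ) *
      n (1 + (algebraMap F K a + algebraMap F K b * θ)) = g a b +
      (if b = 0 then (if a = 0 then ((Fintype.card F : ℤ) + 1) * (1 - psi (1 : F)) else 0) +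
        (if a = 1 then ((Fintype.card F : ℤ) + 1) * (1 - psi (1 : F)) else 0) else 0) := by
    intro a b
    by_cases hA : (a, b) = 0
    · simp only [Prod.mk_eq_zero] at hA
      obtain ⟨rfl, rfl⟩ := hA
      simp [hg, h0, h1]
    by_cases hB : (a + 1, b) = 0
    · simp only [Prod.mk_eq_zero] at hB
      obtain ⟨hB, rfl⟩ := hB
      have ha : a = 1 := by grind
      subst ha
      have e : (1 : K) + (algebraMap F K 1 + algebraMap F K 0 * θ) = 0 := by
        simp [CharTwo.add_self_eq_zero]
      rw [e, h0]
      simp [hg, h1, CharTwo.add_self_eq_zero]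
      ring
    · have e : (1 : K) + (algebraMap F K a + algebraMap F K b * θ) =
          algebraMap F K (a + 1) + algebraMap F K b * θ := by
        rw [map_add, map_one]; ring
      rw [e, hns a b hA, hns (a + 1) b hB, hg]
      have e2 : (a + 1) ^ 2 + (a + 1) * b + κ * b ^ 2 =
          1 + (a ^ 2 + a * b + κ * b ^ 2) + b := by grind
      rw [e2]
      have hz : (if b = 0 then (if a = 0 then ((Fintype.card F : ℤ) + 1) * (1 - psi (1 : F)) else 0)
        + (if a = 1 then ((Fintype.card F : ℤ) + 1) * (1 - psi (1 : F)) else 0) else 0) = 0 := by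
        split_ifs with hb ha ha' ha'
        · exact absurd (by simp [ha, hb]) hA
        · exact absurd (by simp [ha, hb]) hA
        · exact absurd (by simp [ha', hb, CharTwo.add_self_eq_zero]) hB
        · rfl
        · rfl
      rw [hz, add_zero]
  have hgsum : ∑ a : F, ∑ b : F, g a b = (Fintype.card F : ℤ) ^ 2 + 2 * Fintype.card F
      - (1 - Fintype.card F - 2 * psi (1 : F) + Fintype.card F * psi (1 : F) + moment F) := by
    have e : ∀ a b : F, g a b = 1 - psi (a ^ 2 + a * b + κ * b ^ 2)⁻¹
        - psi (1 + (a ^ 2 + a * b + κ * b ^ 2) + b)⁻¹ +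
        psi (a ^ 2 + a * b + κ * b ^ 2)⁻¹ *
        psi (1 + (a ^ 2 + a * b + κ * b ^ 2) + b)⁻¹ := fun a b => by rw [hg]; ring
    have e2 : ∑ a : F, ∑ b : F, psi (1 + (a ^ 2 + a * b + κ * b ^ 2) + b)⁻¹ =
        - Fintype.card F := by
      rw [← sum_psi_inv_norm h.psi_neg, ← Equiv.sum_comp (Equiv.addRight (1 : F))]
      refine Finset.sum_congr rfl fun a _ => Finset.sum_congr rfl fun b _ => ?_
      rw [Equiv.coe_addRight]
      congr 2
      grind
    simp only [e, Finset.sum_add_distrib, Finset.sum_sub_distrib, sum_psi_inv_norm h.psi_neg, e2,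
      sum_psi_inv_norm_shift h.psi_neg]
    simp
    ring
  rw [hstep, h.sum_coord]
  simp only [hpt, Finset.sum_add_distrib, hgsum]
  simp [Finset.sum_add_distrib]
  ring

end UnitCircle

/-! ### The normalised system and its degenerate solutions -/

section Solutions

variable {K : Type*} [Field K] [CharP K 2] {σ : K →+* K}

/-- The power `x ^ (3 q - 2)` written through the conjugation `σ x = x ^ q`. -/
def nihoPow (σ : K →+* K) (x : K) : K := σ x ^ 3 / x ^ 2

/-- The ratio `σ x / x`, an element of the unit circle when `x ≠ 0`. -/
def ratio (σ : K →+* K) (x : K) : K := σ x / x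

/-- The normalised system: `x + y + z = 1` and the same for the power `3 q - 2`. -/
structure IsSol (σ : K →+* K) (x y z : K) : Prop where
  hx : x ≠ 0
  hy : y ≠ 0
  hz : z ≠ 0
  lin : x + y + z = 1
  pow : nihoPow σ x + nihoPow σ y + nihoPow σ z = 1

lemma IsSol.swap12 {x y z : K} (h : IsSol σ x y z) : IsSol σ y x z :=
  ⟨h.hy, h.hx, h.hz, by rw [add_comm y x]; exact h.lin,
    by rw [add_comm (nihoPow σ y)]; exact h.pow⟩

lemma IsSol.swap23 {x y z : K} (h : IsSol σ x y z) : IsSol σ x z y :=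
  ⟨h.hx, h.hz, h.hy, by rw [add_right_comm]; exact h.lin,
    by rw [add_right_comm]; exact h.pow⟩

lemma map_eq_ratio_mul {x : K} (hx : x ≠ 0) : σ x = ratio σ x * x := by
  rw [ratio, div_mul_cancel₀ _ hx]

lemma nihoPow_eq {x : K} (hx : x ≠ 0) : nihoPow σ x = x * ratio σ x ^ 3 := by
  rw [nihoPow, ratio]
  field_simp

lemma ratio_eq_one_iff {x : K} (hx : x ≠ 0) : ratio σ x = 1 ↔ σ x = x := by
  rw [ratio, div_eq_one_iff_eq hx]

lemma ratio_eq_of {x v : K} (hx : x ≠ 0) (h : σ x = v * x) : ratio σ x = v := by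
  rw [ratio, h, mul_div_cancel_right₀ _ hx]

lemma ratio_ne_zero {x : K} (hx : x ≠ 0) : ratio σ x ≠ 0 :=
  div_ne_zero ((map_ne_zero σ).2 hx) hx

lemma ratio_mem (hσ : ∀ x, σ (σ x) = x) {x : K} (hx : x ≠ 0) :
    ratio σ x * σ (ratio σ x) = 1 := by
  have : σ x ≠ 0 := (map_ne_zero σ).2 hx
  rw [ratio, map_div₀, hσ]
  field_simp

lemma ratio_mul_fixed {x a : K} (hx : x ≠ 0) (ha : a ≠ 0) (h : σ a = a) :
    ratio σ (x * a) = ratio σ x := by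
  rw [ratio, ratio, map_mul, h]
  field_simp

/-- For `v` on the circle, `1 + v` is on the circle exactly when `v` is a primitive cube root
of unity. -/
lemma one_add_mem_iff {v : K} (hv : v * σ v = 1) :
    (1 + v) * σ (1 + v) = 1 ↔ v ^ 2 + v + 1 = 0 := by
  have hv0 : v ≠ 0 := left_ne_zero_of_mul_eq_one hv
  have hσv : σ v = v⁻¹ := eq_inv_of_mul_eq_one_right hv
  rw [map_add, map_one, hσv]
  constructor
  · intro h
    field_simp at h
    grind
  · intro h
    field_simp
    grind

/-- Elements on the circle that are primitive cube roots of unity. -/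
def IsOm (σ : K →+* K) (w : K) : Prop := w * σ w = 1 ∧ w ^ 2 + w + 1 = 0

lemma IsOm.map {w : K} (h : IsOm σ w) : σ w = w + 1 := by
  have h1 := h.1
  have h2 := h.2
  have hw0 : w ≠ 0 := left_ne_zero_of_mul_eq_one h1
  apply mul_left_cancel₀ hw0
  rw [h1]
  grind

lemma IsOm.ne_zero {w : K} (h : IsOm σ w) : w ≠ 0 := left_ne_zero_of_mul_eq_one h.1

lemma IsOm.add_one_ne_zero {w : K} (h : IsOm σ w) : w + 1 ≠ 0 := by
  rw [← h.map]
  exact (map_ne_zero σ).2 h.ne_zero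

lemma IsOm.ratio {w : K} (h : IsOm σ w) : ratio σ w = w := by
  have h2 := h.2
  exact ratio_eq_of h.ne_zero (by rw [h.map]; grind)

lemma IsOm.ratio' {w : K} (h : IsOm σ w) : NihoCount.ratio σ (w + 1) = w + 1 := by
  have h2 := h.2
  exact ratio_eq_of h.add_one_ne_zero (by rw [map_add, map_one, h.map]; grind)

/-- Two columns whose combination is the column of a fixed element must come from the two
primitive cube roots of unity. -/
lemma three_columns (hσ : ∀ x, σ (σ x) = x) {y z r : K} (hy : y ≠ 0) (hz : z ≠ 0)
    (hr : σ r = r) (h1 : y + z = r) (h3 : nihoPow σ y + nihoPow σ z = r)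
    (hne : ratio σ y ≠ 1) (hyz : ratio σ y ≠ ratio σ z) :
    ∃ w, IsOm σ w ∧ y = w * r ∧ z = (w + 1) * r := by
  have h2 : ratio σ y * y + ratio σ z * z = r := by
    rw [← map_eq_ratio_mul hy, ← map_eq_ratio_mul hz, ← map_add, h1, hr]
  rw [nihoPow_eq hy, nihoPow_eq hz] at h3
  have hv := ratio_mem hσ hy
  have hu := ratio_mem hσ hz
  generalize ratio σ y = v at *
  generalize ratio σ z = u at *
  have e1 : (1 + v) * y = (1 + u) * z := by grind
  have e2 : (1 + v) * y * ((v + u) * (1 + u + v)) = 0 := by grind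
  have hv1 : 1 + v ≠ 0 := by intro h; apply hne; grind
  have hvu : v + u ≠ 0 := by intro h; apply hyz; grind
  have e3 : 1 + u + v = 0 := by
    rcases mul_eq_zero.1 e2 with h | h
    · exact absurd h (mul_ne_zero hv1 hy)
    · exact (mul_eq_zero.1 h).resolve_left hvu
  have hu' : u = 1 + v := by grind
  subst hu'
  refine ⟨v, ⟨hv, (one_add_mem_iff hv).1 hu⟩, ?_, ?_⟩
  · clear hσ; grind
  · clear hσ; grind

/-- Solutions with exactly one entry in the fixed field and distinct ratios. -/
lemma isSol_fixed_iff (hσ : ∀ x, σ (σ x) = x) {x y z : K} :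
    (IsSol σ x y z ∧ ratio σ x = 1 ∧ ratio σ y ≠ 1 ∧ ratio σ y ≠ ratio σ z) ↔
      ∃ w a, IsOm σ w ∧ (σ a = a ∧ a ≠ 0 ∧ a ≠ 1) ∧
        x = a ∧ y = w * (1 + a) ∧ z = (w + 1) * (1 + a) := by
  constructor
  · rintro ⟨h, h1, h2, h3⟩
    have hx := (ratio_eq_one_iff h.hx).1 h1
    have hQ : nihoPow σ x = x := by rw [nihoPow_eq h.hx, h1]; ring
    have hlin := h.lin
    have hpow := h.pow
    rw [hQ] at hpow
    obtain ⟨w, hw, hy, hz⟩ := three_columns hσ (r := 1 + x) h.hy h.hz (by rw [map_add, map_one, hx])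
      (by clear hσ; grind) (by clear hσ; grind) h2 h3
    refine ⟨w, x, hw, ⟨hx, h.hx, ?_⟩, rfl, hy, hz⟩
    rintro rfl
    apply h.hy
    rw [hy, CharTwo.add_self_eq_zero, mul_zero]
  · rintro ⟨w, a, hw, ⟨ha, ha0, ha1⟩, rfl, rfl, rfl⟩
    have hr0 : 1 + x ≠ 0 := by intro h; apply ha1; clear hσ; grind
    have hr : σ (1 + x) = 1 + x := by rw [map_add, map_one, ha]
    have r1 : ratio σ (w * (1 + x)) = w := by rw [ratio_mul_fixed hw.ne_zero hr0 hr, hw.ratio]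
    have r2 : ratio σ ((w + 1) * (1 + x)) = w + 1 := by
      rw [ratio_mul_fixed hw.add_one_ne_zero hr0 hr, hw.ratio']
    have r0 : ratio σ x = 1 := (ratio_eq_one_iff ha0).2 ha
    have hw2 := hw.2
    have hy0 := mul_ne_zero hw.ne_zero hr0
    have hz0 := mul_ne_zero hw.add_one_ne_zero hr0
    refine ⟨⟨ha0, hy0, hz0, by clear hσ; grind, ?_⟩, r0, ?_, ?_⟩
    · rw [nihoPow_eq ha0, nihoPow_eq hy0, nihoPow_eq hz0, r0, r1, r2]
      clear hσ
      grind
    · rw [r1]; intro h; apply hw.add_one_ne_zero; rw [h, CharTwo.add_self_eq_zero]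
    · rw [r1, r2]; simp

/-- Solutions with no entry in the fixed field and exactly one coincidence of ratios. -/
lemma isSol_pair_iff (hσ : ∀ x, σ (σ x) = x) {x y z : K} :
    (IsSol σ x y z ∧ ratio σ x ≠ 1 ∧ ratio σ z ≠ 1 ∧ ratio σ x = ratio σ y) ↔
      ∃ w a, IsOm σ w ∧ (σ a = a ∧ a ≠ 0 ∧ a ≠ 1) ∧
        x = w * a ∧ y = w * (1 + a) ∧ z = w + 1 := by
  constructor
  · rintro ⟨h, h1, h2, h3⟩
    have hlin := h.lin
    have hpow := h.pow
    have hs0 : x + y ≠ 0 := by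
      intro h0
      rw [h0, zero_add] at hlin
      apply h2
      rw [hlin, ratio, map_one, div_one]
    have hs : σ (x + y) = ratio σ x * (x + y) := by
      rw [map_add, map_eq_ratio_mul h.hx, map_eq_ratio_mul h.hy, ← h3, mul_add]
    have hsr : ratio σ (x + y) = ratio σ x := ratio_eq_of hs0 hs
    have hQ : nihoPow σ (x + y) = nihoPow σ x + nihoPow σ y := by
      rw [nihoPow_eq hs0, nihoPow_eq h.hx, nihoPow_eq h.hy, hsr, ← h3]; ring
    have hne : ratio σ (x + y) ≠ ratio σ z := by
      -- otherwise `1 = x + y + z` has the same ratio as `z`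
      intro he
      have : σ (x + y + z) = ratio σ z * (x + y + z) := by
        rw [map_add, map_eq_ratio_mul hs0, he, map_eq_ratio_mul h.hz]; ring
      rw [hlin, map_one, mul_one] at this
      exact h2 this.symm
    obtain ⟨w, hw, hy, hz⟩ := three_columns hσ (r := 1) hs0 h.hz (map_one σ) hlin
      (by rw [hQ]; exact hpow) (by rw [hsr]; exact h1) hne
    rw [mul_one] at hy hz
    have hrw : ratio σ x = w := by rw [← hsr, hy, hw.ratio]
    have hw0 := hw.ne_zero
    refine ⟨w, x / w, hw, ⟨?_, div_ne_zero h.hx hw0, ?_⟩, ?_, ?_, hz⟩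
    · have hw2 := hw.2
      have := hw.add_one_ne_zero
      rw [map_div₀, map_eq_ratio_mul h.hx, hrw, hw.map]
      clear hσ
      field_simp
      grind
    · intro he
      apply h.hy
      have : x = w := by field_simp at he; exact he
      clear hσ; grind
    · field_simp
    · field_simp
      clear hσ; grind
  · rintro ⟨w, a, hw, ⟨ha, ha0, ha1⟩, rfl, rfl, rfl⟩
    have hr0 : 1 + a ≠ 0 := by intro h; apply ha1; clear hσ; grind
    have hr : σ (1 + a) = 1 + a := by rw [map_add, map_one, ha]
    have r1 : ratio σ (w * a) = w := by rw [ratio_mul_fixed hw.ne_zero ha0 ha, hw.ratio]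
    have r2 : ratio σ (w * (1 + a)) = w := by
      rw [ratio_mul_fixed hw.ne_zero hr0 hr, hw.ratio]
    have r0 : ratio σ (w + 1) = w + 1 := hw.ratio'
    have hw2 := hw.2
    have hx0 := mul_ne_zero hw.ne_zero ha0
    have hy0 := mul_ne_zero hw.ne_zero hr0
    have hz0 := hw.add_one_ne_zero
    refine ⟨⟨hx0, hy0, hz0, by clear hσ; grind, ?_⟩, ?_, ?_, ?_⟩
    · rw [nihoPow_eq hx0, nihoPow_eq hy0, nihoPow_eq hz0, r0, r1, r2]
      clear hσ
      grind
    · rw [r1]; intro h; apply hw.add_one_ne_zero; rw [h, CharTwo.add_self_eq_zero]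
    · rw [r0]; intro h; apply hw.ne_zero; simpa using h
    · rw [r1, r2]

/-- Solutions with one entry in the fixed field and equal ratios elsewhere. -/
lemma isSol_double_iff {x y z : K} :
    (IsSol σ x y z ∧ ratio σ x = 1 ∧ ratio σ y ≠ 1 ∧ ratio σ y = ratio σ z) ↔
      (σ y ≠ y ∧ x = 1 ∧ z = y) := by
  constructor
  · rintro ⟨h, h1, h2, h3⟩
    have hx := (ratio_eq_one_iff h.hx).1 h1
    have hs : σ (y + z) = ratio σ y * (y + z) := by
      rw [map_add, map_eq_ratio_mul h.hy, map_eq_ratio_mul h.hz, ← h3, mul_add]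
    have hlin := h.lin
    have hs1 : y + z = 1 + x := by grind
    rw [hs1, map_add, map_one, hx] at hs
    have hs2 : (ratio σ y + 1) * (1 + x) = 0 := by grind
    have hs3 : 1 + x = 0 := by
      rcases mul_eq_zero.1 hs2 with h0 | h0
      · exact absurd (by grind) h2
      · exact h0
    refine ⟨fun h0 => h2 ((ratio_eq_one_iff h.hy).2 h0), by grind, by grind⟩
  · rintro ⟨h, rfl, rfl⟩
    have hz : z ≠ 0 := by rintro rfl; simp at h
    refine ⟨⟨one_ne_zero, hz, hz, by grind, ?_⟩, by simp [ratio], ?_, rfl⟩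
    · rw [add_assoc, CharTwo.add_self_eq_zero]; simp [nihoPow]
    · rw [Ne, ratio_eq_one_iff hz]; exact h

lemma isSol_all_fixed_iff {x y z : K} :
    (IsSol σ x y z ∧ ratio σ x = 1 ∧ ratio σ y = 1) ↔
      (σ x = x ∧ σ y = y ∧ x ≠ 0 ∧ y ≠ 0 ∧ x + y ≠ 1 ∧ z = 1 + x + y) := by
  constructor
  · rintro ⟨h, h1, h2⟩
    have hlin := h.lin
    have hz := h.hz
    exact ⟨(ratio_eq_one_iff h.hx).1 h1, (ratio_eq_one_iff h.hy).1 h2, h.hx, h.hy,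
      by grind, by grind⟩
  · rintro ⟨hx, hy, hx0, hy0, hxy, rfl⟩
    have hz0 : 1 + x + y ≠ 0 := by grind
    have rx := (ratio_eq_one_iff hx0).2 hx
    have ry := (ratio_eq_one_iff hy0).2 hy
    have rz : ratio σ (1 + x + y) = 1 :=
      (ratio_eq_one_iff hz0).2 (by rw [map_add, map_add, map_one, hx, hy])
    refine ⟨⟨hx0, hy0, hz0, by grind, ?_⟩, rx, ry⟩
    rw [nihoPow_eq hx0, nihoPow_eq hy0, nihoPow_eq hz0, rx, ry, rz]
    grind

/-- Two entries in the fixed field force the third one into it, by linearity. -/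
lemma IsSol.ratio_eq_one {x y z : K} (h : IsSol σ x y z) (h1 : ratio σ x = 1)
    (h2 : ratio σ y = 1) : ratio σ z = 1 := by
  have hlin := h.lin
  have hz : z = 1 + x + y := by grind
  rw [ratio_eq_one_iff h.hx] at h1
  rw [ratio_eq_one_iff h.hy] at h2
  rw [ratio_eq_one_iff h.hz, hz, map_add, map_add, map_one, h1, h2]

lemma IsSol.ratio_ne {x y z : K} (h : IsSol σ x y z) (h1 : ratio σ x = ratio σ y)
    (h2 : ratio σ x ≠ 1) : ratio σ x ≠ ratio σ z := by
  intro h3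
  have : σ (x + y + z) = ratio σ x * (x + y + z) := by
    rw [map_add, map_add, map_eq_ratio_mul h.hx, map_eq_ratio_mul h.hy, map_eq_ratio_mul h.hz,
      ← h1, ← h3]
    ring
  rw [h.lin, map_one, mul_one] at this
  exact h2 this.symm

end Solutions

/-! ### Solutions with distinct ratios -/

section Generic

variable {K : Type*} [Field K] [CharP K 2] {σ : K →+* K}

/-- `1, u, v, w` are distinct elements of the circle. -/
structure IsDist (σ : K →+* K) (u v w : K) : Prop where
  hu : u * σ u = 1
  hv : v * σ v = 1
  hw : w * σ w = 1
  hu1 : u ≠ 1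
  hv1 : v ≠ 1
  hw1 : w ≠ 1
  huv : u ≠ v
  huw : u ≠ w
  hvw : v ≠ w

/-- `1, u, v, w` are distinct elements of the circle with sum on the circle, no three of which
sum to zero. -/
structure IsGood (σ : K →+* K) (u v w : K) : Prop extends IsDist σ u v w where
  sum : (1 + u + v + w) * σ (1 + u + v + w) = 1
  s0 : u + v + w ≠ 0
  su : 1 + v + w ≠ 0
  sv : 1 + u + w ≠ 0
  sw : 1 + u + v ≠ 0

/-- The norm condition on `1 + u + v + w`, with denominators cleared. -/
lemma sum_mem_iff {u v w : K} (hu : u * σ u = 1) (hv : v * σ v = 1) (hw : w * σ w = 1) :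
    (1 + u + v + w) * σ (1 + u + v + w) = 1 ↔
      (u * v + u * w + v * w) * (1 + (u + v + w)) + (u + v + w) * (u * v * w) = 0 := by
  have hu0 : u ≠ 0 := left_ne_zero_of_mul_eq_one hu
  have hv0 : v ≠ 0 := left_ne_zero_of_mul_eq_one hv
  have hw0 : w ≠ 0 := left_ne_zero_of_mul_eq_one hw
  simp only [map_add, map_one, eq_inv_of_mul_eq_one_right hu, eq_inv_of_mul_eq_one_right hv,
    eq_inv_of_mul_eq_one_right hw]
  constructor
  · intro h
    field_simp at h
    grind
  · intro h
    field_simp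
    grind

/-- Cramer's rule for the exponents `0, 1, 3`. -/
lemma cramer {x y z u v w : K} (h0 : x + y + z = 1) (h1 : x * u + y * v + z * w = 1)
    (h3 : x * u ^ 3 + y * v ^ 3 + z * w ^ 3 = 1) :
    x * ((u + v) * (u + w) * (u + v + w)) = (1 + v) * (1 + w) * (1 + v + w) := by
  have hc := CharTwo.two_eq_zero (R := K)
  -- evaluate the cubic `(t + v) (t + w) (t + v + w)`, which has no `t ^ 2` term
  linear_combination h3 + (v * w + (v + w) ^ 2) * h1 + v * w * (v + w) * h0 +
    (x * u ^ 2 * v + x * u ^ 2 * w - v - v * w ^ 2 * y - 2 * (v * w ^ 2 * z)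
      - 2 * (v ^ 2 * w * y) - v ^ 2 * w * z - v ^ 3 * y - w - w ^ 3 * z) * hc

/-- The first coordinate of the solution of the linear system attached to `u, v, w`. -/
def coordSol (u v w : K) : K :=
  (1 + v) * (1 + w) * (1 + v + w) / ((u + v) * (u + w) * (u + v + w))

lemma add_ne_zero_of_ne {a b : K} (h : a ≠ b) : a + b ≠ 0 := by
  intro h0; apply h; grind

lemma IsGood.swap12 {u v w : K} (h : IsGood σ u v w) : IsGood σ v u w where
  hu := h.hv
  hv := h.hu
  hw := h.hw
  hu1 := h.hv1
  hv1 := h.hu1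
  hw1 := h.hw1
  huv := h.huv.symm
  huw := h.hvw
  hvw := h.huw
  sum := by rw [add_right_comm 1 v u]; exact h.sum
  s0 := by rw [add_comm v u]; exact h.s0
  su := h.sv
  sv := h.su
  sw := by rw [add_right_comm]; exact h.sw

lemma IsGood.swap23 {u v w : K} (h : IsGood σ u v w) : IsGood σ u w v where
  hu := h.hu
  hv := h.hw
  hw := h.hv
  hu1 := h.hu1
  hv1 := h.hw1
  hw1 := h.hv1
  huv := h.huw
  huw := h.huv
  hvw := h.hvw.symm
  sum := by rw [add_right_comm (1 + u) w v]; exact h.sum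
  s0 := by rw [add_right_comm]; exact h.s0
  su := by rw [add_right_comm]; exact h.su
  sv := h.sw
  sw := h.sv

lemma coordSol_swap (u v w : K) : coordSol u w v = coordSol u v w := by
  rw [coordSol, coordSol]
  congr 1 <;> ring

lemma IsGood.coordSol_ne_zero {u v w : K} (h : IsGood σ u v w) : coordSol u v w ≠ 0 :=
  div_ne_zero (mul_ne_zero (mul_ne_zero (add_ne_zero_of_ne h.hv1.symm)
      (add_ne_zero_of_ne h.hw1.symm)) h.su)
    (mul_ne_zero (mul_ne_zero (add_ne_zero_of_ne h.huv) (add_ne_zero_of_ne h.huw)) h.s0)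

lemma map_coordSol {u v w : K} (hu : u * σ u = 1) (hv : v * σ v = 1) (hw : w * σ w = 1)
    (h1 : u + v ≠ 0) (h2 : u + w ≠ 0) (h3 : u + v + w ≠ 0) :
    (u * v + u * w + v * w) ≠ 0 ∧ σ (coordSol u v w) * (u * v + u * w + v * w) *
      ((u + v) * (u + w)) = u ^ 3 * ((1 + v) * (1 + w) * (v * w + v + w)) := by
  have hu0 : u ≠ 0 := left_ne_zero_of_mul_eq_one hu
  have hv0 : v ≠ 0 := left_ne_zero_of_mul_eq_one hv
  have hw0 : w ≠ 0 := left_ne_zero_of_mul_eq_one hw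
  have hnz := (map_ne_zero σ).2 h3
  simp only [map_add, eq_inv_of_mul_eq_one_right hu, eq_inv_of_mul_eq_one_right hv,
    eq_inv_of_mul_eq_one_right hw] at hnz
  have he2 : u * v + u * w + v * w ≠ 0 := by
    intro h0
    apply hnz
    rw [show u⁻¹ + v⁻¹ + w⁻¹ = (u * v + u * w + v * w) / (u * v * w) by field_simp; ring, h0,
      zero_div]
  refine ⟨he2, ?_⟩
  have e1 : u⁻¹ + v⁻¹ = (u + v) / (u * v) := by field_simp; ring
  have e2 : u⁻¹ + w⁻¹ = (u + w) / (u * w) := by field_simp; ring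
  have e3 : u⁻¹ + v⁻¹ + w⁻¹ = (u * v + u * w + v * w) / (u * v * w) := by field_simp; ring
  have e4 : 1 + v⁻¹ + w⁻¹ = (v * w + v + w) / (v * w) := by field_simp; ring
  have e5 : 1 + v⁻¹ = (1 + v) / v := by field_simp; ring
  have e6 : 1 + w⁻¹ = (1 + w) / w := by field_simp; ring
  simp only [coordSol, map_div₀, map_mul, map_add, map_one, eq_inv_of_mul_eq_one_right hu,
    eq_inv_of_mul_eq_one_right hv, eq_inv_of_mul_eq_one_right hw]
  rw [e3, e4, e1, e2, e5, e6]
  generalize u * v + u * w + v * w = E at *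
  generalize v * w + v + w = G at *
  generalize u + v = A at *
  generalize u + w = B at *
  field_simp

/-- The conjugation multiplies the first coordinate by `u` exactly when `1 + u + v + w` lies on
the circle. -/
lemma ratio_coordSol_iff {u v w : K} (h : IsDist σ u v w)
    (h0 : u + v + w ≠ 0) :
    σ (coordSol u v w) = u * coordSol u v w ↔ (1 + u + v + w) * σ (1 + u + v + w) = 1 := by
  rw [sum_mem_iff h.hu h.hv h.hw]
  have h1 := add_ne_zero_of_ne h.huv
  have h2 := add_ne_zero_of_ne h.huw
  have h3 := add_ne_zero_of_ne h.hv1.symm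
  have h4 := add_ne_zero_of_ne h.hw1.symm
  have h5 := add_ne_zero_of_ne h.hu1.symm
  have hu0 : u ≠ 0 := left_ne_zero_of_mul_eq_one h.hu
  obtain ⟨he2, hm⟩ := map_coordSol h.hu h.hv h.hw h1 h2 h0
  have hc : coordSol u v w * ((u + v) * (u + w) * (u + v + w)) =
      (1 + v) * (1 + w) * (1 + v + w) := by
    rw [coordSol, div_mul_cancel₀]
    exact mul_ne_zero (mul_ne_zero h1 h2) h0
  -- both conditions say that the following two products agree
  have hfac : u ^ 2 * (v * w + v + w) * (u + v + w) + (1 + v + w) * (u * v + u * w + v * w) =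
      (1 + u) * ((u * v + u * w + v * w) * (1 + (u + v + w)) + (u + v + w) * (u * v * w)) := by
    clear hm hc he2 h1 h2 h3 h4 h5 hu0 h0 h
    grind
  generalize coordSol u v w = c at *
  generalize σ c = d at *
  have hkey : (d + u * c) * ((u * v + u * w + v * w) * ((u + v) * (u + w)) * (u + v + w)) =
      u * ((1 + v) * (1 + w)) * ((1 + u) * ((u * v + u * w + v * w) * (1 + (u + v + w)) +
        (u + v + w) * (u * v * w))) := by
    rw [← hfac]
    linear_combination (u + v + w) * hm + u * (u * v + u * w + v * w) * hc
  constructor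
  · intro hd
    rw [hd, CharTwo.add_self_eq_zero, zero_mul] at hkey
    have := (mul_eq_zero.1 hkey.symm).resolve_left (mul_ne_zero hu0 (mul_ne_zero h3 h4))
    exact (mul_eq_zero.1 this).resolve_left h5
  · intro hs
    rw [hs, mul_zero, mul_zero] at hkey
    have := (mul_eq_zero.1 hkey).resolve_right
      (mul_ne_zero (mul_ne_zero he2 (mul_ne_zero h1 h2)) h0)
    exact CharTwo.add_eq_zero.1 this

lemma IsGood.ratio_coordSol {u v w : K} (h : IsGood σ u v w) :
    ratio σ (coordSol u v w) = u :=
  ratio_eq_of h.coordSol_ne_zero ((ratio_coordSol_iff h.toIsDist h.s0).2 h.sum)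

lemma coordSol_system {u v w : K} (h1 : u + v ≠ 0) (h2 : u + w ≠ 0) (h3 : v + w ≠ 0)
    (h0 : u + v + w ≠ 0) :
    coordSol u v w + coordSol v u w + coordSol w u v = 1 ∧
    coordSol u v w * u ^ 3 + coordSol v u w * v ^ 3 + coordSol w u v * w ^ 3 = 1 := by
  have e1 : coordSol v u w = (1 + u) * (1 + w) * (1 + u + w) /
      ((u + v) * (v + w) * (u + v + w)) := by rw [coordSol, add_comm v u]
  have e2 : coordSol w u v = (1 + u) * (1 + v) * (1 + u + v) /
      ((u + w) * (v + w) * (u + v + w)) := by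
    rw [coordSol, add_comm w u, add_comm w v, add_right_comm u w v]
  rw [e1, e2, coordSol]
  have hS : ∃ S, S = u + v + w := ⟨_, rfl⟩
  obtain ⟨S, hS⟩ := hS
  rw [← hS] at h0 ⊢
  constructor
  · field_simp
    grind
  · field_simp
    grind

lemma IsGood.isSol {u v w : K} (h : IsGood σ u v w) :
    IsSol σ (coordSol u v w) (coordSol v u w) (coordSol w u v) := by
  have g2 := h.swap12
  have g3 := h.swap23.swap12
  have hs := coordSol_system (add_ne_zero_of_ne h.huv) (add_ne_zero_of_ne h.huw)
    (add_ne_zero_of_ne h.hvw) h.s0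
  refine ⟨h.coordSol_ne_zero, g2.coordSol_ne_zero, g3.coordSol_ne_zero, hs.1, ?_⟩
  rw [nihoPow_eq h.coordSol_ne_zero, nihoPow_eq g2.coordSol_ne_zero,
    nihoPow_eq g3.coordSol_ne_zero, h.ratio_coordSol, g2.ratio_coordSol, g3.ratio_coordSol]
  exact hs.2

/-- A solution whose ratios are distinct and different from one has good ratios, and is recovered
from them by Cramer's rule. -/
lemma IsSol.good (hσ : ∀ x, σ (σ x) = x) {x y z : K} (h : IsSol σ x y z)
    (hx1 : ratio σ x ≠ 1) (hy1 : ratio σ y ≠ 1) (hz1 : ratio σ z ≠ 1)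
    (hxy : ratio σ x ≠ ratio σ y) (hxz : ratio σ x ≠ ratio σ z) (hyz : ratio σ y ≠ ratio σ z) :
    IsGood σ (ratio σ x) (ratio σ y) (ratio σ z) ∧
      x = coordSol (ratio σ x) (ratio σ y) (ratio σ z) ∧
      y = coordSol (ratio σ y) (ratio σ x) (ratio σ z) ∧
      z = coordSol (ratio σ z) (ratio σ x) (ratio σ y) := by
  have e0 := h.lin
  have e1 : x * ratio σ x + y * ratio σ y + z * ratio σ z = 1 := by
    rw [mul_comm x, mul_comm y, mul_comm z, ← map_eq_ratio_mul h.hx, ← map_eq_ratio_mul h.hy,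
      ← map_eq_ratio_mul h.hz, ← map_add, ← map_add, e0, map_one]
  have e3 := h.pow
  rw [nihoPow_eq h.hx, nihoPow_eq h.hy, nihoPow_eq h.hz] at e3
  have hd : IsDist σ (ratio σ x) (ratio σ y) (ratio σ z) :=
    ⟨ratio_mem hσ h.hx, ratio_mem hσ h.hy, ratio_mem hσ h.hz, hx1, hy1, hz1, hxy, hxz, hyz⟩
  have hmap : σ x = ratio σ x * x := map_eq_ratio_mul h.hx
  have hx0 := h.hx
  have hy0 := h.hy
  have hz0 := h.hz
  generalize ratio σ x = u at *
  generalize ratio σ y = v at *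
  generalize ratio σ z = w at *
  have c1 := cramer e0 e1 e3
  have c2 := cramer (x := y) (y := x) (z := z) (u := v) (v := u) (w := w)
    (by rw [← e0]; ring) (by rw [← e1]; ring) (by rw [← e3]; ring)
  have c3 := cramer (x := z) (y := x) (z := y) (u := w) (v := u) (w := v)
    (by rw [← e0]; ring) (by rw [← e1]; ring) (by rw [← e3]; ring)
  have huv := add_ne_zero_of_ne hd.huv
  have huw := add_ne_zero_of_ne hd.huw
  have hvw := add_ne_zero_of_ne hd.hvw
  have hu1 := add_ne_zero_of_ne hd.hu1.symm
  have hv1 := add_ne_zero_of_ne hd.hv1.symm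
  have hw1 := add_ne_zero_of_ne hd.hw1.symm
  have hvu : v + u ≠ 0 := by rwa [add_comm]
  have hwu : w + u ≠ 0 := by rwa [add_comm]
  have hwv : w + v ≠ 0 := by rwa [add_comm]
  have s0 : u + v + w ≠ 0 := by
    intro hs
    rw [hs, mul_zero, mul_zero] at c1
    have h1 := (mul_eq_zero.1 c1.symm).resolve_left (mul_ne_zero hv1 hw1)
    apply hu1
    linear_combination hs - h1 + CharTwo.two_eq_zero (R := K)
  have s0' : v + u + w ≠ 0 := by rwa [add_comm v u]
  have s0'' : w + u + v ≠ 0 := by rwa [show w + u + v = u + v + w by ring]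
  have n1 := mul_ne_zero hx0 (mul_ne_zero (mul_ne_zero huv huw) s0)
  have n2 := mul_ne_zero hy0 (mul_ne_zero (mul_ne_zero hvu hvw) s0')
  have n3 := mul_ne_zero hz0 (mul_ne_zero (mul_ne_zero hwu hwv) s0'')
  rw [c1] at n1
  rw [c2] at n2
  rw [c3] at n3
  have hx : x = coordSol u v w := eq_div_of_mul_eq (mul_ne_zero (mul_ne_zero huv huw) s0) c1
  refine ⟨⟨hd, ?_, s0, right_ne_zero_of_mul n1, right_ne_zero_of_mul n2,
    right_ne_zero_of_mul n3⟩, hx, eq_div_of_mul_eq (mul_ne_zero (mul_ne_zero hvu hvw) s0') c2,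
    eq_div_of_mul_eq (mul_ne_zero (mul_ne_zero hwu hwv) s0'') c3⟩
  rw [← ratio_coordSol_iff hd s0, ← hx]
  exact hmap

end Generic

/-! ### Counting the normalised solutions -/

section Counting

variable {K : Type*} [Field K] [Fintype K] [CharP K 2] {σ : K →+* K} {q ν : ℤ}

open Classical in
/-- The number of triples with a given property. -/
noncomputable def cnt (p : K → K → K → Prop) : ℤ := #{t : K × K × K | p t.1 t.2.1 t.2.2}

lemma cnt_congr {p r : K → K → K → Prop} (h : ∀ x y z, p x y z ↔ r x y z) : cnt p = cnt r := by
  have : p = r := by funext x y z; exact propext (h x y z)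
  rw [this]

lemma cnt_split (p r : K → K → K → Prop) :
    cnt p = cnt (fun x y z => p x y z ∧ r x y z) + cnt (fun x y z => p x y z ∧ ¬ r x y z) := by
  classical
  simp only [cnt]
  rw [← Finset.card_filter_add_card_filter_not (s := {t : K × K × K | p t.1 t.2.1 t.2.2})
    (fun t => r t.1 t.2.1 t.2.2), Finset.filter_filter, Finset.filter_filter]
  push_cast
  rfl

lemma cnt_swap12 (p : K → K → K → Prop) : cnt (fun x y z => p y x z) = cnt p := by
  classical
  simp only [cnt]
  congr 1
  exact Finset.card_bij' (fun t _ => (t.2.1, t.1, t.2.2)) (fun t _ => (t.2.1, t.1, t.2.2))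
    (by simp) (by simp) (by simp) (by simp)

lemma cnt_swap23 (p : K → K → K → Prop) : cnt (fun x y z => p x z y) = cnt p := by
  classical
  simp only [cnt]
  congr 1
  exact Finset.card_bij' (fun t _ => (t.1, t.2.2, t.2.1)) (fun t _ => (t.1, t.2.2, t.2.1))
    (by simp) (by simp) (by simp) (by simp)

lemma cnt_image {α : Type*} (S : Finset α) (f : α → K × K × K) (hf : Set.InjOn f S)
    {p : K → K → K → Prop} (h : ∀ x y z, p x y z ↔ ∃ s ∈ S, f s = (x, y, z)) :
    cnt p = #S := by
  classical
  simp only [cnt]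
  rw [← Finset.card_image_of_injOn hf]
  congr 2
  ext ⟨x, y, z⟩
  simp [h]

open Classical in
lemma cnt_eq_sum (p : K → K → K → Prop) :
    cnt p = ∑ x : K, ∑ y : K, ∑ z : K, if p x y z then 1 else 0 := by
  simp only [cnt]
  rw [Finset.card_filter]
  push_cast
  rw [Fintype.sum_prod_type]
  refine Finset.sum_congr rfl fun x _ => ?_
  rw [Fintype.sum_prod_type]

open Classical in
/-- The indicator of the unit circle. -/
noncomputable def ind (σ : K →+* K) (s : K) : ℤ := if s * σ s = 1 then 1 else 0

open Classical in
/-- The counting data of a quadratic extension with conjugation `σ` over the field with `q`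
elements; `ν` is the number of primitive cube roots of unity on the circle. -/
structure CircleData (σ : K →+* K) (q ν : ℤ) : Prop where
  inv : ∀ x, σ (σ x) = x
  card : (Fintype.card K : ℤ) = q ^ 2
  card_fix : (#{x : K | σ x = x} : ℤ) = q
  card_circ : (#(circ σ) : ℤ) = q + 1
  shift : ∀ s ∈ circ σ, ∑ v ∈ circ σ, ind σ (s + v) = ν

open Classical in
lemma CircleData.card_om (h : CircleData σ q ν) : (#{w : K | IsOm σ w} : ℤ) = ν := by
  rw [← h.shift 1 (by simp)]
  simp only [ind]
  rw [Finset.sum_boole]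
  have e : ({w : K | IsOm σ w} : Finset K) = {v ∈ circ σ | (1 + v) * σ (1 + v) = 1} := by
    ext w
    simp only [Finset.mem_filter, Finset.mem_univ, true_and, mem_circ]
    exact and_congr_right fun hw => (one_add_mem_iff (K := K) hw).symm
  rw [e]

open Classical in
lemma CircleData.card_fix_ne (h : CircleData σ q ν) :
    (#{x : K | σ x = x ∧ x ≠ 0} : ℤ) = q - 1 ∧
    (#{x : K | σ x = x ∧ x ≠ 0 ∧ x ≠ 1} : ℤ) = q - 2 ∧ (#{x : K | σ x ≠ x} : ℤ) = q ^ 2 - q := by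
  have h1 : ({x : K | σ x = x ∧ x ≠ 0} : Finset K) = ({x : K | σ x = x} : Finset K).erase 0 := by
    ext; simp; tauto
  have h2 : ({x : K | σ x = x ∧ x ≠ 0 ∧ x ≠ 1} : Finset K) =
      (({x : K | σ x = x} : Finset K).erase 0).erase 1 := by
    ext; simp; tauto
  have h3 := Finset.card_filter_add_card_filter_not (s := (univ : Finset K)) (fun x => σ x = x)
  have h4 := h.card
  have h5 := h.card_fix
  rw [Finset.card_univ] at h3
  have e1 := Finset.card_erase_add_one (s := ({x : K | σ x = x} : Finset K)) (a := 0) (by simp)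
  have e2 := Finset.card_erase_add_one (s := ({x : K | σ x = x} : Finset K).erase 0) (a := 1)
    (by simp)
  rw [h1, h2]
  simp only [Ne]
  refine ⟨?_, ?_, ?_⟩ <;> zify at * <;> linarith

/-- Solutions with all entries in the fixed field. -/
lemma CircleData.cnt_all_fixed (h : CircleData σ q ν) :
    cnt (fun x y z => IsSol σ x y z ∧ ratio σ x = 1 ∧ ratio σ y = 1) = q ^ 2 - 3 * q + 3 := by
  classical
  obtain ⟨c1, c2, -⟩ := h.card_fix_ne
  set S : Finset K := {x : K | σ x = x ∧ x ≠ 0} with hS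
  have hc := Finset.card_filter_add_card_filter_not (s := S ×ˢ S) (fun t => t.1 + t.2 = 1)
  have h1 : #{t ∈ S ×ˢ S | t.1 + t.2 = 1} = #{x : K | σ x = x ∧ x ≠ 0 ∧ x ≠ 1} := by
    refine Finset.card_bij' (fun t _ => t.1) (fun x _ => (x, 1 + x)) ?_ ?_ ?_ ?_
    · rintro ⟨x, y⟩ ht
      simp only [hS, Finset.mem_filter, Finset.mem_product, Finset.mem_univ, true_and] at ht ⊢
      exact ⟨ht.1.1.1, ht.1.1.2, by rintro rfl; exact ht.1.2.2 (by simpa using ht.2)⟩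
    · intro x hx
      simp only [hS, Finset.mem_filter, Finset.mem_product, Finset.mem_univ, true_and] at hx ⊢
      exact ⟨⟨⟨hx.1, hx.2.1⟩, by rw [map_add, map_one, hx.1], add_ne_zero_of_ne hx.2.2.symm⟩,
        by grind⟩
    · rintro ⟨x, y⟩ ht
      simp only [Finset.mem_filter] at ht
      ext
      · rfl
      · simp only; rw [← ht.2]; grind
    · intro x _
      rfl
  rw [h1, Finset.card_product] at hc
  rw [cnt_image ({t ∈ S ×ˢ S | ¬ (t.1 + t.2 = 1)}) (fun t => (t.1, t.2, 1 + t.1 + t.2))]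
  · zify at hc
    rw [c1, c2] at hc
    linarith
  · rintro ⟨x, y⟩ _ ⟨x', y'⟩ _ ht
    simp only [Prod.mk.injEq] at ht
    simp [ht.1, ht.2.1]
  · intro x y z
    rw [isSol_all_fixed_iff]
    simp only [hS, Finset.mem_filter, Finset.mem_product, Finset.mem_univ, true_and, Prod.exists,
      Prod.mk.injEq]
    constructor
    · rintro ⟨a, b, c, d, e, f⟩
      exact ⟨x, y, ⟨⟨⟨a, c⟩, b, d⟩, e⟩, rfl, rfl, f.symm⟩
    · rintro ⟨x', y', ⟨⟨⟨a, c⟩, b, d⟩, e⟩, rfl, rfl, f⟩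
      exact ⟨a, b, c, d, e, f.symm⟩

lemma CircleData.cnt_double (h : CircleData σ q ν) :
    cnt (fun x y z => IsSol σ x y z ∧ ratio σ x = 1 ∧ ratio σ y ≠ 1 ∧ ratio σ y = ratio σ z) =
      q ^ 2 - q := by
  classical
  rw [cnt_image ({x : K | σ x ≠ x}) (fun y => (1, y, y)), h.card_fix_ne.2.2]
  · intro y _ y' _ hy
    simpa using hy
  · intro x y z
    rw [isSol_double_iff]
    simp only [Finset.mem_filter, Finset.mem_univ, true_and, Prod.mk.injEq]
    constructor
    · rintro ⟨a, rfl, rfl⟩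
      exact ⟨z, a, rfl, rfl, rfl⟩
    · rintro ⟨y', a, rfl, rfl, rfl⟩
      exact ⟨a, rfl, rfl⟩

lemma CircleData.cnt_fixed (h : CircleData σ q ν) :
    cnt (fun x y z => IsSol σ x y z ∧ ratio σ x = 1 ∧ ratio σ y ≠ 1 ∧ ratio σ y ≠ ratio σ z) =
      ν * (q - 2) := by
  classical
  rw [cnt_image (({w : K | IsOm σ w} : Finset K) ×ˢ
      ({x : K | σ x = x ∧ x ≠ 0 ∧ x ≠ 1} : Finset K))
    (fun t => (t.2, t.1 * (1 + t.2), (t.1 + 1) * (1 + t.2))), Finset.card_product]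
  · push_cast
    rw [h.card_om, h.card_fix_ne.2.1]
  · rintro ⟨w, a⟩ hw ⟨w', a'⟩ _ ht
    simp only [Finset.coe_product, Set.mem_prod, Finset.mem_coe, Finset.mem_filter,
      Finset.mem_univ, true_and] at hw
    simp only [Prod.mk.injEq] at ht
    obtain ⟨rfl, h2, -⟩ := ht
    rw [mul_right_cancel₀ (add_ne_zero_of_ne hw.2.2.2.symm) h2]
  · intro x y z
    rw [isSol_fixed_iff h.inv]
    simp only [Finset.mem_filter, Finset.mem_product, Finset.mem_univ, true_and, Prod.exists,
      Prod.mk.injEq]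
    constructor
    · rintro ⟨w, a, hw, ha, rfl, rfl, rfl⟩
      exact ⟨w, x, ⟨hw, ha⟩, rfl, rfl, rfl⟩
    · rintro ⟨w, a, ⟨hw, ha⟩, rfl, rfl, rfl⟩
      exact ⟨w, a, hw, ha, rfl, rfl, rfl⟩

lemma CircleData.cnt_pair (h : CircleData σ q ν) :
    cnt (fun x y z => IsSol σ x y z ∧ ratio σ x ≠ 1 ∧ ratio σ z ≠ 1 ∧ ratio σ x = ratio σ y) =
      ν * (q - 2) := by
  classical
  rw [cnt_image (({w : K | IsOm σ w} : Finset K) ×ˢ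
      ({x : K | σ x = x ∧ x ≠ 0 ∧ x ≠ 1} : Finset K))
    (fun t => (t.1 * t.2, t.1 * (1 + t.2), t.1 + 1)), Finset.card_product]
  · push_cast
    rw [h.card_om, h.card_fix_ne.2.1]
  · rintro ⟨w, a⟩ hw ⟨w', a'⟩ _ ht
    simp only [Finset.coe_product, Set.mem_prod, Finset.mem_coe, Finset.mem_filter,
      Finset.mem_univ, true_and] at hw
    simp only [Prod.mk.injEq, add_left_inj] at ht
    obtain ⟨h2, -, rfl⟩ := ht
    rw [mul_left_cancel₀ hw.1.ne_zero h2]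
  · intro x y z
    rw [isSol_pair_iff h.inv]
    simp only [Finset.mem_filter, Finset.mem_product, Finset.mem_univ, true_and, Prod.exists,
      Prod.mk.injEq]
    constructor
    · rintro ⟨w, a, hw, ha, rfl, rfl, rfl⟩
      exact ⟨w, a, ⟨hw, ha⟩, rfl, rfl, rfl⟩
    · rintro ⟨w, a, ⟨hw, ha⟩, rfl, rfl, rfl⟩
      exact ⟨w, a, hw, ha, rfl, rfl, rfl⟩

/-- Solutions with distinct ratios different from one, indexed by their ratios. -/
lemma CircleData.cnt_distinct (h : CircleData σ q ν) :
    cnt (fun x y z => IsSol σ x y z ∧ ratio σ x ≠ 1 ∧ ratio σ y ≠ 1 ∧ ratio σ z ≠ 1 ∧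
      ratio σ x ≠ ratio σ y ∧ ratio σ x ≠ ratio σ z ∧ ratio σ y ≠ ratio σ z) =
      cnt (IsGood σ) := by
  classical
  rw [cnt_image ({t : K × K × K | IsGood σ t.1 t.2.1 t.2.2})
    (fun t => (coordSol t.1 t.2.1 t.2.2, coordSol t.2.1 t.1 t.2.2, coordSol t.2.2 t.1 t.2.1)), cnt]
  · rintro ⟨u, v, w⟩ hg ⟨u', v', w'⟩ hg' ht
    simp only [Finset.coe_filter, Finset.mem_univ, true_and, Set.mem_ofPred_eq] at hg hg'
    simp only [Prod.mk.injEq] at ht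
    have e1 := hg.ratio_coordSol
    have e2 := hg.swap12.ratio_coordSol
    have e3 := hg.swap23.swap12.ratio_coordSol
    rw [ht.1, hg'.ratio_coordSol] at e1
    rw [ht.2.1, hg'.swap12.ratio_coordSol] at e2
    rw [ht.2.2, hg'.swap23.swap12.ratio_coordSol] at e3
    simp [e1, e2, e3]
  · intro x y z
    simp only [Finset.mem_filter, Finset.mem_univ, true_and, Prod.exists, Prod.mk.injEq]
    constructor
    · rintro ⟨hs, h1, h2, h3, h4, h5, h6⟩
      obtain ⟨hg, e1, e2, e3⟩ := hs.good h.inv h1 h2 h3 h4 h5 h6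
      exact ⟨_, _, _, hg, e1.symm, e2.symm, e3.symm⟩
    · rintro ⟨u, v, w, hg, rfl, rfl, rfl⟩
      rw [hg.ratio_coordSol, hg.swap12.ratio_coordSol, hg.swap23.swap12.ratio_coordSol]
      exact ⟨hg.isSol, hg.hu1, hg.hv1, hg.hw1, hg.huv, hg.huw, hg.hvw⟩

/-- The solutions of the normalised system, sorted by the coincidences among `1` and the three
ratios; each type of degenerate solution occurs in several permuted copies. -/
lemma CircleData.cnt_sol (h : CircleData σ q ν) :
    cnt (IsSol σ) = 4 * q ^ 2 - 6 * q + 3 + 6 * ν * (q - 2) + cnt (IsGood σ) := by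
  have A0 := h.cnt_all_fixed
  have A1 := h.cnt_double
  have B1 := h.cnt_fixed
  have C3 := h.cnt_pair
  have D := h.cnt_distinct
  have A2 := A1
  rw [← cnt_swap12] at A2
  have A3 := A2
  rw [← cnt_swap23] at A3
  have B2 := B1
  rw [← cnt_swap12] at B2
  have B3 := B2
  rw [← cnt_swap23] at B3
  have C2 := C3
  rw [← cnt_swap23] at C2
  have C1 := C2
  rw [← cnt_swap12] at C1
  have perm1 : ∀ {x y z : K}, IsSol σ y x z ↔ IsSol σ x y z :=
    ⟨IsSol.swap12, IsSol.swap12⟩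
  have perm2 : ∀ {x y z : K}, IsSol σ x z y ↔ IsSol σ x y z :=
    ⟨IsSol.swap23, IsSol.swap23⟩
  set X : K → K → K → Prop := fun x _ _ => ratio σ x = 1 with hX
  set Y : K → K → K → Prop := fun _ y _ => ratio σ y = 1 with hY
  set Z : K → K → K → Prop := fun _ _ z => ratio σ z = 1 with hZ
  set XY : K → K → K → Prop := fun x y _ => ratio σ x = ratio σ y with hXY
  set XZ : K → K → K → Prop := fun x _ z => ratio σ x = ratio σ z with hXZ
  set YZ : K → K → K → Prop := fun _ y z => ratio σ y = ratio σ z with hYZ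
  have t1 := cnt_split (IsSol σ) X
  have t2 := cnt_split (fun x y z => IsSol σ x y z ∧ X x y z) Y
  have t3 := cnt_split (fun x y z => (IsSol σ x y z ∧ X x y z) ∧ ¬ Y x y z) YZ
  have t4 := cnt_split (fun x y z => IsSol σ x y z ∧ ¬ X x y z) Y
  have t5 := cnt_split (fun x y z => (IsSol σ x y z ∧ ¬ X x y z) ∧ Y x y z) XZ
  have t6 := cnt_split (fun x y z => (IsSol σ x y z ∧ ¬ X x y z) ∧ ¬ Y x y z) Z
  have t7 := cnt_split (fun x y z => ((IsSol σ x y z ∧ ¬ X x y z) ∧ ¬ Y x y z) ∧ Z x y z) XY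
  have t8 := cnt_split (fun x y z => ((IsSol σ x y z ∧ ¬ X x y z) ∧ ¬ Y x y z) ∧ ¬ Z x y z) XY
  have t9 := cnt_split
    (fun x y z => (((IsSol σ x y z ∧ ¬ X x y z) ∧ ¬ Y x y z) ∧ ¬ Z x y z) ∧ ¬ XY x y z) XZ
  have t10 := cnt_split (fun x y z =>
    ((((IsSol σ x y z ∧ ¬ X x y z) ∧ ¬ Y x y z) ∧ ¬ Z x y z) ∧ ¬ XY x y z) ∧ ¬ XZ x y z) YZ
  simp only [hX, hY, hZ, hXY, hXZ, hYZ] at t1 t2 t3 t4 t5 t6 t7 t8 t9 t10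
  rw [cnt_congr (r := fun x y z => (IsSol σ x y z ∧ ratio σ x = 1) ∧ ratio σ y = 1)
    (fun x y z => by tauto)] at A0
  rw [cnt_congr (r := fun x y z => ((IsSol σ x y z ∧ ratio σ x = 1) ∧ ¬ ratio σ y = 1) ∧
    ratio σ y = ratio σ z) (fun x y z => by tauto)] at A1
  rw [cnt_congr (r := fun x y z => ((IsSol σ x y z ∧ ratio σ x = 1) ∧ ¬ ratio σ y = 1) ∧
    ¬ ratio σ y = ratio σ z) (fun x y z => by tauto)] at B1
  rw [cnt_congr (r := fun x y z => ((IsSol σ x y z ∧ ¬ ratio σ x = 1) ∧ ratio σ y = 1) ∧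
    ratio σ x = ratio σ z) (fun x y z => by rw [perm1]; tauto)] at A2
  rw [cnt_congr (r := fun x y z => ((IsSol σ x y z ∧ ¬ ratio σ x = 1) ∧ ratio σ y = 1) ∧
    ¬ ratio σ x = ratio σ z) (fun x y z => by rw [perm1]; tauto)] at B2
  rw [cnt_congr (r := fun x y z => (((IsSol σ x y z ∧ ¬ ratio σ x = 1) ∧ ¬ ratio σ y = 1) ∧
    ratio σ z = 1) ∧ ratio σ x = ratio σ y) (fun x y z => by
      have e : IsSol σ z x y ↔ IsSol σ x y z := by rw [perm1, perm2]
      rw [e]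
      constructor
      · rintro ⟨a, b, c, d⟩
        exact ⟨⟨⟨⟨a, c⟩, by rwa [← d]⟩, b⟩, d⟩
      · rintro ⟨⟨⟨⟨a, b⟩, c⟩, d⟩, f⟩
        exact ⟨a, d, b, f⟩)] at A3
  rw [cnt_congr (r := fun x y z => (((IsSol σ x y z ∧ ¬ ratio σ x = 1) ∧ ¬ ratio σ y = 1) ∧
    ratio σ z = 1) ∧ ¬ ratio σ x = ratio σ y) (fun x y z => by
      have e : IsSol σ z x y ↔ IsSol σ x y z := by rw [perm1, perm2]
      rw [e]
      constructor
      · rintro ⟨a, b, c, d⟩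
        exact ⟨⟨⟨⟨a, c⟩, fun hy => c (a.swap12.swap23.ratio_eq_one hy b)⟩, b⟩, d⟩
      · rintro ⟨⟨⟨⟨a, b⟩, c⟩, d⟩, f⟩
        exact ⟨a, d, b, f⟩)] at B3
  rw [cnt_congr (r := fun x y z => (((IsSol σ x y z ∧ ¬ ratio σ x = 1) ∧ ¬ ratio σ y = 1) ∧
    ¬ ratio σ z = 1) ∧ ratio σ x = ratio σ y) (fun x y z => by
      constructor
      · rintro ⟨a, b, c, d⟩
        exact ⟨⟨⟨⟨a, b⟩, by rwa [← d]⟩, c⟩, d⟩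
      · rintro ⟨⟨⟨⟨a, b⟩, c⟩, d⟩, f⟩
        exact ⟨a, b, d, f⟩)] at C3
  rw [cnt_congr (r := fun x y z => ((((IsSol σ x y z ∧ ¬ ratio σ x = 1) ∧ ¬ ratio σ y = 1) ∧
    ¬ ratio σ z = 1) ∧ ¬ ratio σ x = ratio σ y) ∧ ratio σ x = ratio σ z) (fun x y z => by
      rw [perm2]
      constructor
      · rintro ⟨a, b, c, d⟩
        exact ⟨⟨⟨⟨⟨a, b⟩, c⟩, by rwa [← d]⟩, a.swap23.ratio_ne d b⟩, d⟩
      · rintro ⟨⟨⟨⟨⟨a, b⟩, c⟩, d⟩, f⟩, g⟩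
        exact ⟨a, b, c, g⟩)] at C2
  rw [cnt_congr (r := fun x y z => (((((IsSol σ x y z ∧ ¬ ratio σ x = 1) ∧ ¬ ratio σ y = 1) ∧
    ¬ ratio σ z = 1) ∧ ¬ ratio σ x = ratio σ y) ∧ ¬ ratio σ x = ratio σ z) ∧
    ratio σ y = ratio σ z) (fun x y z => by
      have e : IsSol σ y z x ↔ IsSol σ x y z := by rw [perm2, perm1]
      rw [e]
      constructor
      · rintro ⟨a, b, c, d⟩
        have hne := a.swap12.swap23.ratio_ne d b
        exact ⟨⟨⟨⟨⟨⟨a, c⟩, b⟩, by rwa [← d]⟩, fun he => hne he.symm⟩,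
          fun he => hne (d.trans he.symm)⟩, d⟩
      · rintro ⟨⟨⟨⟨⟨⟨a, b⟩, c⟩, d⟩, f⟩, g⟩, k⟩
        exact ⟨a, c, b, k⟩)] at C1
  rw [cnt_congr (r := fun x y z => (((((IsSol σ x y z ∧ ¬ ratio σ x = 1) ∧ ¬ ratio σ y = 1) ∧
    ¬ ratio σ z = 1) ∧ ¬ ratio σ x = ratio σ y) ∧ ¬ ratio σ x = ratio σ z) ∧
    ¬ ratio σ y = ratio σ z) (fun x y z => by tauto)] at D
  linarith

end Counting

/-! ### Degenerate configurations on the circle -/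

section Degenerate

variable {K : Type*} [Field K] [Fintype K] [CharP K 2] {σ : K →+* K} {q ν : ℤ}

lemma ind_of_mem {s : K} (h : s * σ s = 1) : ind σ s = 1 := by simp [ind, h]

lemma ind_zero : ind σ (0 : K) = 0 := by simp [ind]

open Classical in
lemma sum_add_eq_zero (S : Finset K) (a : K) :
    ∑ w ∈ S, (if a + w = 0 then (1 : ℤ) else 0) = if a ∈ S then 1 else 0 := by
  have h : ∀ w, a + w = 0 ↔ a = w := fun w => by constructor <;> intro h <;> grind
  simp only [h, Finset.sum_ite_eq]

open Classical in
/-- For distinct `1, u, v, w` on the circle, the sum lies on the circle either because three of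
them cancel (and at most one triple can), or in the generic way. -/
lemma ind_sum_eq {u v w : K} (h : IsDist σ u v w) :
    ind σ (1 + u + v + w) = (if IsGood σ u v w then 1 else 0) + (if 1 + u + v = 0 then 1 else 0)
      + (if (1 + u) + w = 0 then 1 else 0) + (if (1 + v) + w = 0 then 1 else 0)
      + (if (u + v) + w = 0 then 1 else 0) := by
  have hgood : IsGood σ u v w ↔ (1 + u + v + w) * σ (1 + u + v + w) = 1 ∧ u + v + w ≠ 0 ∧
      1 + v + w ≠ 0 ∧ 1 + u + w ≠ 0 ∧ 1 + u + v ≠ 0 :=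
    ⟨fun g => ⟨g.sum, g.s0, g.su, g.sv, g.sw⟩, fun ⟨a, b, c, d, f⟩ => ⟨h, a, b, c, d, f⟩⟩
  have n1 := h.hu1
  have n2 := h.hv1
  have n3 := h.hw1
  have n4 := h.huv
  have n5 := h.huw
  have n6 := h.hvw
  simp only [hgood]
  by_cases c1 : 1 + u + v = 0
  · have d1 : 1 + u + w ≠ 0 := by grind
    have d2 : 1 + v + w ≠ 0 := by grind
    have d3 : u + v + w ≠ 0 := by grind
    have hs : 1 + u + v + w = w := by rw [c1, zero_add]
    rw [ind_of_mem (by rw [hs]; exact h.hw)]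
    simp [c1, d1, d2, d3]
  by_cases c2 : 1 + u + w = 0
  · have d2 : 1 + v + w ≠ 0 := by grind
    have d3 : u + v + w ≠ 0 := by grind
    have hs : 1 + u + v + w = v := by grind
    rw [ind_of_mem (by rw [hs]; exact h.hv)]
    simp [c1, c2, d2, d3]
  by_cases c3 : 1 + v + w = 0
  · have d3 : u + v + w ≠ 0 := by grind
    have hs : 1 + u + v + w = u := by grind
    rw [ind_of_mem (by rw [hs]; exact h.hu)]
    simp [c1, c2, c3, d3]
  by_cases c4 : u + v + w = 0
  · have hs : 1 + u + v + w = 1 := by grind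
    rw [ind_of_mem (by rw [hs]; simp)]
    simp [c1, c2, c3, c4]
  · simp [c1, c2, c3, c4, ind]

open Classical in
lemma CircleData.sum_inner (h : CircleData σ q ν) {u v : K} (hu : u * σ u = 1)
    (hv : v * σ v = 1) (hu1 : u ≠ 1) (hv1 : v ≠ 1) (huv : u ≠ v) :
    ∑ w ∈ circ σ, ind σ (1 + u + v + w) =
      ∑ w ∈ (((circ σ).erase 1).erase u).erase v, (if IsGood σ u v w then (1 : ℤ) else 0)
      + (q - 5) * (if 1 + u + v = 0 then 1 else 0)
      + 2 * ind σ (1 + u) + 2 * ind σ (1 + v) + 2 * ind σ (u + v) := by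
  have hu0 : u ≠ 0 := left_ne_zero_of_mul_eq_one hu
  have hv0 : v ≠ 0 := left_ne_zero_of_mul_eq_one hv
  have m1 : (1 : K) ∈ circ σ := by simp
  have m2 : u ∈ (circ σ).erase 1 := by simp [hu, hu1]
  have m3 : v ∈ ((circ σ).erase 1).erase u := by simp [hv, hv1, huv.symm]
  have hc : (#((((circ σ).erase 1).erase u).erase v) : ℤ) = q - 2 := by
    have e1 := Finset.card_erase_add_one m1
    have e2 := Finset.card_erase_add_one m2
    have e3 := Finset.card_erase_add_one m3
    have e4 := h.card_circ
    zify at e1 e2 e3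
    linarith
  rw [← Finset.add_sum_erase _ _ m1, ← Finset.add_sum_erase _ _ m2, ← Finset.add_sum_erase _ _ m3]
  have s1 : 1 + u + v + 1 = u + v := by grind
  have s2 : 1 + u + v + u = 1 + v := by grind
  have s3 : 1 + u + v + v = 1 + u := by grind
  rw [s1, s2, s3]
  set S := (((circ σ).erase 1).erase u).erase v with hS
  have hdist : ∀ w ∈ S, IsDist σ u v w := by
    intro w hw
    simp only [hS, Finset.mem_erase, mem_circ] at hw
    exact ⟨hu, hv, hw.2.2.2, hu1, hv1, hw.2.2.1, huv, fun e => hw.2.1 e.symm,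
      fun e => hw.1 e.symm⟩
  rw [Finset.sum_congr rfl fun w hw => ind_sum_eq (hdist w hw)]
  simp only [Finset.sum_add_distrib]
  rw [sum_add_eq_zero, sum_add_eq_zero, sum_add_eq_zero, Finset.sum_const, nsmul_eq_mul, hc]
  by_cases hz : 1 + u + v = 0
  · have w1 : 1 + u = v := by grind
    have w2 : 1 + v = u := by grind
    have w3 : u + v = 1 := by grind
    rw [w1, w2, w3, ind_of_mem hu, ind_of_mem hv, ind_of_mem (s := (1 : K)) (by simp)]
    have t : v + v = 0 := by grind
    simp [hS, t]
    ring
  · have w1 : (if 1 + u ∈ S then (1 : ℤ) else 0) = ind σ (1 + u) := by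
      simp only [hS, Finset.mem_erase, mem_circ, ind]
      refine if_congr ⟨fun t => t.2.2.2, fun t => ⟨?_, ?_, ?_, t⟩⟩ rfl rfl <;> grind
    have w2 : (if 1 + v ∈ S then (1 : ℤ) else 0) = ind σ (1 + v) := by
      simp only [hS, Finset.mem_erase, mem_circ, ind]
      refine if_congr ⟨fun t => t.2.2.2, fun t => ⟨?_, ?_, ?_, t⟩⟩ rfl rfl <;> grind
    have w3 : (if u + v ∈ S then (1 : ℤ) else 0) = ind σ (u + v) := by
      simp only [hS, Finset.mem_erase, mem_circ, ind]
      refine if_congr ⟨fun t => t.2.2.2, fun t => ⟨?_, ?_, ?_, t⟩⟩ rfl rfl <;> grind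
    rw [w1, w2, w3]
    simp only [hz, if_false]
    ring

open Classical in
lemma CircleData.sum_middle (h : CircleData σ q ν) {u : K} (hu : u * σ u = 1) (hu1 : u ≠ 1) :
    ∑ v ∈ circ σ, ∑ w ∈ circ σ, ind σ (1 + u + v + w) =
      ∑ v ∈ ((circ σ).erase 1).erase u, ∑ w ∈ (((circ σ).erase 1).erase u).erase v,
        (if IsGood σ u v w then (1 : ℤ) else 0)
      + 6 * ν + (3 * q - 11) * ind σ (1 + u) := by
  have hu0 : u ≠ 0 := left_ne_zero_of_mul_eq_one hu
  have m1 : (1 : K) ∈ circ σ := by simp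
  have m2 : u ∈ (circ σ).erase 1 := by simp [hu, hu1]
  have hc : (#(((circ σ).erase 1).erase u) : ℤ) = q - 1 := by
    have e1 := Finset.card_erase_add_one m1
    have e2 := Finset.card_erase_add_one m2
    have e4 := h.card_circ
    zify at e1 e2
    linarith
  rw [← Finset.add_sum_erase _ _ m1, ← Finset.add_sum_erase _ _ m2]
  have s1 : 1 + u + 1 = u := by grind
  have s2 : 1 + u + u = 1 := by grind
  rw [s1, s2, h.shift u (by simpa using hu), h.shift 1 m1]
  rw [Finset.sum_congr rfl fun v hv => by
    simp only [Finset.mem_erase, mem_circ] at hv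
    exact h.sum_inner hu hv.2.2 hu1 hv.2.1 (fun e => hv.1 e.symm)]
  simp only [Finset.sum_add_distrib, ← Finset.mul_sum]
  have r1 := h.shift 1 m1
  rw [← Finset.add_sum_erase _ _ m1, ← Finset.add_sum_erase _ _ m2, CharTwo.add_self_eq_zero,
    ind_zero] at r1
  have r2 := h.shift u (by simpa using hu)
  rw [← Finset.add_sum_erase _ _ m1, ← Finset.add_sum_erase _ _ m2, CharTwo.add_self_eq_zero,
    ind_zero, add_comm u 1] at r2
  have r3 : ∑ v ∈ ((circ σ).erase 1).erase u, (if 1 + u + v = 0 then (1 : ℤ) else 0) =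
      ind σ (1 + u) := by
    rw [sum_add_eq_zero]
    simp only [Finset.mem_erase, mem_circ, ind]
    refine if_congr ⟨fun t => t.2.2, fun t => ⟨?_, ?_, t⟩⟩ rfl rfl <;> grind
  rw [r3, Finset.sum_const, nsmul_eq_mul, hc]
  linear_combination 2 * r1 + 2 * r2

open Classical in
lemma cnt_good_eq_sum : cnt (IsGood σ) =
    ∑ u ∈ (circ σ).erase 1, ∑ v ∈ ((circ σ).erase 1).erase u,
      ∑ w ∈ (((circ σ).erase 1).erase u).erase v, (if IsGood σ u v w then (1 : ℤ) else 0) := by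
  rw [cnt_eq_sum]
  symm
  trans ∑ u ∈ (circ σ).erase 1, ∑ v : K, ∑ w : K, (if IsGood σ u v w then (1 : ℤ) else 0)
  · refine Finset.sum_congr rfl fun u hu => ?_
    trans ∑ v ∈ ((circ σ).erase 1).erase u, ∑ w : K, (if IsGood σ u v w then (1 : ℤ) else 0)
    · refine Finset.sum_congr rfl fun v hv => ?_
      refine Finset.sum_subset (Finset.subset_univ _) fun w _ hw => if_neg fun g => hw ?_
      simp [g.hw, g.hw1, g.huw.symm, g.hvw.symm]
    · refine Finset.sum_subset (Finset.subset_univ _) fun v _ hv => ?_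
      refine Finset.sum_eq_zero fun w _ => if_neg fun g => hv ?_
      simp [g.hv, g.hv1, g.huv.symm]
  · refine Finset.sum_subset (Finset.subset_univ _) fun u _ hu => ?_
    refine Finset.sum_eq_zero fun v _ => Finset.sum_eq_zero fun w _ => if_neg fun g => hu ?_
    simp [g.hu, g.hu1]

/-- Removing the degenerate configurations from the circle sum. -/
lemma CircleData.sum_eq_cnt_good (h : CircleData σ q ν) :
    ∑ u ∈ circ σ, ∑ v ∈ circ σ, ∑ w ∈ circ σ, ind σ (1 + u + v + w) =
      cnt (IsGood σ) + 10 * (q - 1) * ν := by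
  classical
  have m1 : (1 : K) ∈ circ σ := by simp
  have hc : (#((circ σ).erase 1) : ℤ) = q := by
    have e1 := Finset.card_erase_add_one m1
    have e4 := h.card_circ
    zify at e1
    linarith
  rw [← Finset.add_sum_erase _ _ m1, cnt_good_eq_sum]
  have r0 : ∑ v ∈ circ σ, ∑ w ∈ circ σ, ind σ (1 + 1 + v + w) = (q + 1) * ν := by
    rw [CharTwo.add_self_eq_zero]
    simp only [zero_add]
    rw [Finset.sum_congr rfl h.shift, Finset.sum_const, nsmul_eq_mul, h.card_circ]
  rw [r0, Finset.sum_congr rfl fun u hu => by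
    simp only [Finset.mem_erase, mem_circ] at hu
    exact h.sum_middle hu.2 hu.1]
  simp only [Finset.sum_add_distrib, ← Finset.mul_sum]
  have r1 := h.shift 1 m1
  rw [← Finset.add_sum_erase _ _ m1, CharTwo.add_self_eq_zero, ind_zero, zero_add] at r1
  rw [r1, Finset.sum_const, nsmul_eq_mul, hc]
  ring

end Degenerate

/-! ### The count for the quadratic extension -/

section Total

variable {F : Type*} [Field F] [Fintype F] [CharP F 2]
variable {K : Type*} [Field K] [Fintype K] [CharP K 2] [Algebra F K]
variable {κ : F} {θ : K} {σ : K →+* K}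

lemma IsConj.circleData (h : IsConj κ θ σ) :
    CircleData σ (Fintype.card F : ℤ) (1 - psi (1 : F)) := by
  classical
  have hinv : ∀ x, σ (σ x) = x := by
    intro x
    obtain ⟨a, b, rfl⟩ := h.exists_coord x
    rw [h.map_coord, h.map_coord, add_assoc, CharTwo.add_self_eq_zero, add_zero]
  refine ⟨hinv, by rw [h.card]; push_cast; rfl, ?_, h.card_circ, ?_⟩
  · have e : ({x : K | σ x = x} : Finset K) = univ.image (algebraMap F K) := by
      ext x
      obtain ⟨a, b, rfl⟩ := h.exists_coord x
      simp only [Finset.mem_filter, Finset.mem_univ, true_and, Finset.mem_image]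
      rw [h.map_coord]
      constructor
      · intro he
        have hb : b = 0 := by simpa using (h.coord_inj he).1
        exact ⟨a, by simp [hb]⟩
      · rintro ⟨c, hc⟩
        have hb : b = 0 := by
          have := h.coord_inj (a := c) (b := 0) (c := a) (d := b) (by simpa using hc)
          exact this.2.symm
        simp [hb]
    rw [e, Finset.card_image_of_injective _ (algebraMap F K).injective, Finset.card_univ]
  · intro s hs
    obtain ⟨a, b, rfl⟩ := h.exists_coord s
    rw [h.mem_circ_coord] at hs
    have hab : (a, b) ≠ 0 := by
      intro h0
      simp only [Prod.mk_eq_zero] at h0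
      simp [h0.1, h0.2] at hs
    have := h.sum_circ_shift hab
    rw [hs, inv_one] at this
    rw [← this]
    refine Finset.sum_congr rfl fun v _ => ?_
    simp only [ind, mem_circ]

/-- The number of solutions of the normalised system, through the moment of Kloosterman sums. -/
lemma IsConj.cnt_sol_eq_moment (h : IsConj κ θ σ) :
    cnt (IsSol σ) = 5 * (Fintype.card F : ℤ) ^ 2 - Fintype.card F + 4
      - 3 * psi (1 : F) * Fintype.card F - moment F
      - (1 - psi (1 : F)) * (4 * Fintype.card F + 2) := by
  have h1 := h.circleData.cnt_sol
  have h2 := h.circleData.sum_eq_cnt_good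
  have h3 := h.sum_circ_quad
  have h4 : ∑ u ∈ circ σ, ∑ v ∈ circ σ, ∑ w ∈ circ σ, ind σ (1 + u + v + w) =
      (Fintype.card F : ℤ) ^ 2 + 5 * Fintype.card F + 1
        - 3 * psi (1 : F) * Fintype.card F - moment F := by
    rw [← h3]
    refine Finset.sum_congr rfl fun u _ => Finset.sum_congr rfl fun v _ =>
      Finset.sum_congr rfl fun w _ => ?_
    by_cases hs : (1 + u + v + w) * σ (1 + u + v + w) = 1
    · rw [ind_of_mem hs, if_pos (mem_circ.2 hs)]
    · rw [if_neg fun hh => hs (mem_circ.1 hh), ind, if_neg hs]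
  rw [h4] at h2
  linarith

lemma IsConj.cnt_sol (h : IsConj κ θ σ) {m : ℕ} (hF : Fintype.card F = 2 ^ m) :
    cnt (IsSol σ) = 5 * (2 ^ m : ℤ) ^ 2 - 6 * 2 ^ m - tseq m + if Even m then 4 else 0 := by
  have hc := h.cnt_sol_eq_moment
  have hF' : (Fintype.card F : ℤ) = 2 ^ m := by rw [hF]; push_cast; rfl
  rw [hF', psi_one_eq hF] at hc
  rw [hc]
  split_ifs with hm
  · rw [moment_even hF hm, hm.neg_one_pow]
    ring
  · rw [moment_odd (K := K) hF (by rw [h.card, hF, ← pow_mul, mul_comm, pow_mul]; norm_num) hm,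
      (Nat.not_even_iff_odd.1 hm).neg_one_pow]
    ring

/-- The quadratic extension of a finite field of characteristic two, with the Frobenius as
conjugation. -/
lemma exists_isConj (hK : Fintype.card K = Fintype.card F ^ 2) :
    ∃ (κ : F) (θ : K) (σ : K →+* K), IsConj κ θ σ ∧ ∀ x, σ x = x ^ Fintype.card F := by
  obtain ⟨κ, hκ⟩ := exists_psi_neg (F := F)
  have hfin : Module.finrank F K = 2 := by
    have h := Module.card_eq_pow_finrank (K := F) (V := K)
    rw [hK] at h
    exact (Nat.pow_right_injective Fintype.one_lt_card h).symm
  -- a base element has trace `2 κ = 0`, so it is of the form `θ ^ 2 + θ` upstairs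
  have h1 : psi (algebraMap F K κ) = 1 := by
    rw [psi_eq_psi_trace (F := F), Algebra.trace_algebraMap, hfin, two_smul,
      CharTwo.add_self_eq_zero, psi_zero]
  obtain ⟨θ, hθ⟩ := (psi_eq_one_iff _).1 h1
  have hg : IsGen κ θ := ⟨hK, hθ, hκ⟩
  refine ⟨κ, θ, (FiniteField.frobeniusAlgHom F K).toRingHom, ⟨hg, ?_, ?_⟩, ?_⟩
  · intro a
    exact (FiniteField.frobeniusAlgHom F K).commutes a
  · exact hg.pow_card
  · intro x
    rfl

end Total

/-! ### Quadruples and the rational sequence -/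

section Quadruples

variable {K : Type*} [Field K] [Fintype K] [CharP K 2] {σ : K →+* K}

lemma nihoPow_mul (c x : K) : nihoPow σ (c * x) = nihoPow σ c * nihoPow σ x := by
  simp only [nihoPow, map_mul, mul_pow, mul_div_mul_comm]

lemma nihoPow_ne_zero {c : K} (hc : c ≠ 0) : nihoPow σ c ≠ 0 :=
  div_ne_zero (pow_ne_zero _ ((map_ne_zero σ).2 hc)) (pow_ne_zero _ hc)

lemma pow_eq_nihoPow {q : ℕ} (hq : 0 < q) (hσ : ∀ x, σ x = x ^ q) {x : K} (hx : x ≠ 0) :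
    x ^ (3 * q - 2) = nihoPow σ x := by
  rw [nihoPow, hσ, eq_div_iff (pow_ne_zero _ hx), ← pow_add, ← pow_mul]
  congr 1
  omega

/-- Every quadruple is a nonzero multiple of a unique normalised one. -/
lemma ncard_quadruples {q : ℕ} (hq : 0 < q) (hσ : ∀ x : K, σ x = x ^ q) :
    ({p : K × K × K × K | p.1 ≠ 0 ∧ p.2.1 ≠ 0 ∧ p.2.2.1 ≠ 0 ∧ p.2.2.2 ≠ 0 ∧
        p.1 + p.2.1 + p.2.2.1 + p.2.2.2 = 0 ∧
        p.1 ^ (3 * q - 2) + p.2.1 ^ (3 * q - 2) + p.2.2.1 ^ (3 * q - 2)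
          + p.2.2.2 ^ (3 * q - 2) = 0}.ncard : ℤ) =
      (Fintype.card K - 1) * cnt (IsSol σ) := by
  classical
  set T : Finset (K × K × K) := {t : K × K × K | IsSol σ t.1 t.2.1 t.2.2} with hT
  set f : K × (K × K × K) → K × K × K × K :=
    fun s => (s.1 * s.2.1, s.1 * s.2.2.1, s.1 * s.2.2.2, s.1) with hf
  have hset : {p : K × K × K × K | p.1 ≠ 0 ∧ p.2.1 ≠ 0 ∧ p.2.2.1 ≠ 0 ∧ p.2.2.2 ≠ 0 ∧
        p.1 + p.2.1 + p.2.2.1 + p.2.2.2 = 0 ∧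
        p.1 ^ (3 * q - 2) + p.2.1 ^ (3 * q - 2) + p.2.2.1 ^ (3 * q - 2)
          + p.2.2.2 ^ (3 * q - 2) = 0} = ((nz K ×ˢ T).image f : Finset (K × K × K × K)) := by
    ext ⟨x, y, z, c⟩
    simp only [Set.mem_ofPred_eq, Finset.coe_image, Set.mem_image, Finset.mem_coe,
      Finset.mem_product, mem_nz, hT, Finset.mem_filter, Finset.mem_univ, true_and, hf,
      Prod.exists, Prod.mk.injEq]
    constructor
    · rintro ⟨hx, hy, hz, hc, h1, h2⟩
      rw [pow_eq_nihoPow hq hσ hx, pow_eq_nihoPow hq hσ hy, pow_eq_nihoPow hq hσ hz,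
        pow_eq_nihoPow hq hσ hc] at h2
      have ex : c * (c⁻¹ * x) = x := mul_inv_cancel_left₀ hc x
      have ey : c * (c⁻¹ * y) = y := mul_inv_cancel_left₀ hc y
      have ez : c * (c⁻¹ * z) = z := mul_inv_cancel_left₀ hc z
      refine ⟨c, c⁻¹ * x, c⁻¹ * y, c⁻¹ * z, ⟨hc, ⟨?_, ?_, ?_, ?_, ?_⟩⟩, ex, ey, ez, rfl⟩
      · exact mul_ne_zero (inv_ne_zero hc) hx
      · exact mul_ne_zero (inv_ne_zero hc) hy
      · exact mul_ne_zero (inv_ne_zero hc) hz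
      · apply mul_left_cancel₀ hc
        rw [mul_add, mul_add, ex, ey, ez]
        exact (CharTwo.add_eq_zero.1 h1).trans (mul_one c).symm
      · apply mul_left_cancel₀ (nihoPow_ne_zero (σ := σ) hc)
        rw [mul_add, mul_add, ← nihoPow_mul, ← nihoPow_mul, ← nihoPow_mul, ex, ey, ez]
        exact (CharTwo.add_eq_zero.1 h2).trans (mul_one _).symm
    · rintro ⟨c', x', y', z', ⟨hc, h⟩, rfl, rfl, rfl, rfl⟩
      have hx := mul_ne_zero hc h.hx
      have hy := mul_ne_zero hc h.hy
      have hz := mul_ne_zero hc h.hz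
      refine ⟨hx, hy, hz, hc, ?_, ?_⟩
      · rw [← mul_add, ← mul_add, h.lin, mul_one, CharTwo.add_self_eq_zero]
      · rw [pow_eq_nihoPow hq hσ hx, pow_eq_nihoPow hq hσ hy, pow_eq_nihoPow hq hσ hz,
          pow_eq_nihoPow hq hσ hc, nihoPow_mul, nihoPow_mul, nihoPow_mul, ← mul_add, ← mul_add,
          h.pow, mul_one, CharTwo.add_self_eq_zero]
  have hinj : Set.InjOn f (nz K ×ˢ T : Finset (K × K × K × K)) := by
    rintro ⟨c, x, y, z⟩ hs ⟨c', x', y', z'⟩ _ he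
    simp only [Finset.coe_product, Set.mem_prod, Finset.mem_coe, mem_nz] at hs
    simp only [hf, Prod.mk.injEq] at he
    obtain ⟨h1, h2, h3, rfl⟩ := he
    rw [mul_left_cancel₀ hs.1 h1, mul_left_cancel₀ hs.1 h2, mul_left_cancel₀ hs.1 h3]
  rw [hset, Set.ncard_coe_finset, Finset.card_image_of_injOn hinj, Finset.card_product]
  push_cast
  rw [card_nz]
  rfl

lemma cast_tseq {τ : ℕ → ℚ} (h1 : τ 1 = 1 / 2) (h2 : τ 2 = -7 / 4)
    (hr : ∀ k, 3 ≤ k → τ k = τ (k - 1) / 2 - τ (k - 2)) (n : ℕ) :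
    (tseq (n + 1) : ℚ) = 2 ^ (n + 1) * τ (n + 1) ∧ (tseq (n + 2) : ℚ) = 2 ^ (n + 2) * τ (n + 2) := by
  induction n with
  | zero => simp [tseq, h1, h2]; norm_num
  | succ n ih =>
    refine ⟨ih.2, ?_⟩
    have h3 := hr (n + 3) (by omega)
    rw [show n + 3 - 1 = n + 2 from rfl, show n + 3 - 2 = n + 1 by omega] at h3
    rw [show n + 1 + 2 = n + 3 from rfl, h3, tseq]
    push_cast
    rw [ih.1, ih.2]
    ring

end Quadruples

/-- The field with `q ^ 2` elements is a quadratic extension of the field with `q` elements, so the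
count of normalised solutions applies. -/
lemma exists_conj_count {m : ℕ} (hm : 0 < m) {K : Type*} [Field K] [Fintype K] [CharP K 2]
    (hK : Fintype.card K = (2 ^ m) ^ 2) :
    ∃ σ : K →+* K, (∀ x, σ x = x ^ 2 ^ m) ∧
      cnt (IsSol σ) = 5 * (2 ^ m : ℤ) ^ 2 - 6 * 2 ^ m - tseq m + if Even m then 4 else 0 := by
  have : Fact (Nat.Prime 2) := ⟨Nat.prime_two⟩
  let _ : Algebra (ZMod 2) K := ZMod.algebra K 2
  let F := GaloisField 2 m
  let _ : Fintype F := Fintype.ofFinite F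
  have hF : Fintype.card F = 2 ^ m := by
    rw [← Nat.card_eq_fintype_card, GaloisField.card 2 m hm.ne']
  have hfin : Module.finrank (ZMod 2) K = m * 2 := by
    have h := Module.card_eq_pow_finrank (K := ZMod 2) (V := K)
    rw [hK, ZMod.card, ← pow_mul] at h
    exact (Nat.pow_right_injective le_rfl h).symm
  obtain ⟨φ⟩ := FiniteField.nonempty_algHom_of_finrank_dvd (F := ZMod 2) (K := F) (L := K)
    (by rw [GaloisField.finrank 2 hm.ne', hfin]; exact ⟨2, rfl⟩)
  let _ : Algebra F K := φ.toRingHom.toAlgebra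
  obtain ⟨κ, θ, σ, hσ, hpow⟩ := exists_isConj (F := F) (K := K) (by rw [hK, hF])
  exact ⟨σ, fun x => by rw [hpow, hF], hσ.cnt_sol hF⟩

end NihoCount

/-- Counting quadruples in (F_{q^2}^*)^4 with x₁+x₂+x₃+x₄ = 0 and
x₁^d + x₂^d + x₃^d + x₄^d = 0, where d = 3q - 2, in terms of the sequence τ. -/
theorem stmt_7 (m : ℕ) (hm : 0 < m) (q : ℕ) (hq : q = 2 ^ m)
    (K : Type*) [Field K] [Fintype K] [CharP K 2] (hK : Fintype.card K = q ^ 2)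
    (τ : ℕ → ℚ) (hτ1 : τ 1 = 1 / 2) (hτ2 : τ 2 = -7 / 4)
    (hτr : ∀ k, 3 ≤ k → τ k = τ (k - 1) / 2 - τ (k - 2)) :
    ({p : K × K × K × K | p.1 ≠ 0 ∧ p.2.1 ≠ 0 ∧ p.2.2.1 ≠ 0 ∧ p.2.2.2 ≠ 0 ∧
        p.1 + p.2.1 + p.2.2.1 + p.2.2.2 = 0 ∧
        p.1 ^ (3 * q - 2) + p.2.1 ^ (3 * q - 2) + p.2.2.1 ^ (3 * q - 2)
          + p.2.2.2 ^ (3 * q - 2) = 0}.ncard : ℚ) =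
      if Even m then (5 * (q : ℚ) ^ 2 - (τ m + 6) * (q : ℚ) + 4) * ((q : ℚ) ^ 2 - 1)
      else (5 * (q : ℚ) ^ 2 - (τ m + 6) * (q : ℚ)) * ((q : ℚ) ^ 2 - 1) := by
  subst hq
  obtain ⟨σ, hσ, hcnt⟩ := NihoCount.exists_conj_count hm hK
  have hN := NihoCount.ncard_quadruples (by positivity) hσ
  rw [hcnt, hK] at hN
  have ht : (NihoCount.tseq m : ℚ) = 2 ^ m * τ m := by
    obtain ⟨n, rfl⟩ : ∃ n, m = n + 1 := ⟨m - 1, by omega⟩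
    exact (NihoCount.cast_tseq hτ1 hτ2 hτr n).1
  have hQ := congrArg (Int.cast : ℤ → ℚ) hN
  push_cast at hQ
  rw [hQ, ht]
  push_cast
  split_ifs
  · ring
  · ring
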